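/- arXiv:1201.5253 — 8 statements merged into one kernel-verified Lean document; each statement's English description precedes it below -/
import Mathlib

section
/- For every integer n ≥ 0, the Pfaffian of the 2n×2n skew-symmetric matrix whose (i,j) entry is (j−i)·S_{i+j−2} for 1 ≤ i,j ≤ 2n equals 2^{n²}·∏_{k=0}^{n−1} (4k+1). -/
/-- The Pfaffian of a `2N × 2N` matrix, defined as the sum over all partitions of
the index set into two-element blocks (encoded as permutations `σ` with
`σ(2i) < σ(2i+1)` and `σ(0) < σ(2) < … < σ(2N-2)`, one for each partition) of the
sign of `σ` times the product `∏ i, A (σ (2i)) (σ (2i+1))`. -/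
def pfaffian {R : Type*} [CommRing R] {N : ℕ}
    (A : Matrix (Fin (2 * N)) (Fin (2 * N)) R) : R :=
  ∑ σ ∈ Finset.univ.filter (fun σ : Equiv.Perm (Fin (2 * N)) =>
      (∀ i : Fin N, σ ⟨2 * i.val, by have := i.isLt; omega⟩
          < σ ⟨2 * i.val + 1, by have := i.isLt; omega⟩) ∧
      (∀ i j : Fin N, i < j → σ ⟨2 * i.val, by have := i.isLt; omega⟩
          < σ ⟨2 * j.val, by have := j.isLt; omega⟩)),
    (Equiv.Perm.sign σ : ℤ) •
      ∏ i : Fin N, A (σ ⟨2 * i.val, by have := i.isLt; omega⟩)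
        (σ ⟨2 * i.val + 1, by have := i.isLt; omega⟩)

/-- The `n`-th large Schröder number `S_n = ∑_{k=0}^{n} (1/(k+1))·C(n+k,2k)·C(2k,k)`. -/
def schroeder (n : ℕ) : ℚ :=
  ∑ k ∈ Finset.range (n + 1),
    (1 / ((k : ℚ) + 1)) * ((n + k).choose (2 * k)) * ((2 * k).choose k)

open Polynomial

def tS (n k : ℕ) : ℚ := (1 / ((k : ℚ) + 1)) * ((n + k).choose (2 * k)) * ((2 * k).choose k)

lemma tS_zero_of_lt {n k : ℕ} (h : n < k) : tS n k = 0 := by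
  unfold tS
  rw [Nat.choose_eq_zero_of_lt (by omega)]; simp

lemma tS_fact (d k : ℕ) :
    tS (k + d) k = ((2 * k + d).factorial : ℚ) / (d.factorial * k.factorial * (k + 1).factorial) := by
  unfold tS
  rw [Nat.cast_choose ℚ (show 2 * k ≤ k + d + k by omega), Nat.cast_choose ℚ (show k ≤ 2 * k by omega)]
  rw [show k + d + k - 2 * k = d by omega, show 2 * k - k = k by omega, show k + d + k = 2 * k + d by omega,
    Nat.factorial_succ k]
  have h1 := Nat.cast_ne_zero (R := ℚ).2 (Nat.factorial_ne_zero (2 * k))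
  have h2 := Nat.cast_ne_zero (R := ℚ).2 (Nat.factorial_ne_zero k)
  have h3 := Nat.cast_ne_zero (R := ℚ).2 (Nat.factorial_ne_zero d)
  have h4 : (k : ℚ) + 1 ≠ 0 := by positivity
  push_cast
  field_simp

lemma tS_rec (n k : ℕ) :
    ((n : ℚ) + 3) * tS (n + 2) (k + 1) - (2 * n + 3) * tS (n + 1) (k + 1) + n * tS n (k + 1)
      = (4 * n + 6) * tS (n + 1) k := by
  have f (m : ℕ) : ((m.factorial : ℕ) : ℚ) ≠ 0 := Nat.cast_ne_zero.2 (Nat.factorial_ne_zero m)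
  rcases lt_trichotomy n k with h | h | h
  · rcases Nat.lt_or_ge (n + 1) k with h' | h'
    · rw [tS_zero_of_lt (by omega), tS_zero_of_lt (by omega), tS_zero_of_lt (by omega),
        tS_zero_of_lt (by omega)]; ring
    · obtain rfl : k = n + 1 := by omega
      rw [tS_zero_of_lt (show n + 1 < n + 1 + 1 by omega), tS_zero_of_lt (show n < n + 1 + 1 by omega)]
      have h1 := tS_fact 0 (n + 2)
      have h2 := tS_fact 0 (n + 1)
      rw [add_zero] at h1 h2
      rw [h1, h2, show 2 * (n + 2) + 0 = (2 * n + 2) + 1 + 1 by ring, show 2 * (n + 1) + 0 = 2 * n + 2 by ring]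
      simp only [Nat.factorial_succ (2 * n + 2 + 1), Nat.factorial_succ (2 * n + 2), Nat.factorial_succ (n + 2),
        Nat.factorial_succ (n + 1)]
      have := f (n + 1); have := f (2 * n + 2); have := f n
      push_cast
      simp only [Nat.factorial_succ]
      field_simp
      push_cast
      ring
  · subst h
    rw [tS_zero_of_lt (show n < n + 1 by omega), tS_fact 1 (n + 1)]
    have h1 := tS_fact 0 (n + 1)
    rw [add_zero] at h1
    rw [h1, tS_fact 1 n]
    rw [show 2 * (n + 1) + 1 = 2 * n + 1 + 1 + 1 by ring, show 2 * (n + 1) + 0 = 2 * n + 1 + 1 by ring]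
    have := f n; have := f (2 * n + 1)
    simp only [Nat.factorial_succ (2 * n + 1 + 1), Nat.factorial_succ (2 * n + 1), Nat.factorial_succ n, Nat.factorial_succ (n + 1)]
    push_cast
    simp only [Nat.factorial_zero, Nat.factorial_one]
    field_simp
    push_cast
    ring
  · obtain ⟨d, rfl⟩ : ∃ d, n = k + 1 + d := ⟨n - k - 1, by omega⟩
    have e1 := tS_fact (d + 2) (k + 1)
    have e2 := tS_fact (d + 1) (k + 1)
    have e3 := tS_fact d (k + 1)
    have e4 := tS_fact (d + 2) k
    rw [show k + 1 + d + 2 = k + 1 + (d + 2) by ring, show k + 1 + d + 1 = k + 1 + (d + 1) by ring, e1, e2, e3,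
      show k + 1 + (d + 1) = k + (d + 2) by ring, e4]
    rw [show 2 * (k + 1) + (d + 2) = 2 * k + d + 2 + 1 + 1 by ring,
      show 2 * (k + 1) + (d + 1) = 2 * k + d + 2 + 1 by ring,
      show 2 * (k + 1) + d = 2 * k + d + 2 by ring, show 2 * k + (d + 2) = 2 * k + d + 2 by ring]
    have := f (2 * k + d + 2); have := f d; have := f k
    simp only [Nat.factorial_succ (2 * k + d + 2 + 1), Nat.factorial_succ (2 * k + d + 2), Nat.factorial_succ k, Nat.factorial_succ (k + 1),
      Nat.factorial_succ d, Nat.factorial_succ (d + 1)]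
    push_cast
    field_simp
    ring

lemma schroeder_eq (n m : ℕ) (h : n + 1 ≤ m) : schroeder n = ∑ k ∈ Finset.range m, tS n k := by
  unfold schroeder
  apply Finset.sum_subset (by simpa using h)
  intro k _ hk
  exact tS_zero_of_lt (by simp at hk; omega)

lemma tS_n_zero (n : ℕ) : tS n 0 = 1 := by simp [tS]

lemma schroeder_rec (n : ℕ) :
    ((n : ℚ) + 3) * schroeder (n + 2) = 3 * (2 * n + 3) * schroeder (n + 1) - n * schroeder n := by
  have h := Finset.sum_congr rfl (fun k (_ : k ∈ Finset.range (n + 3)) => tS_rec n k)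
  rw [Finset.sum_add_distrib, Finset.sum_sub_distrib, ← Finset.mul_sum, ← Finset.mul_sum, ← Finset.mul_sum,
    ← Finset.mul_sum, ← schroeder_eq (n + 1) _ (by omega)] at h
  have g (m : ℕ) (hm : m ≤ n + 2) : ∑ k ∈ Finset.range (n + 3), tS m (k + 1) = schroeder m - 1 := by
    rw [schroeder_eq m (n + 4) (by omega), Finset.sum_range_succ' _ (n + 3), tS_n_zero]; ring
  rw [g _ (by omega), g _ (by omega), g _ (by omega)] at h
  linarith

/-! functional -/
noncomputable def Lam : ℚ[X] →ₗ[ℚ] ℚ := (Polynomial.basisMonomials ℚ).constr ℚ (fun n => schroeder (n + 1))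

lemma Lam_X (n : ℕ) : Lam (X ^ n) = schroeder (n + 1) := by
  rw [← Polynomial.monomial_one_right_eq_X_pow]
  have := (Polynomial.basisMonomials ℚ).constr_basis ℚ (fun n => schroeder (n + 1)) n
  simpa [Lam] using this

lemma Lam_C (c : ℚ) (f : ℚ[X]) : Lam (C c * f) = c * Lam f := by
  rw [← Polynomial.smul_eq_C_mul, map_smul, smul_eq_mul]

noncomputable def yy : ℚ[X] := X - C 3

lemma Lam_pearson (f : ℚ[X]) : Lam ((yy ^ 2 - C 8) * derivative f + C 3 * (yy * f)) = 0 := by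
  induction f using Polynomial.induction_on' with
  | add p q hp hq =>
    have : (yy ^ 2 - C 8) * derivative (p + q) + C 3 * (yy * (p + q)) =
      ((yy ^ 2 - C 8) * derivative p + C 3 * (yy * p)) + ((yy ^ 2 - C 8) * derivative q + C 3 * (yy * q)) := by
      rw [derivative_add]; ring
    rw [this, map_add, hp, hq, add_zero]
  | monomial n a =>
    rw [← C_mul_X_pow_eq_monomial]
    rcases n with _ | n
    · have : (yy ^ 2 - C 8) * derivative (C a * X ^ 0) + C 3 * (yy * (C a * X ^ 0)) =
        C (3 * a) * X ^ 1 - C (9 * a) * X ^ 0 := by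
        simp [yy]; ring_nf
        rw [show (9 : ℚ) = 3 * 3 by norm_num, C_mul]
        ring
      rw [this, map_sub, Lam_C, Lam_C, Lam_X, Lam_X]
      have := schroeder_rec 0
      norm_num at this ⊢
      linear_combination a * this
    · have : (yy ^ 2 - C 8) * derivative (C a * X ^ (n + 1)) + C 3 * (yy * (C a * X ^ (n + 1))) =
        C (a * (n + 4)) * X ^ (n + 2) - C (3 * a * (2 * n + 5)) * X ^ (n + 1) + C (a * (n + 1)) * X ^ n := by
        simp only [yy, derivative_C_mul_X_pow, Nat.add_sub_cancel]
        simp only [C_mul, C_add, Nat.cast_add, map_natCast, Nat.cast_one, C_1, map_ofNat]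
        ring
      rw [this, map_add, map_sub, Lam_C, Lam_C, Lam_C, Lam_X, Lam_X, Lam_X]
      have := schroeder_rec (n + 1)
      push_cast at this
      rw [show n + 2 + 1 = n + 1 + 2 by ring]
      linear_combination a * this

noncomputable def RR : ℕ → ℚ[X]
  | 0 => 0
  | 1 => 1
  | (n + 2) => yy * RR (n + 1) - 2 * RR n

noncomputable def DD : ℕ → ℚ[X]
  | 0 => 2
  | 1 => yy
  | (n + 2) => yy * DD (n + 1) - 2 * DD n

lemma RR_rec (n : ℕ) : RR (n + 2) = yy * RR (n + 1) - 2 * RR n := rfl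
lemma DD_rec (n : ℕ) : DD (n + 2) = yy * DD (n + 1) - 2 * DD n := rfl
lemma RR0 : RR 0 = 0 := rfl
lemma RR1 : RR 1 = 1 := rfl
lemma DD0 : DD 0 = 2 := rfl
lemma DD1 : DD 1 = yy := rfl
lemma dyy : derivative yy = 1 := by simp [yy]

lemma RR_pearson (n : ℕ) :
    (yy ^ 2 - C 8) * derivative (RR (n + 1)) + C 3 * (yy * RR (n + 1)) =
      C ((n : ℚ) + 3) * RR (n + 2) - C (2 * ((n : ℚ) - 1)) * RR n := by
  induction n using Nat.twoStepInduction with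
  | zero => simp [RR_rec, RR0, RR1]
  | one =>
    have e2 : RR (1 + 1) = yy := by simp [RR_rec, RR0, RR1]
    have e3 : RR (1 + 2) = yy * yy - 2 := by
      rw [show 1 + 2 = 1 + 1 + 1 by rfl, show 1 + 1 + 1 = 1 + 2 by rfl, RR_rec, e2, RR1, mul_one]
    rw [e3, e2, dyy]
    simp only [C_add, C_mul, C_sub, map_ofNat, map_natCast, C_1, Nat.cast_one]
    ring
  | more n h1 h2 =>
    have d : derivative (RR (n + 2 + 1)) = RR (n + 2) + yy * derivative (RR (n + 2)) - 2 * derivative (RR (n + 1)) := by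
      rw [RR_rec (n + 1)]; simp [dyy]
    rw [d]
    have e1 := RR_rec n
    have e2 := RR_rec (n + 1)
    have e3 := RR_rec (n + 2)
    simp only [C_add, C_mul, C_sub, map_ofNat, map_natCast, C_1, Nat.cast_add, Nat.cast_one, Nat.cast_ofNat] at h1 h2 ⊢
    rw [show n + 1 + 1 = n + 2 by ring, show n + 1 + 2 = n + 3 by ring] at h2
    rw [show n + 2 + 1 = n + 3 by ring, show n + 2 + 2 = n + 4 by ring] at *
    rw [show n + 1 + 2 = n + 3 by ring, show n + 1 + 1 = n + 2 by ring] at e2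
    rw [e3]
    linear_combination yy * h2 - 2 * h1 + (2 * yy) * e2 + (2 * (n : ℚ[X]) - 2) * e1

lemma Lam_RR (n : ℕ) : Lam (RR (n + 2)) = 0 := by
  have key (m : ℕ) : ((m : ℚ) + 3) * Lam (RR (m + 2)) = (2 * ((m : ℚ) - 1)) * Lam (RR m) := by
    have := Lam_pearson (RR (m + 1))
    rw [RR_pearson, map_sub, Lam_C, Lam_C] at this
    linarith
  induction n using Nat.twoStepInduction with
  | zero =>
    have := key 0
    rw [RR0] at this
    norm_num at this; simpa using this
  | one =>
    have := key 1
    norm_num at this; simpa using this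
  | more n h1 h2 =>
    have := key (n + 2)
    rw [h1, mul_zero] at this
    rcases mul_eq_zero.1 this with h | h
    · exfalso; push_cast at h; have : (n : ℚ) + 2 + 3 > 0 := by positivity
      linarith
    · exact h

lemma Lam_RR1 : Lam (RR 1) = 2 := by
  rw [RR1, show (1 : ℚ[X]) = X ^ 0 by simp, Lam_X]
  norm_num [schroeder, Finset.sum_range_succ]

lemma DR (m : ℕ) : ∀ d, DD m * RR (m + d) = RR (2 * m + d) + C (2 ^ m) * RR d := by
  induction m using Nat.twoStepInduction with
  | zero => intro d; simp [DD0]; ring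
  | one =>
    intro d
    rw [DD1, show 2 * 1 + d = d + 2 by ring, RR_rec, add_comm 1 d, pow_one, map_ofNat]; ring
  | more m h1 h2 =>
    intro d
    have a := h1 (d + 2)
    have b := h2 (d + 1)
    rw [DD_rec]
    rw [show m + 1 + (d + 1) = m + 2 + d by ring, show 2 * (m + 1) + (d + 1) = (2 * m + d + 2) + 1 by ring] at b
    rw [show m + (d + 2) = m + 2 + d by ring, show 2 * m + (d + 2) = 2 * m + d + 2 by ring] at a
    rw [show 2 * (m + 2) + d = 2 * m + d + 2 + 2 by ring, RR_rec (2 * m + d + 2)]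
    have e := RR_rec d
    simp only [C_mul, map_ofNat, pow_succ] at *
    try simp only [C_pow, map_ofNat] at *
    linear_combination yy * b - 2 * a - 2 * 2 ^ m * e

lemma RD (m : ℕ) : ∀ d, RR m * DD (m + d) = RR (2 * m + d) - C (2 ^ m) * RR d := by
  induction m using Nat.twoStepInduction with
  | zero => intro d; simp [RR0]
  | one =>
    intro d
    rw [RR1]
    induction d using Nat.twoStepInduction with
    | zero => simp [DD1, RR0, RR_rec, RR1]
    | one => simp [DD_rec, DD1, DD0, RR0, RR_rec, RR1, map_ofNat C 2]; ring
    | more d h1 h2 =>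
      rw [show 1 + (d + 2) = (1 + d) + 2 by ring, DD_rec, show 2 * 1 + (d + 2) = (2 * 1 + d) + 2 by ring, RR_rec (2 * 1 + d), RR_rec d]
      rw [show 1 + (d + 1) = 1 + d + 1 by ring, show 2 * 1 + (d + 1) = 2 * 1 + d + 1 by ring] at h2
      linear_combination yy * h2 - 2 * h1
  | more m h1 h2 =>
    intro d
    have a := h1 (d + 2)
    have b := h2 (d + 1)
    rw [RR_rec m]
    rw [show m + 1 + (d + 1) = m + 2 + d by ring, show 2 * (m + 1) + (d + 1) = (2 * m + d + 2) + 1 by ring] at b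
    rw [show m + (d + 2) = m + 2 + d by ring, show 2 * m + (d + 2) = 2 * m + d + 2 by ring] at a
    rw [show 2 * (m + 2) + d = 2 * m + d + 2 + 2 by ring, RR_rec (2 * m + d + 2)]
    have e := RR_rec d
    simp only [C_mul, map_ofNat, pow_succ] at *
    try simp only [C_pow, map_ofNat] at *
    linear_combination yy * b - 2 * a + 2 * 2 ^ m * e

lemma D_eq (n : ℕ) : DD (n + 1) = yy * RR (n + 1) - 4 * RR n := by
  induction n using Nat.twoStepInduction with
  | zero => simp [DD1, RR1, RR0]
  | one => simp [DD_rec, DD1, DD0, RR_rec, RR1, RR0]; ring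
  | more n h1 h2 =>
    rw [show n + 2 + 1 = n + 1 + 2 by ring, DD_rec, RR_rec (n + 1), RR_rec n, h1]
    rw [show n + 1 + 1 = n + 2 by ring, RR_rec n] at *
    rw [h2]; ring

lemma dD (n : ℕ) : derivative (DD n) = C (n : ℚ) * RR n := by
  induction n using Nat.twoStepInduction with
  | zero => simp [DD0]
  | one => simp [DD1, dyy, RR1]
  | more n h1 h2 =>
    rw [DD_rec, derivative_sub, derivative_mul, derivative_mul, dyy, h1, h2, D_eq, RR_rec]
    simp [map_ofNat C 2]
    ring

noncomputable def PP (n : ℕ) : ℚ[X] := if n = 0 then 1 else DD n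

lemma yy_natDegree : yy.natDegree = 1 := natDegree_X_sub_C 3
lemma yy_monic : yy.Monic := monic_X_sub_C 3

lemma DD_md (n : ℕ) : (DD (n + 1)).Monic ∧ (DD (n + 1)).natDegree = n + 1 := by
  induction n using Nat.twoStepInduction with
  | zero => exact ⟨yy_monic, yy_natDegree⟩
  | one =>
    have h : DD 2 = yy * yy - C 4 := by
      rw [DD_rec, DD1, DD0, show (4 : ℚ) = 2 * 2 by norm_num, C_mul, map_ofNat]
    have hm : (yy * yy).Monic := yy_monic.mul yy_monic
    have hd : (yy * yy).natDegree = 2 := by rw [yy_monic.natDegree_mul yy_monic, yy_natDegree]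
    have hlt : (C (4 : ℚ)).degree < (yy * yy).degree := by
      rw [degree_eq_natDegree hm.ne_zero, hd]; exact lt_of_le_of_lt degree_C_le (by norm_num)
    rw [show 1 + 1 = 2 by rfl, h]
    exact ⟨hm.sub_of_left hlt, by rw [natDegree_sub_C, hd]⟩
  | more n h1 h2 =>
    have hm : (yy * DD (n + 2)).Monic := yy_monic.mul h2.1
    have hd : (yy * DD (n + 2)).natDegree = n + 3 := by
      rw [yy_monic.natDegree_mul h2.1, yy_natDegree, h2.2]; ring
    have hl : (2 * DD (n + 1)).natDegree < (yy * DD (n + 2)).natDegree := by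
      rw [hd, show (2 : ℚ[X]) = C 2 from (map_ofNat C 2).symm]
      exact lt_of_le_of_lt (natDegree_C_mul_le _ _) (by rw [h1.2]; omega)
    rw [show n + 2 + 1 = n + 1 + 2 by ring, DD_rec]
    exact ⟨hm.sub_of_left (degree_lt_degree hl), by rw [natDegree_sub_eq_left_of_natDegree_lt hl, hd]⟩

lemma PP_monic (n : ℕ) : (PP n).Monic := by
  rcases n with _ | n
  · simp [PP]
  · simpa [PP] using (DD_md n).1

lemma PP_natDegree (n : ℕ) : (PP n).natDegree = n := by
  rcases n with _ | n
  · simp [PP]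
  · simpa [PP] using (DD_md n).2

lemma Lam_W (m d : ℕ) : Lam (PP m * derivative (PP (m + d + 1)) - derivative (PP m) * PP (m + d + 1)) =
    if d = 0 then (2 * (m : ℚ) + 1) * 2 ^ (m + 1) else 0 := by
  have hP : PP (m + d + 1) = DD (m + d + 1) := by simp [PP]
  have hL : Lam (RR (d + 1)) = if d = 0 then 2 else 0 := by
    rcases d with _ | d
    · simp [Lam_RR1]
    · simp [Lam_RR]
  rcases m with _ | m
  · rw [hP, dD]
    have : PP 0 * (C ((0 + d + 1 : ℕ) : ℚ) * RR (0 + d + 1)) - derivative (PP 0) * DD (0 + d + 1) =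
      C ((d + 1 : ℕ) : ℚ) * RR (d + 1) := by simp [PP]
    rw [this, Lam_C, hL]
    split_ifs with h
    · subst h; simp
    · simp
  · have hP' : PP (m + 1) = DD (m + 1) := by simp [PP]
    rw [hP, hP', dD, dD]
    have a := DR (m + 1) (d + 1)
    have b := RD (m + 1) (d + 1)
    have : DD (m + 1) * (C ((m + 1 + d + 1 : ℕ) : ℚ) * RR (m + 1 + d + 1)) -
        C ((m + 1 : ℕ) : ℚ) * RR (m + 1) * DD (m + 1 + d + 1) =
      C ((d : ℚ) + 1) * RR (2 * m + d + 1 + 2) + C ((2 * (m : ℚ) + d + 3) * 2 ^ (m + 1)) * RR (d + 1) := by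
      rw [show 2 * (m + 1) + (d + 1) = 2 * m + d + 1 + 2 by ring, ← add_assoc] at a b
      simp only [C_add, C_mul, C_sub, map_ofNat, map_natCast, C_1, Nat.cast_add, Nat.cast_one, C_pow] at *
      linear_combination ((m : ℚ[X]) + 1 + d + 1) * a - ((m : ℚ[X]) + 1) * b
    rw [this, map_add, Lam_C, Lam_C, Lam_RR, hL]
    split_ifs with h
    · subst h; push_cast; ring
    · simp

lemma bil (N : ℕ) (f g : ℚ[X]) (hf : f.natDegree < N) (hg : g.natDegree < N) :
    ∑ i : Fin N, ∑ j : Fin N, f.coeff i * (((j.val : ℚ) - i.val) * schroeder (i.val + j.val)) * g.coeff j =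
      Lam (f * derivative g - derivative f * g) := by
  have mono (a b : ℚ) (i j : ℕ) : Lam ((C a * X ^ i) * derivative (C b * X ^ j) - derivative (C a * X ^ i) * (C b * X ^ j))
      = a * (((j : ℚ) - i) * schroeder (i + j)) * b := by
    have e : (C a * X ^ i) * derivative (C b * X ^ j) - derivative (C a * X ^ i) * (C b * X ^ j) =
        C (a * ((j : ℚ) - i) * b) * X ^ (i + j - 1) := by
      rcases i with _ | i <;> rcases j with _ | j <;>
        simp only [derivative_C_mul_X_pow, C_mul, C_sub, map_natCast, Nat.cast_add, Nat.cast_zero, Nat.cast_one, C_1, C_0, C_add, Nat.add_sub_cancel]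
      · simp
      · simp; ring
      · simp; ring
      · rw [show i + 1 + (j + 1) - 1 = i + j + 1 by omega]; ring
    rw [e, Lam_C, Lam_X]
    by_cases h : i + j = 0
    · obtain ⟨rfl, rfl⟩ : i = 0 ∧ j = 0 := by omega
      simp
    · rw [show i + j - 1 + 1 = i + j by omega]; ring
  conv_rhs => rw [f.as_sum_range_C_mul_X_pow' hf, g.as_sum_range_C_mul_X_pow' hg]
  rw [derivative_sum, derivative_sum, Finset.sum_mul_sum, Finset.sum_mul_sum, ← Finset.sum_sub_distrib, map_sum, ← Fin.sum_univ_eq_sum_range (fun i => Lam _)]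
  refine Finset.sum_congr rfl fun i _ => ?_
  rw [← Finset.sum_sub_distrib, map_sum, ← Fin.sum_univ_eq_sum_range (fun i => Lam _)]
  refine Finset.sum_congr rfl fun j _ => ?_
  rw [mono]

/-! Pfaffian theory -/
section PF
open Equiv

def EE (N : ℕ) : Fin N × Fin 2 ≃ Fin (2 * N) := finProdFinEquiv.trans (finCongr (mul_comm N 2))

lemma EE0 {N : ℕ} (i : Fin N) (h : 2 * i.val < 2 * N) : (⟨2 * i.val, h⟩ : Fin (2 * N)) = EE N (i, 0) := by
  ext; simp [EE, finProdFinEquiv]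

lemma EE1 {N : ℕ} (i : Fin N) (h : 2 * i.val + 1 < 2 * N) :
    (⟨2 * i.val + 1, h⟩ : Fin (2 * N)) = EE N (i, 1) := by
  ext; simp [EE, finProdFinEquiv]; ring

def tm {N : ℕ} (A : Matrix (Fin (2 * N)) (Fin (2 * N)) ℚ) (σ : Perm (Fin (2 * N))) : ℚ :=
  ((Perm.sign σ : ℤ) : ℚ) * ∏ i : Fin N, A (σ (EE N (i, 0))) (σ (EE N (i, 1)))

def good {N : ℕ} (σ : Perm (Fin (2 * N))) : Prop :=
  (∀ i : Fin N, σ (EE N (i, 0)) < σ (EE N (i, 1))) ∧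
  (∀ i j : Fin N, i < j → σ (EE N (i, 0)) < σ (EE N (j, 0)))

open Classical in
lemma pf_eq {N : ℕ} (A : Matrix (Fin (2 * N)) (Fin (2 * N)) ℚ) :
    pfaffian A = ∑ σ ∈ Finset.univ.filter (fun σ : Perm (Fin (2 * N)) => good σ), tm A σ := by
  unfold pfaffian good tm
  simp only [EE0, EE1, zsmul_eq_mul]
  congr!

def hh {N : ℕ} (p : (Fin N → Perm (Fin 2)) × Perm (Fin N)) : Perm (Fin (2 * N)) :=
  (EE N).permCongr (Equiv.prodCongrRight p.1 * Equiv.prodCongrLeft (fun _ => p.2))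

lemma hh_apply {N : ℕ} (p : (Fin N → Perm (Fin 2)) × Perm (Fin N)) (i : Fin N) (b : Fin 2) :
    hh p (EE N (i, b)) = EE N (p.2 i, p.1 (p.2 i) b) := by
  simp [hh, Equiv.permCongr_apply]

lemma hh_sign {N : ℕ} (p : (Fin N → Perm (Fin 2)) × Perm (Fin N)) :
    Perm.sign (hh p) = ∏ i, Perm.sign (p.1 i) := by
  rw [hh, Perm.sign_permCongr, Perm.sign_mul, Perm.sign_prodCongrRight, Perm.sign_prodCongrLeft]
  simp

lemma perm2 (e : Perm (Fin 2)) : (e = 1) ∨ (e = swap 0 1) := by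
  revert e; decide

lemma tm_hh {N : ℕ} (A : Matrix (Fin (2 * N)) (Fin (2 * N)) ℚ) (hA : ∀ i j, A i j = - A j i)
    (σ : Perm (Fin (2 * N))) (p : (Fin N → Perm (Fin 2)) × Perm (Fin N)) :
    tm A (σ * hh p) = tm A σ := by
  unfold tm
  simp only [Perm.mul_apply, hh_apply, Perm.sign_mul, hh_sign]
  rw [Equiv.prod_comp p.2 (fun j => A (σ (EE N (j, p.1 j 0))) (σ (EE N (j, p.1 j 1))))]
  have h (j : Fin N) : A (σ (EE N (j, p.1 j 0))) (σ (EE N (j, p.1 j 1))) =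
      ((Perm.sign (p.1 j) : ℤ) : ℚ) * A (σ (EE N (j, 0))) (σ (EE N (j, 1))) := by
    rcases perm2 (p.1 j) with h | h <;> rw [h]
    · simp
    · rw [hA]; simp
  simp only [h]
  rw [Finset.prod_mul_distrib]
  push_cast
  have hs : (∏ j, (((Perm.sign (p.1 j) : ℤˣ) : ℤ) : ℚ)) * (∏ j, (((Perm.sign (p.1 j) : ℤˣ) : ℤ) : ℚ)) = 1 := by
    rw [← Finset.prod_mul_distrib]
    apply Finset.prod_eq_one
    intro j _
    rcases perm2 (p.1 j) with h | h <;> rw [h] <;> simp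
  linear_combination (((Perm.sign σ : ℤ) : ℚ) * ∏ j, A (σ (EE N (j, 0))) (σ (EE N (j, 1)))) * hs

lemma exists_unique_hh {N : ℕ} (τ : Perm (Fin (2 * N))) : ∃! p, good (τ * hh p) := by
  have inj {a b : Fin N × Fin 2} (h : τ (EE N a) = τ (EE N b)) : a = b := (EE N).injective (τ.injective h)
  have hex (j : Fin N) : ∃ e : Perm (Fin 2), τ (EE N (j, e 0)) < τ (EE N (j, e 1)) := by
    rcases lt_trichotomy (τ (EE N (j, 0))) (τ (EE N (j, 1))) with h | h | h
    · exact ⟨1, h⟩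
    · have := inj h; simp at this
    · exact ⟨swap 0 1, by simpa using h⟩
  choose e he using hex
  have hu (j : Fin N) (e' : Perm (Fin 2)) (h : τ (EE N (j, e' 0)) < τ (EE N (j, e' 1))) : e' = e j := by
    have h2 := he j
    rcases perm2 e' with h1 | h1 <;> rcases perm2 (e j) with h3 | h3 <;> rw [h1] at h ⊢ <;> rw [h3] at h2 ⊢ <;>
      simp at h h2 <;> exact absurd h (lt_asymm h2)
  let f : Fin N → Fin (2 * N) := fun j => τ (EE N (j, e j 0))
  have hf : Function.Injective f := fun a b h => congrArg Prod.fst (inj h)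
  refine ⟨(e, Tuple.sort f), ⟨?_, ?_⟩, ?_⟩
  · intro i; simp only [Perm.mul_apply, hh_apply]; exact he _
  · intro i j hij
    simp only [Perm.mul_apply, hh_apply]
    exact ((Tuple.monotone_sort f).strictMono_of_injective (hf.comp (Tuple.sort f).injective)) hij
  · rintro ⟨e', π⟩ ⟨h1, h2⟩
    simp only [Perm.mul_apply, hh_apply] at h1 h2
    obtain rfl : e' = e := by
      funext j
      apply hu
      have := h1 (π.symm j)
      simpa using this
    have : f ∘ π = f ∘ Tuple.sort f := by
      apply Tuple.unique_monotone _ (Tuple.monotone_sort f)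
      exact StrictMono.monotone (fun i j hij => h2 i j hij)
    have : π = Tuple.sort f := by
      ext i
      exact congrArg _ (hf (congrFun this i))
    rw [this]

def full {N : ℕ} (A : Matrix (Fin (2 * N)) (Fin (2 * N)) ℚ) : ℚ := ∑ σ, tm A σ

lemma full_eq {N : ℕ} (A : Matrix (Fin (2 * N)) (Fin (2 * N)) ℚ) (hA : ∀ i j, A i j = - A j i) :
    full A = (Fintype.card ((Fin N → Perm (Fin 2)) × Perm (Fin N)) : ℚ) * pfaffian A := by
  classical
  have h1 (p : (Fin N → Perm (Fin 2)) × Perm (Fin N)) :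
      pfaffian A = ∑ τ, if good (τ * hh p) then tm A τ else 0 := by
    rw [pf_eq, Finset.sum_filter, ← Equiv.sum_comp (Equiv.mulRight (hh p))]
    simp [tm_hh A hA]
  have h2 : ∑ p : (Fin N → Perm (Fin 2)) × Perm (Fin N), pfaffian A =
      ∑ p : (Fin N → Perm (Fin 2)) × Perm (Fin N), ∑ τ, if good (τ * hh p) then tm A τ else 0 :=
    Finset.sum_congr rfl fun p _ => h1 p
  rw [Finset.sum_const, Finset.sum_comm, nsmul_eq_mul, Finset.card_univ] at h2
  rw [h2, full]
  refine Finset.sum_congr rfl fun τ _ => ?_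
  obtain ⟨p, hp, hu⟩ := exists_unique_hh τ
  rw [Finset.sum_eq_single p]
  · rw [if_pos hp]
  · intro q _ hq
    rw [if_neg (fun h => hq (hu q h))]
  · simp

lemma prod_EE {N : ℕ} (g : Fin (2 * N) → ℚ) : ∏ j, g j = ∏ i : Fin N, g (EE N (i, 0)) * g (EE N (i, 1)) := by
  rw [← Equiv.prod_comp (EE N), Fintype.prod_prod_type]
  simp

lemma full_congr {N : ℕ} (A B : Matrix (Fin (2 * N)) (Fin (2 * N)) ℚ) :
    full (B * A * B.transpose) = B.det * full A := by
  have h1 (σ : Perm (Fin (2 * N))) : ∏ i : Fin N, (B * A * B.transpose) (σ (EE N (i, 0))) (σ (EE N (i, 1))) =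
      ∑ f : Fin (2 * N) → Fin (2 * N), (∏ i : Fin N, A (f (EE N (i, 0))) (f (EE N (i, 1)))) * ∏ j, B (σ j) (f j) := by
    have h2 (i : Fin N) : (B * A * B.transpose) (σ (EE N (i, 0))) (σ (EE N (i, 1))) =
        ∑ q : Fin (2 * N) × Fin (2 * N), A q.1 q.2 * (B (σ (EE N (i, 0))) q.1 * B (σ (EE N (i, 1))) q.2) := by
      rw [Fintype.sum_prod_type, Finset.sum_comm, Matrix.mul_apply]
      refine Finset.sum_congr rfl fun l _ => ?_
      rw [Matrix.mul_apply, Finset.sum_mul]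
      refine Finset.sum_congr rfl fun k _ => ?_
      rw [Matrix.transpose_apply]; ring
    simp only [h2]
    rw [Finset.prod_univ_sum, Fintype.piFinset_univ]
    let Φ : (Fin (2 * N) → Fin (2 * N)) ≃ (Fin N → Fin (2 * N) × Fin (2 * N)) :=
      { toFun := fun f i => (f (EE N (i, 0)), f (EE N (i, 1)))
        invFun := fun g j => if ((EE N).symm j).2 = 0 then (g ((EE N).symm j).1).1 else (g ((EE N).symm j).1).2
        left_inv := by
          intro f; funext j
          obtain ⟨⟨i, b⟩, rfl⟩ := (EE N).surjective j
          fin_cases b <;> simp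
        right_inv := by
          intro g; funext i; simp }
    rw [← Equiv.sum_comp Φ]
    refine Finset.sum_congr rfl fun f _ => ?_
    rw [Finset.prod_mul_distrib, prod_EE (fun j => B (σ j) (f j))]
    rfl
  unfold full tm
  simp only [h1, Finset.mul_sum]
  rw [Finset.sum_comm]
  have h3 (f : Fin (2 * N) → Fin (2 * N)) :
      ∑ σ : Perm (Fin (2 * N)), ((Perm.sign σ : ℤ) : ℚ) * ((∏ i : Fin N, A (f (EE N (i, 0))) (f (EE N (i, 1)))) * ∏ j, B (σ j) (f j))
      = (∏ i : Fin N, A (f (EE N (i, 0))) (f (EE N (i, 1)))) * (B.submatrix id f).det := by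
    rw [Matrix.det_apply', Finset.mul_sum]
    refine Finset.sum_congr rfl fun σ _ => ?_
    simp only [Matrix.submatrix_apply, id]
    ring
  simp only [h3]
  symm
  apply Finset.sum_of_injOn (fun σ : Perm (Fin (2 * N)) => (σ : Fin (2 * N) → Fin (2 * N)))
  · intro a _ b _ h; exact DFunLike.coe_injective h
  · intro a _; simp
  · intro f _ hf
    have : ¬ Function.Injective f := by
      intro hi
      apply hf
      exact ⟨Equiv.ofBijective f (Finite.injective_iff_bijective.1 hi), by simp, rfl⟩
    simp only [Function.Injective, not_forall] at this
    obtain ⟨a, b, hab, hne⟩ := this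
    rw [Matrix.det_zero_of_column_eq hne, mul_zero]
    intro k; simp [hab]
  · intro σ _
    rw [Matrix.det_permute']
    ring

lemma pf_congr {N : ℕ} (A B : Matrix (Fin (2 * N)) (Fin (2 * N)) ℚ) (hA : ∀ i j, A i j = - A j i)
    (hB : B.det = 1) : pfaffian (B * A * B.transpose) = pfaffian A := by
  have hT : A.transpose = - A := by
    ext i j; rw [Matrix.transpose_apply, hA, Matrix.neg_apply]
  have hs : ∀ i j, (B * A * B.transpose) i j = - (B * A * B.transpose) j i := by
    intro i j
    have : (B * A * B.transpose).transpose = - (B * A * B.transpose) := by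
      rw [Matrix.transpose_mul, Matrix.transpose_mul, hT, Matrix.transpose_transpose]
      simp [Matrix.mul_assoc]
    have := congrFun (congrFun this j) i
    rw [Matrix.transpose_apply] at this
    rw [this, Matrix.neg_apply]
  have h := full_congr A B
  rw [full_eq A hA, full_eq _ hs, hB, one_mul] at h
  exact mul_left_cancel₀ (Nat.cast_ne_zero.2 Fintype.card_ne_zero) h

lemma pf_tri {N : ℕ} (G : Matrix (Fin (2 * N)) (Fin (2 * N)) ℚ)
    (hG : ∀ i j : Fin (2 * N), i.val + 1 < j.val → G i j = 0) :
    pfaffian G = ∏ i : Fin N, G (EE N (i, 0)) (EE N (i, 1)) := by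
  classical
  rw [pf_eq, Finset.sum_eq_single 1]
  · simp [tm]
  · intro σ hσ hne
    simp only [Finset.mem_filter, Finset.mem_univ, true_and] at hσ
    by_contra hc
    apply hne
    have hc' := right_ne_zero_of_mul hc
    rw [Finset.prod_ne_zero_iff] at hc'
    have hadj (i : Fin N) : (σ (EE N (i, 1))).val = (σ (EE N (i, 0))).val + 1 := by
      have a := hσ.1 i
      have b := hc' i (Finset.mem_univ _)
      have c : ¬ ((σ (EE N (i, 0))).val + 1 < (σ (EE N (i, 1))).val) := fun h => b (hG _ _ h)
      have := Fin.lt_def.1 a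
      omega
    have key : ∀ k (hk : k < 2 * N), k ≤ (σ ⟨k, hk⟩).val := by
      have key2 : ∀ i (hi : i < N), 2 * i ≤ (σ (EE N (⟨i, hi⟩, 0))).val := by
        intro i
        induction i with
        | zero => intro hi; simp
        | succ i ih =>
          intro hi
          have a := ih (by omega)
          have b := hadj ⟨i, by omega⟩
          have c := Fin.lt_def.1 (hσ.2 ⟨i, by omega⟩ ⟨i + 1, hi⟩ (by simp [Fin.lt_def]))
          have d : (σ (EE N (⟨i + 1, hi⟩, 0))).val ≠ (σ (EE N (⟨i, by omega⟩, 1))).val := by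
            intro h
            have := (EE N).injective (σ.injective (Fin.ext h))
            simp at this
          omega
      intro k hk
      rcases Nat.even_or_odd' k with ⟨i, rfl | rfl⟩
      · have := key2 i (by omega)
        rw [← EE0 ⟨i, by omega⟩ hk] at this
        exact this
      · have := key2 i (by omega)
        have h2 := hadj ⟨i, by omega⟩
        rw [← EE1 ⟨i, by omega⟩ hk] at h2
        simp only at h2
        omega
    have hsum : ∑ k : Fin (2 * N), (k.val) = ∑ k : Fin (2 * N), (σ k).val :=
      (Equiv.sum_comp σ (fun k : Fin (2 * N) => k.val)).symm
    have := (Finset.sum_eq_sum_iff_of_le (fun (k : Fin (2 * N)) _ => key k.val k.isLt)).1 hsum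
    ext k
    exact (this k (Finset.mem_univ _)).symm
  · intro h
    exfalso
    apply h
    refine Finset.mem_filter.2 ⟨Finset.mem_univ _, ?_, ?_⟩ <;> simp only [Perm.one_apply]
    · intro i
      rw [← EE0 i (by omega), ← EE1 i (by omega)]; simp [Fin.lt_def]
    · intro i j hij
      rw [← EE0 i (by omega), ← EE0 j (by omega)]
      have := Fin.lt_def.1 hij
      exact Fin.lt_def.2 (by simp only; omega)

end PF

/-- For every integer `n ≥ 0`, the Pfaffian of the `2n × 2n` skew-symmetric matrix
with entries `(j-i)·S_{i+j-2}` (1-based; here 0-based, so the entry at `(i,j)` is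
`(j-i)·S_{i+j}`) equals `2^{n²}·∏_{k=0}^{n-1} (4k+1)`. -/
theorem pfaffian_schroeder (n : ℕ) :
    pfaffian (N := n) (Matrix.of fun i j : Fin (2 * n) =>
        ((j.val : ℚ) - (i.val : ℚ)) * schroeder (i.val + j.val)) =
      2 ^ (n ^ 2) * ∏ k ∈ Finset.range n, (4 * (k : ℚ) + 1) := by
  let B : Matrix (Fin (2 * n)) (Fin (2 * n)) ℚ :=
    (Matrix.of (fun (i j : Fin (2 * n)) => (PP j.val).coeff i.val)).transpose
  have hB : B.det = 1 := by
    rw [Matrix.det_transpose]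
    exact Matrix.det_matrixOfPolynomials (fun j : Fin (2 * n) => PP j.val)
      (fun i => PP_natDegree i.val) (fun i => PP_monic i.val)
  set A : Matrix (Fin (2 * n)) (Fin (2 * n)) ℚ := Matrix.of fun i j : Fin (2 * n) =>
        ((j.val : ℚ) - (i.val : ℚ)) * schroeder (i.val + j.val) with hA
  have hsk : ∀ i j, A i j = - A j i := by
    intro i j
    rw [hA, Matrix.of_apply, Matrix.of_apply, add_comm i.val]; ring
  rw [← pf_congr A B hsk hB]
  have hG (i j : Fin (2 * n)) : (B * A * B.transpose) i j =
      Lam (PP i.val * derivative (PP j.val) - derivative (PP i.val) * PP j.val) := by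
    rw [← bil (2 * n) _ _ (by rw [PP_natDegree]; exact i.isLt) (by rw [PP_natDegree]; exact j.isLt),
      Finset.sum_comm, Matrix.mul_apply]
    refine Finset.sum_congr rfl fun l _ => ?_
    rw [Matrix.mul_apply, Finset.sum_mul]
    rfl
  rw [pf_tri]
  · have h (i : Fin n) : (B * A * B.transpose) (EE n (i, 0)) (EE n (i, 1)) =
        2 ^ (2 * i.val + 1) * (4 * (i.val : ℚ) + 1) := by
      rw [hG, ← EE0 i (by omega), ← EE1 i (by omega)]
      have := Lam_W (2 * i.val) 0
      simp only [add_zero, if_true] at this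
      rw [this]; push_cast; ring
    simp only [h]
    rw [Finset.prod_mul_distrib, Fin.prod_univ_eq_prod_range (fun i => (4 * (i : ℚ) + 1)) n,
      Fin.prod_univ_eq_prod_range (fun i => (2 : ℚ) ^ (2 * i + 1)) n]
    congr 1
    clear * -
    induction n with
    | zero => simp
    | succ n ih => rw [Finset.prod_range_succ, ih, ← pow_add]; congr 1; ring
  · intro i j hij
    obtain ⟨d, hd⟩ : ∃ d, j.val = i.val + (d + 1) + 1 := ⟨j.val - i.val - 2, by omega⟩
    rw [hG, hd, Lam_W]; simp
end

section
/- For every integer n ≥ 0, the determinant of the 2n×2n matrix whose (i,j) entry is (j−i)·S_{i+j−2} for 1 ≤ i,j ≤ 2n equals 2^{2n²}·(∏_{k=0}^{n−1} (4k+1))². -/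
namespace SchroederAux

open Polynomial

/-- summand -/
def F (n k : ℕ) : ℚ := (1 / ((k : ℚ) + 1)) * ((n + k).choose (2 * k)) * ((2 * k).choose k)

lemma choose_up (N r : ℕ) : ((N + 1).choose r : ℚ) * ((N : ℚ) + 1 - r) = (N + 1) * N.choose r := by
  rcases le_or_gt r (N + 1) with h | h
  · have := Nat.choose_mul_succ_eq N r
    have h2 : ((N + 1 - r : ℕ) : ℚ) = (N : ℚ) + 1 - r := by
      rw [Nat.cast_sub h]; push_cast; ring
    rw [← h2]
    have h3 : ((N.choose r * (N + 1) : ℕ) : ℚ) = ((N + 1).choose r * (N + 1 - r) : ℕ) := by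
      rw [this]
    push_cast at h3
    push_cast
    linarith
  · rw [Nat.choose_eq_zero_of_lt h, Nat.choose_eq_zero_of_lt (by omega)]; simp

lemma choose_diag (N r : ℕ) : ((N + 1).choose (r + 1) : ℚ) * ((r : ℚ) + 1) = (N + 1) * N.choose r := by
  have := Nat.add_one_mul_choose_eq N r
  have h3 : (((N + 1) * N.choose r : ℕ) : ℚ) = ((N + 1).choose (r + 1) * (r + 1) : ℕ) := by
    rw [this]
  push_cast at h3
  linarith

lemma central (m : ℕ) : ((m : ℚ) + 1) * ((2 * (m + 1)).choose (m + 1)) = 2 * (2 * m + 1) * ((2 * m).choose m) := by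
  have := Nat.succ_mul_centralBinom_succ m
  simp only [Nat.centralBinom] at this
  exact_mod_cast this

lemma tele (n m : ℕ) :
    ∑ k ∈ Finset.range (m + 1), (((n : ℚ) + 3) * F (n + 2) k - 3 * (2 * n + 3) * F (n + 1) k
      + n * F n k) = -(4 * n + 6) * ((n + m + 1).choose (2 * m)) * ((2 * m).choose m / ((m : ℚ) + 1)) := by
  induction m with
  | zero => simp [F]; ring
  | succ m ih =>
    rw [Finset.sum_range_succ, ih]
    unfold F
    have e1 := choose_diag (n + m + 1) (2 * m)
    have e2 := choose_diag (n + m + 2) (2 * m + 1)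
    have e3 := choose_up (n + m + 2) (2 * m + 2)
    have e4 := choose_up (n + m + 1) (2 * m + 2)
    have e5 := central m
    rw [show n + 2 + (m + 1) = n + m + 2 + 1 by ring, show n + 1 + (m + 1) = n + m + 2 by ring,
      show n + (m + 1) = n + m + 1 by ring, show n + m + 1 + 1 = n + m + 2 by ring]
    rw [show 2 * (m + 1) = 2 * m + 2 by ring] at *
    rw [show n + m + 1 + 1 = n + m + 2 by ring] at *
    rw [show 2 * m + 1 + 1 = 2 * m + 2 by ring] at *
    push_cast at *
    generalize ((n + m + 1).choose (2 * m) : ℚ) = c at *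
    generalize ((n + m + 2).choose (2 * m + 1) : ℚ) = c1 at *
    generalize ((n + m + 2 + 1).choose (2 * m + 2) : ℚ) = c2 at *
    generalize ((n + m + 2).choose (2 * m + 2) : ℚ) = c3 at *
    generalize ((n + m + 1).choose (2 * m + 2) : ℚ) = c4 at *
    generalize ((2 * m + 2).choose (m + 1) : ℚ) = b1 at *
    generalize ((2 * m).choose m : ℚ) = b at *
    generalize hN : (n : ℚ) = N at *
    generalize hM : (m : ℚ) = M at *
    have hN0 : 0 ≤ N := by rw [← hN]; positivity
    have hM0 : 0 ≤ M := by rw [← hM]; positivity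
    have a1 : c1 = (N + M + 2) * c / (2 * M + 1) := by
      field_simp; linarith
    have a2 : c2 = (N + M + 3) * c1 / (2 * M + 2) := by
      field_simp; linarith
    have a3 : c3 = c2 * (N - M + 1) / (N + M + 3) := by
      field_simp; linarith
    have a4 : c4 = c3 * (N - M) / (N + M + 2) := by
      field_simp; linarith
    have a5 : b1 = 2 * (2 * M + 1) * b / (M + 1) := by
      field_simp; linarith
    subst a4 a3 a2 a1 a5
    field_simp
    ring

lemma sch_ext (n K : ℕ) (h : n + 1 ≤ K) : schroeder n = ∑ k ∈ Finset.range K, F n k := by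
  unfold schroeder
  refine Finset.sum_subset (by simpa using h) ?_
  intro k _ hk
  simp only [Finset.mem_range, not_lt] at hk
  rw [Nat.choose_eq_zero_of_lt (show n + k < 2 * k by omega)]; simp

lemma sch_rec (n : ℕ) : ((n : ℚ) + 3) * schroeder (n + 2) - 3 * (2 * n + 3) * schroeder (n + 1)
      + n * schroeder n = 0 := by
  have := tele n (n + 2)
  rw [Nat.choose_eq_zero_of_lt (show n + (n + 2) + 1 < 2 * (n + 2) by omega)] at this
  rw [sch_ext n (n + 2 + 1) (by omega), sch_ext (n + 1) (n + 2 + 1) (by omega),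
    sch_ext (n + 2) (n + 2 + 1) (by omega), Finset.mul_sum, Finset.mul_sum, Finset.mul_sum,
    ← Finset.sum_sub_distrib, ← Finset.sum_add_distrib, this]
  simp

/-- functional -/
noncomputable def Φ : ℚ[X] →ₗ[ℚ] ℚ :=
  Polynomial.lsum fun n => LinearMap.lsmul ℚ ℚ (schroeder (n + 1))

lemma Φ_X (n : ℕ) : Φ (X ^ n) = schroeder (n + 1) := by
  rw [X_pow_eq_monomial]
  simp [Φ, Polynomial.sum_monomial_index]

lemma Φ_C (a : ℚ) (f : ℚ[X]) : Φ (C a * f) = a * Φ f := by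
  rw [← smul_eq_C_mul, map_smul, smul_eq_mul]

lemma pearson (f : ℚ[X]) : Φ ((X ^ 2 - C 6 * X + 1) * derivative f + C 3 * ((X - C 3) * f)) = 0 := by
  induction f using Polynomial.induction_on' with
  | add p q hp hq =>
    rw [← add_zero (0 : ℚ)]
    nth_rewrite 2 [← hp]
    rw [← hq, ← map_add]
    congr 1
    simp only [derivative_add]
    ring
  | monomial n a =>
    rw [← C_mul_X_pow_eq_monomial]
    rcases n with _ | n
    · have e : ((X ^ 2 - C 6 * X + 1) * derivative (C a * X ^ 0) + C 3 * ((X - C 3) * (C a * X ^ 0)) : ℚ[X])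
        = C (3 * a) * X ^ 1 - C (9 * a) * X ^ 0 := by
        simp only [pow_zero, mul_one, derivative_C, map_mul]
        rw [show (9 : ℚ) = 3 * 3 by norm_num, map_mul]
        ring
      have := sch_rec 0
      rw [e, map_sub, Φ_C, Φ_C, Φ_X, Φ_X]
      norm_num at this ⊢
      linear_combination a * this
    · have e : ((X ^ 2 - C 6 * X + 1) * derivative (C a * X ^ (n + 1)) + C 3 * ((X - C 3) * (C a * X ^ (n + 1))) : ℚ[X])
        = C (a * (n + 4)) * X ^ (n + 2) - C (a * (6 * (n + 1) + 9)) * X ^ (n + 1)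
          + C (a * (n + 1)) * X ^ n := by
        simp only [derivative_C_mul_X_pow, map_mul, map_add, map_natCast, Nat.add_sub_cancel]
        simp only [show (C 6 : ℚ[X]) = 6 from rfl, show (C 3 : ℚ[X]) = 3 from rfl,
          show (C 9 : ℚ[X]) = 9 from rfl, show (C 4 : ℚ[X]) = 4 from rfl]
        push_cast
        simp only [map_add, map_natCast, map_one]
        ring
      have := sch_rec (n + 1)
      rw [e, map_add, map_sub, Φ_C, Φ_C, Φ_C, Φ_X, Φ_X, Φ_X]
      push_cast at this
      linear_combination a * this

/-- Chebyshev-like -/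
noncomputable def P : ℕ → ℚ[X]
  | 0 => 1
  | 1 => X - C 3
  | (k + 2) => (X - C 3) * P (k + 1) - C 2 * P k

lemma P_rec (k : ℕ) : P (k + 2) = (X - C 3) * P (k + 1) - C 2 * P k := by rw [P]

lemma dP_rec (k : ℕ) : derivative (P (k + 2)) =
    P (k + 1) + (X - C 3) * derivative (P (k + 1)) - C 2 * derivative (P k) := by
  rw [P_rec]; simp

lemma C2 : (C 2 : ℚ[X]) = 2 := rfl
lemma C3 : (C 3 : ℚ[X]) = 3 := rfl
lemma C6 : (C 6 : ℚ[X]) = 6 := rfl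

lemma Tder (k : ℕ) : derivative (P (k + 2)) = ((k : ℚ[X]) + 2) * P (k + 1) + C 2 * derivative (P k) := by
  induction k using Nat.strong_induction_on with
  | _ k ih =>
    rcases k with _ | _ | k
    · rw [dP_rec]; simp [P]; ring
    · rw [dP_rec, dP_rec]; simp only [P]; simp [C2, C3]; ring
    · have h1 := ih (k + 1) (by omega)
      have h0 := ih k (by omega)
      rw [dP_rec, h1]
      have r1 := P_rec k
      have r2 := P_rec (k + 1)
      have d := dP_rec k
      push_cast at *
      simp only [C2] at *
      linear_combination (-(k : ℚ[X]) - 3) * r2 - 2 * d - 2 * h0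

lemma struct (k : ℕ) : (X ^ 2 - C 6 * X + 1) * derivative (P (k + 1)) =
    ((k : ℚ[X]) + 1) * P (k + 2) - 2 * ((k : ℚ[X]) + 3) * P k := by
  induction k using Nat.strong_induction_on with
  | _ k ih =>
    rcases k with _ | _ | k
    · rw [P_rec]; simp [P, C2, C3, C6]; ring
    · rw [dP_rec, P_rec, P_rec]; simp [P, C2, C3, C6]; ring
    · have h1 := ih (k + 1) (by omega)
      have h0 := ih k (by omega)
      have r1 := P_rec k
      have r2 := P_rec (k + 1)
      have r3 := P_rec (k + 2)
      have d := dP_rec (k + 1)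
      simp only [C2, C3, C6] at *
      push_cast at *
      rw [show k + 1 + 1 = k + 2 from rfl, show k + 1 + 2 = k + 3 from rfl,
        show k + 2 + 1 = k + 3 from rfl, show k + 2 + 2 = k + 4 from rfl] at *
      rw [d]
      linear_combination (X - 3) * h1 - 2 * h0 - ((k : ℚ[X]) + 3) * r3 - (X - 3) * r2 + 2 * ((k : ℚ[X]) + 3) * r1

lemma Φ_n (a : ℕ) (f : ℚ[X]) : Φ ((a : ℚ[X]) * f) = a * Φ f := by
  rw [← map_natCast (C : ℚ →+* ℚ[X]), Φ_C]

lemma sch_one : schroeder 1 = 2 := by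
  simp [schroeder, Finset.sum_range_succ]; norm_num

lemma Φ_one : Φ 1 = 2 := by
  rw [← pow_zero X, Φ_X, sch_one]

lemma Φ_P_succ (k : ℕ) : Φ (P (k + 1)) = 0 := by
  induction k using Nat.strong_induction_on with
  | _ k ih =>
    rcases k with _ | k
    · have := pearson 1
      simp only [derivative_one, mul_zero, zero_add, mul_one, Φ_C] at this
      simp only [P, zero_add]
      linarith
    · have h := pearson (P (k + 1))
      rw [struct] at h
      have r1 := P_rec k
      have e : (((k : ℚ[X]) + 1) * P (k + 2) - 2 * ((k : ℚ[X]) + 3) * P k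
          + C 3 * ((X - C 3) * P (k + 1))) = ((k + 4 : ℕ) : ℚ[X]) * P (k + 2) - ((2 * k : ℕ) : ℚ[X]) * P k := by
        simp only [C2, C3] at *
        push_cast
        linear_combination (-3) * r1
      rw [e, map_sub, Φ_n, Φ_n] at h
      have h0 : ((2 * k : ℕ) : ℚ) * Φ (P k) = 0 := by
        rcases k with _ | k
        · simp
        · rw [ih k (by omega), mul_zero]
      rw [h0, sub_zero] at h
      have : ((k + 4 : ℕ) : ℚ) ≠ 0 := by positivity
      exact (mul_eq_zero.mp h).resolve_left this

lemma orth_lt (i : ℕ) : ∀ j, i < j → Φ (P i * P j) = 0 := by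
  induction i using Nat.strong_induction_on with
  | _ i ih =>
    intro j hj
    obtain ⟨j, rfl⟩ : ∃ l, j = l + 1 := ⟨j - 1, by omega⟩
    rcases i with _ | _ | i
    · simp only [P, one_mul]; exact Φ_P_succ j
    · obtain ⟨j, rfl⟩ : ∃ l, j = l + 1 := ⟨j - 1, by omega⟩
      have e : P (0 + 1) * P (j + 1 + 1) = P (j + 3) + C 2 * P (j + 1) := by
        rw [P_rec (j + 1)]; simp only [P, zero_add]; ring
      rw [e, map_add, Φ_C, Φ_P_succ, Φ_P_succ]; simp
    · obtain ⟨j, rfl⟩ : ∃ l, j = l + 1 := ⟨j - 1, by omega⟩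
      have e : P (i + 2) * P (j + 2) = P (i + 1) * P (j + 3) + C 2 * (P (i + 1) * P (j + 1))
          - C 2 * (P i * P (j + 2)) := by
        rw [P_rec (j + 1), P_rec i]; ring
      rw [show i + 1 + 1 = i + 2 from rfl, show j + 1 + 1 = j + 2 from rfl, e, map_sub, map_add,
        Φ_C, Φ_C, ih (i + 1) (by omega) _ (by omega), ih (i + 1) (by omega) _ (by omega),
        ih i (by omega) _ (by omega)]
      simp

lemma orth (i j : ℕ) (h : i ≠ j) : Φ (P i * P j) = 0 := by
  rcases lt_or_gt_of_ne h with h | h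
  · exact orth_lt i j h
  · rw [mul_comm]; exact orth_lt j i h

lemma norm_P (i : ℕ) : Φ (P i * P i) = 2 ^ (i + 1) := by
  induction i with
  | zero => simp [P, Φ_one]
  | succ i ih =>
    rcases i with _ | i
    · have e : P (0 + 1) * P (0 + 1) = P 2 + C 2 * (P 0 * P 0) := by
        rw [P_rec 0]; simp only [P, zero_add]; ring
      rw [e, map_add, Φ_C, ih, Φ_P_succ 1]; norm_num
    · have e : P (i + 2) * P (i + 2) = P (i + 1) * P (i + 3) + C 2 * (P (i + 1) * P (i + 1))
          - C 2 * (P i * P (i + 2)) := by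
        rw [P_rec (i + 1)]; nth_rewrite 1 [P_rec i]; ring
      rw [show i + 1 + 1 = i + 2 from rfl, e, map_sub, map_add, Φ_C, Φ_C, ih,
        orth _ _ (by omega), orth _ _ (by omega)]
      ring

lemma der_step (i j : ℕ) : Φ (P i * derivative (P (j + 2))) =
    (j + 2) * Φ (P i * P (j + 1)) + 2 * Φ (P i * derivative (P j)) := by
  rw [Tder]
  have e : P i * (((j : ℚ[X]) + 2) * P (j + 1) + C 2 * derivative (P j)) =
      ((j + 2 : ℕ) : ℚ[X]) * (P i * P (j + 1)) + C 2 * (P i * derivative (P j)) := by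
    push_cast; ring
  rw [e, map_add, Φ_n, Φ_C]; push_cast; ring

lemma der_zero (i j : ℕ) (h : j ≤ i ∨ Even (i + j)) : Φ (P i * derivative (P j)) = 0 := by
  induction j using Nat.strong_induction_on with
  | _ j ih =>
    rcases j with _ | _ | j
    · simp [P]
    · have : i ≠ 0 := by
        rintro rfl
        rcases h with h | h
        · omega
        · simp at h
      have := orth i 0 this
      simpa [P] using this
    · rw [der_step, ih j (by omega), orth]
      · simp
      · rintro rfl
        rcases h with h | h
        · omega
        · rw [Nat.even_iff] at h; omega
      · rcases h with h | h
        · left; omega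
        · right; rw [Nat.even_iff] at *; omega

lemma der_one (i : ℕ) : Φ (P i * derivative (P (i + 1))) = (i + 1) * 2 ^ (i + 1) := by
  rcases i with _ | i
  · simp [P, Φ_one]
  · rw [der_step, norm_P, der_zero _ _ (by left; omega)]; push_cast; ring

/-- first kind, odd index `2j+1` -/
noncomputable def T : ℕ → ℚ[X]
  | 0 => P 1
  | (j + 1) => P (2 * j + 3) - C 2 * P (2 * j + 1)

lemma dT (j : ℕ) : derivative (T j) = ((2 * j + 1 : ℕ) : ℚ[X]) * P (2 * j) := by
  rcases j with _ | j
  · simp [T, P]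
  · rw [T, derivative_sub, Tder (2 * j + 1)]
    simp only [derivative_C_mul]
    rw [show 2 * (j + 1) = 2 * j + 1 + 1 by ring]
    push_cast; ring

/-- skew form -/
noncomputable def br (f g : ℚ[X]) : ℚ := Φ (f * derivative g - derivative f * g)

lemma br_skew (f g : ℚ[X]) : br g f = - br f g := by
  unfold br; rw [← map_neg]; congr 1; ring

lemma br_ee (i j : ℕ) : br (P (2 * i)) (P (2 * j)) = 0 := by
  unfold br
  rw [map_sub, mul_comm (derivative _), der_zero _ _ (by right; simp [Nat.even_add]),
    der_zero _ _ (by right; simp [Nat.even_add])]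
  simp

lemma T_orth (i j : ℕ) : Φ (T i * P (2 * j)) = 0 := by
  rcases i with _ | i
  · exact orth _ _ (by omega)
  · rw [T, sub_mul, map_sub, mul_assoc, Φ_C, orth _ _ (by omega), orth _ _ (by omega)]; simp

lemma br_oo (i j : ℕ) : br (T i) (T j) = 0 := by
  unfold br
  rw [dT, dT, map_sub, mul_left_comm, mul_assoc, mul_comm (P (2 * i)), Φ_n, Φ_n, T_orth, T_orth]
  simp

lemma br_eo_lt (i j : ℕ) (h : i < j) : br (P (2 * i)) (T j) = 0 := by
  unfold br
  rw [dT, map_sub, mul_left_comm, Φ_n, orth _ _ (by omega)]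
  obtain ⟨j, rfl⟩ : ∃ l, j = l + 1 := ⟨j - 1, by omega⟩
  rw [T, mul_comm (derivative _), sub_mul, map_sub, mul_assoc, Φ_C, der_zero _ _ (by left; omega),
    der_zero _ _ (by left; omega)]
  simp

lemma br_eo_diag (i : ℕ) : br (P (2 * i)) (T i) = 2 ^ (2 * i + 1) * (4 * i + 1) := by
  unfold br
  rw [dT, map_sub, mul_left_comm, Φ_n, norm_P]
  rcases i with _ | i
  · simp [P]
  · rw [T, mul_comm (derivative _), sub_mul, map_sub, mul_assoc, Φ_C, der_zero _ _ (by left; omega),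
      show 2 * (i + 1) = 2 * i + 1 + 1 by ring, der_one]
    push_cast; ring

/-- basis -/
noncomputable def B (i : ℕ) : ℚ[X] := if i % 2 = 0 then P i else T (i / 2)

lemma B_even (i : ℕ) : B (2 * i) = P (2 * i) := by simp [B]
lemma B_odd (i : ℕ) : B (2 * i + 1) = T i := by
  rw [B, if_neg (by omega)]; congr 1; omega

lemma P_deg (k : ℕ) : (P k).degree < (k + 1 : ℕ) ∧ (P k).coeff k = 1 := by
  induction k using Nat.strong_induction_on with
  | _ k ih =>
    rcases k with _ | _ | k
    · simp [P]
    · refine ⟨?_, by simp [P, coeff_X, coeff_C]⟩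
      simp only [P, zero_add, degree_X_sub_C]; norm_num
    · have h1 := ih (k + 1) (by omega)
      have h0 := ih k (by omega)
      have z (l m : ℕ) (h : (P l).degree < (l + 1 : ℕ)) (hm : l < m) : (P l).coeff m = 0 :=
        coeff_eq_zero_of_degree_lt (lt_of_lt_of_le h (by exact_mod_cast hm))
      constructor
      · rw [degree_lt_iff_coeff_zero]
        intro m hm
        obtain ⟨m, rfl⟩ : ∃ l, m = l + 1 := ⟨m - 1, by omega⟩
        rw [P_rec, coeff_sub, sub_mul, coeff_sub, coeff_C_mul, coeff_C_mul, coeff_X_mul,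
          z _ _ h1.1 (by omega), z _ _ h1.1 (by omega), z _ _ h0.1 (by omega)]
        simp
      · rw [P_rec, coeff_sub, sub_mul, coeff_sub, coeff_C_mul, coeff_C_mul, coeff_X_mul,
          z _ (k + 1 + 1) h1.1 (by omega), z _ _ h0.1 (by omega), h1.2]
        simp

lemma P_coeff_gt (l m : ℕ) (hm : l < m) : (P l).coeff m = 0 :=
  coeff_eq_zero_of_degree_lt (lt_of_lt_of_le (P_deg l).1 (by exact_mod_cast hm))

lemma T_coeff_gt (l m : ℕ) (hm : 2 * l + 1 < m) : (T l).coeff m = 0 := by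
  rcases l with _ | l
  · exact P_coeff_gt _ _ (by omega)
  · rw [T, coeff_sub, coeff_C_mul, P_coeff_gt _ _ (by omega), P_coeff_gt _ _ (by omega)]; simp

lemma T_coeff_self (l : ℕ) : (T l).coeff (2 * l + 1) = 1 := by
  rcases l with _ | l
  · exact (P_deg 1).2
  · rw [T, coeff_sub, coeff_C_mul, P_coeff_gt (2 * l + 1) _ (by omega)]
    have := (P_deg (2 * l + 3)).2
    rw [show 2 * (l + 1) + 1 = 2 * l + 3 by ring, this]; simp

lemma B_coeff_gt (l m : ℕ) (hm : l < m) : (B l).coeff m = 0 := by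
  obtain ⟨k, rfl | rfl⟩ := Nat.even_or_odd' l
  · rw [B_even]; exact P_coeff_gt _ _ hm
  · rw [B_odd]; exact T_coeff_gt _ _ hm

lemma B_coeff_self (l : ℕ) : (B l).coeff l = 1 := by
  obtain ⟨k, rfl | rfl⟩ := Nat.even_or_odd' l
  · rw [B_even]; exact (P_deg _).2
  · rw [B_odd]; exact T_coeff_self _

lemma B_sum (N l : ℕ) (h : l < N) : B l = ∑ a : Fin N, C ((B l).coeff a) * X ^ (a : ℕ) := by
  rw [Fin.sum_univ_eq_sum_range (fun a => C ((B l).coeff a) * X ^ a) N]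
  apply as_sum_range_C_mul_X_pow'
  refine lt_of_le_of_lt (natDegree_le_iff_coeff_eq_zero.2 fun m hm => ?_) h
  exact B_coeff_gt _ _ hm

lemma br_X (i j : ℕ) : br (X ^ i) (X ^ j) = ((j : ℚ) - i) * schroeder (i + j) := by
  unfold br
  rw [map_sub, mul_comm (derivative (X ^ i : ℚ[X]))]
  have key (i j : ℕ) : Φ (X ^ i * derivative (X ^ j)) = j * schroeder (i + j) := by
    rcases j with _ | j
    · simp
    · rw [derivative_X_pow, Nat.add_sub_cancel, map_natCast, mul_left_comm, Φ_n, ← pow_add, Φ_X,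
        add_assoc]
  rw [key, key, add_comm j i]; ring

lemma br_sum {N : ℕ} (c d : Fin N → ℚ) (f : Fin N → ℚ[X]) :
    br (∑ a, C (c a) * f a) (∑ b, C (d b) * f b) = ∑ a, ∑ b, c a * br (f a) (f b) * d b := by
  unfold br
  rw [derivative_sum, derivative_sum, Finset.sum_mul_sum, Finset.sum_mul_sum,
    ← Finset.sum_sub_distrib, map_sum]
  refine Finset.sum_congr rfl fun a _ => ?_
  rw [← Finset.sum_sub_distrib, map_sum]
  refine Finset.sum_congr rfl fun b _ => ?_
  rw [derivative_C_mul, derivative_C_mul, show c a * _ * d b = c a * d b * _ from mul_right_comm _ _ _, ← Φ_C]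
  congr 1; simp only [map_mul]; ring

lemma det_change (N : ℕ) :
    (Matrix.of fun i j : Fin N => ((j.val : ℚ) - (i.val : ℚ)) * schroeder (i.val + j.val)).det =
    (Matrix.of fun i j : Fin N => br (B i) (B j)).det := by
  set M := (Matrix.of fun i j : Fin N => ((j.val : ℚ) - (i.val : ℚ)) * schroeder (i.val + j.val))
  let Q : Matrix (Fin N) (Fin N) ℚ := Matrix.of fun i a => (B i).coeff a
  have hQ : Q.det = 1 := by
    rw [Matrix.det_of_lowerTriangular Q]
    · exact Finset.prod_eq_one fun i _ => B_coeff_self i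
    · intro i j h
      exact B_coeff_gt _ _ h
  have : (Matrix.of fun i j : Fin N => br (B i) (B j)) = Q * M * Q.transpose := by
    ext i j
    rw [Matrix.of_apply, B_sum N i i.2, B_sum N j j.2, br_sum, Matrix.mul_apply]
    simp only [Matrix.mul_apply, Finset.sum_mul, br_X]
    rw [Finset.sum_comm]
    rfl
  rw [this, Matrix.det_mul, Matrix.det_mul, Matrix.det_transpose, hQ]; simp

lemma det_block {n : ℕ} (A : Matrix (Fin n) (Fin n) ℚ) :
    (Matrix.fromBlocks 0 A (-A.transpose) 0).det = A.det ^ 2 := by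
  let U : Matrix (Fin n ⊕ Fin n) (Fin n ⊕ Fin n) ℚ := Matrix.fromBlocks 1 1 0 1
  let V : Matrix (Fin n ⊕ Fin n) (Fin n ⊕ Fin n) ℚ := Matrix.fromBlocks 1 0 (-1) 1
  have hU : U.det = 1 := by simp [U, Matrix.det_fromBlocks_zero₂₁]
  have hV : V.det = 1 := by simp [V, Matrix.det_fromBlocks_zero₁₂]
  have e : Matrix.fromBlocks 0 A (-A.transpose) 0 = Matrix.fromBlocks A 0 0 A.transpose * (U * V * U) := by
    simp [U, V, Matrix.fromBlocks_multiply]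
  rw [e, Matrix.det_mul, Matrix.det_mul, Matrix.det_mul, hU, hV, Matrix.det_fromBlocks_zero₂₁,
    Matrix.det_transpose]
  ring

/-- parity splitting -/
def ev (n : ℕ) : Fin n ⊕ Fin n → Fin (2 * n)
  | .inl i => ⟨2 * i, by omega⟩
  | .inr i => ⟨2 * i + 1, by omega⟩

lemma ev_bij (n : ℕ) : Function.Bijective (ev n) := by
  rw [Fintype.bijective_iff_injective_and_card]
  constructor
  · rintro (a | a) (b | b) h <;> simp only [ev, Fin.mk.injEq] at h
    · congr 1; ext; omega
    · omega
    · omega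
    · congr 1; ext; omega
  · simp; ring

lemma main (n : ℕ) : (Matrix.of fun i j : Fin (2 * n) => br (B i) (B j)).det =
    2 ^ (2 * n ^ 2) * (∏ k ∈ Finset.range n, (4 * (k : ℚ) + 1)) ^ 2 := by
  let A : Matrix (Fin n) (Fin n) ℚ := Matrix.of fun i j => br (P (2 * i)) (T j)
  have hA : A.det = 2 ^ (n ^ 2) * ∏ k ∈ Finset.range n, (4 * (k : ℚ) + 1) := by
    rw [Matrix.det_of_lowerTriangular A]
    · simp only [A, Matrix.of_apply, br_eo_diag]
      rw [Fin.prod_univ_eq_prod_range (fun i => (2 : ℚ) ^ (2 * i + 1) * (4 * (i : ℚ) + 1)) n,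
        Finset.prod_mul_distrib]
      congr 1
      induction n with
      | zero => simp
      | succ n ih => rw [Finset.prod_range_succ, ih, ← pow_add]; congr 1; ring
    · intro i j h
      exact br_eo_lt _ _ h
  rw [← Matrix.det_submatrix_equiv_self (Equiv.ofBijective _ (ev_bij n))]
  have : (Matrix.of fun i j : Fin (2 * n) => br (B i) (B j)).submatrix
      (Equiv.ofBijective _ (ev_bij n)) (Equiv.ofBijective _ (ev_bij n)) =
      Matrix.fromBlocks 0 A (-A.transpose) 0 := by
    ext (i | i) (j | j)
    · simp [ev, B_even, br_ee]
    · simp [ev, B_even, B_odd, A]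
    · simp [ev, B_even, B_odd, A, ← br_skew]
    · simp [ev, B_odd, br_oo]
  rw [this, det_block, hA]
  ring

end SchroederAux

/-- For every integer `n ≥ 0`, the determinant of the `2n × 2n` skew-symmetric
matrix with entries `(j-i)·S_{i+j-2}` (1-based; here 0-based, so the entry at
`(i,j)` is `(j-i)·S_{i+j}`) equals `2^{2n²}·(∏_{k=0}^{n-1} (4k+1))²`. -/
theorem det_schroeder (n : ℕ) :
    (Matrix.of fun i j : Fin (2 * n) =>
        ((j.val : ℚ) - (i.val : ℚ)) * schroeder (i.val + j.val)).det =
      2 ^ (2 * n ^ 2) * (∏ k ∈ Finset.range n, (4 * (k : ℚ) + 1)) ^ 2 := by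
  rw [SchroederAux.det_change, SchroederAux.main]
end

section
/- For all nonnegative integers i and j, the following identity of rational numbers holds: Σ_{k=0}^{min(i,j)} C(i,k)·C(j,k)·F(i−k, k+1)·F(j−k, k+1) = M_{i+j}, where F(a,c) = Σ_{m=0}^{⌊a/2⌋} C(a,2m)·C(2m,m)/C(c+m,m). (This is the terminating hypergeometric identity Σ_{k≥0} C(i,k) C(j,k) ₂F₁((k−i+1)/2,(k−i)/2; k+2; 4) ₂F₁((k−j+1)/2,(k−j)/2; k+2; 4) = ₂F₁((1−i−j)/2,(−i−j)/2; 2; 4).) -/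
/-- The `n`-th Motzkin number `M_n = ∑_{k=0}^{n} (1/(k+1))·C(n,2k)·C(2k,k)`. -/
def motzkin (n : ℕ) : ℚ :=
  ∑ k ∈ Finset.range (n + 1), (1 / ((k : ℚ) + 1)) * (n.choose (2 * k)) * ((2 * k).choose k)

/-- `F(a,c) = ∑_{m=0}^{⌊a/2⌋} C(a,2m)·C(2m,m)/C(c+m,m)`, the terminating
hypergeometric series `₂F₁(-a/2, (1-a)/2; c+1; 4)`. -/
def F (a c : ℕ) : ℚ :=
  ∑ m ∈ Finset.range (a / 2 + 1),
    ((a.choose (2 * m) : ℚ) * ((2 * m).choose m)) / ((c + m).choose m : ℚ)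

def balB (k m : ℕ) : ℚ := ((k : ℚ) + 1) * (k + 2 * m).factorial / (m.factorial * (k + m + 1).factorial)

lemma balB_zero (k : ℕ) : balB k 0 = 1 := by
  unfold balB
  have := Nat.factorial_ne_zero k
  simp only [Nat.factorial_succ, mul_zero, add_zero, Nat.factorial_zero]
  push_cast
  field_simp

lemma balB_zero_succ (m : ℕ) : balB 0 (m + 1) = balB 1 m := by
  unfold balB
  have h1 : 0 + 2 * (m + 1) = (2 * m + 1) + 1 := by ring
  have h2 : 1 + 2 * m = 2 * m + 1 := by ring
  have h3 : 0 + (m + 1) + 1 = (m + 1) + 1 := by ring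
  have h4 : 1 + m + 1 = (m + 1) + 1 := by ring
  rw [h1, h2, h3, h4]
  have := Nat.factorial_ne_zero m
  simp only [Nat.factorial_succ]
  push_cast
  field_simp
  ring

lemma balB_succ (k m : ℕ) : balB (k + 1) (m + 1) = balB k (m + 1) + balB (k + 2) m := by
  unfold balB
  have h1 : k + 1 + 2 * (m + 1) = (k + 2 * m + 2) + 1 := by ring
  have h2 : k + 2 * (m + 1) = k + 2 * m + 2 := by ring
  have h3 : k + 2 + 2 * m = k + 2 * m + 2 := by ring
  have h4 : k + 1 + (m + 1) + 1 = (k + m + 2) + 1 := by ring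
  have h5 : k + (m + 1) + 1 = k + m + 2 := by ring
  have h6 : k + 2 + m + 1 = (k + m + 2) + 1 := by ring
  rw [h1, h2, h3, h4, h5, h6, Nat.factorial_succ (k + 2 * m + 2), Nat.factorial_succ (k + m + 2),
    Nat.factorial_succ m]
  have := Nat.factorial_ne_zero m
  have := Nat.factorial_ne_zero (k + m + 2)
  push_cast
  field_simp
  ring

def motT (N n k : ℕ) : ℚ := ∑ m ∈ Finset.range N, (n.choose (k + 2 * m) : ℚ) * balB k m

lemma motT_stab (N n k : ℕ) (h : n < k + 2 * N) (d : ℕ) : motT (N + d) n k = motT N n k := by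
  unfold motT
  rw [Finset.sum_range_add]
  rw [add_eq_left]
  apply Finset.sum_eq_zero
  intro m _
  rw [Nat.choose_eq_zero_of_lt (by omega)]
  simp

lemma motT_succ (N n k : ℕ) :
    motT (N + 1) (n + 1) (k + 1) = motT (N + 1) n k + motT (N + 1) n (k + 1) + motT N n (k + 2) := by
  have e : motT (N + 1) (n + 1) (k + 1) =
      ∑ m ∈ Finset.range (N + 1), (n.choose (k + 2 * m) : ℚ) * balB (k + 1) m + motT (N + 1) n (k + 1) := by
    unfold motT
    rw [← Finset.sum_add_distrib]
    refine Finset.sum_congr rfl fun m _ => ?_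
    rw [show k + 1 + 2 * m = (k + 2 * m) + 1 by ring, Nat.choose_succ_succ]
    push_cast
    ring
  rw [e]
  have e2 : ∑ m ∈ Finset.range (N + 1), (n.choose (k + 2 * m) : ℚ) * balB (k + 1) m =
      motT (N + 1) n k + motT N n (k + 2) := by
    unfold motT
    rw [Finset.sum_range_succ', Finset.sum_range_succ' (n := N)]
    simp only [balB_zero, balB_succ, mul_add, Finset.sum_add_distrib]
    simp only [← mul_add, show ∀ x, k + 2 + 2 * x = k + (2 * x + 2 * 1) by intro x; ring]
    ring
  rw [e2]
  ring

lemma motT_succ_zero (N n : ℕ) :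
    motT (N + 1) (n + 1) 0 = motT (N + 1) n 0 + motT N n 1 := by
  unfold motT
  rw [Finset.sum_range_succ', Finset.sum_range_succ' (n := N), add_right_comm,
    ← Finset.sum_add_distrib]
  simp only [balB_zero, balB_zero_succ]
  congr 1
  · refine Finset.sum_congr rfl fun m _ => ?_
    rw [show 0 + 2 * (m + 1) = (1 + 2 * m) + 1 by ring, Nat.choose_succ_succ]
    push_cast
    ring
  · simp

def motP (n k : ℕ) : ℚ := motT (n + 1) n k

lemma motP_eq (N n k : ℕ) (h : n < k + 2 * N) : motP n k = motT N n k := by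
  unfold motP
  rw [← motT_stab (n + 1) n k (by omega) N, ← motT_stab N n k h (n + 1), add_comm]

lemma motP_succ (n k : ℕ) : motP (n + 1) (k + 1) = motP n k + motP n (k + 1) + motP n (k + 2) := by
  rw [motP_eq (n + 1 + 1) n k (by omega), motP_eq (n + 1 + 1) n (k + 1) (by omega),
    motP_eq (n + 1) n (k + 2) (by omega), motP_eq (n + 1 + 1) (n + 1) (k + 1) (by omega), motT_succ]

lemma motP_succ_zero (n : ℕ) : motP (n + 1) 0 = motP n 0 + motP n 1 := by
  rw [motP_eq (n + 1 + 1) n 0 (by omega), motP_eq (n + 1) n 1 (by omega),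
    motP_eq (n + 1 + 1) (n + 1) 0 (by omega), motT_succ_zero]

lemma motP_big (n k : ℕ) (h : n < k) : motP n k = 0 := by
  rw [motP_eq 0 n k (by omega)]
  simp [motT]

lemma mot_diff (i j N : ℕ) :
    ∑ k ∈ Finset.range (N + 1), (motP (i + 1) k * motP j k - motP i k * motP (j + 1) k) =
      motP i (N + 1) * motP j N - motP i N * motP j (N + 1) := by
  induction N with
  | zero => simp [motP_succ_zero]; ring
  | succ N ih => rw [Finset.sum_range_succ, ih, motP_succ, motP_succ]; ring

lemma mot_shift (i j N : ℕ) (hi : i < N) (hj : j < N) :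
    ∑ k ∈ Finset.range (N + 1), motP (i + 1) k * motP j k =
      ∑ k ∈ Finset.range (N + 1), motP i k * motP (j + 1) k := by
  have := mot_diff i j N
  rw [motP_big i N hi, motP_big j N hj, Finset.sum_sub_distrib] at this
  linarith

lemma mot_conv (N : ℕ) (i : ℕ) : ∀ j, i + j ≤ N →
    ∑ k ∈ Finset.range (N + 1), motP i k * motP j k = motP (i + j) 0 := by
  induction i with
  | zero =>
    intro j _
    rw [Finset.sum_range_succ', Finset.sum_eq_zero]
    · simp [motP, motT, balB_zero]
    · intro k _
      rw [motP_big 0 (k + 1) (by omega), zero_mul]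
  | succ i ih =>
    intro j h
    rcases Nat.eq_zero_or_pos i with rfl | hi
    · rcases Nat.lt_or_ge j N with hj | hj
      · rw [mot_shift 0 j N (by omega) hj, ih (j + 1) (by omega)]
        congr 1; omega
      · omega
    · rw [mot_shift i j N (by omega) (by omega), ih (j + 1) (by omega)]
      congr 1; omega

lemma mot_term (n k m : ℕ) (h : k + 2 * m ≤ n) :
    (n.choose k : ℚ) * ((((n - k).choose (2 * m) : ℚ) * ((2 * m).choose m)) / ((k + 1 + m).choose m : ℚ))
      = (n.choose (k + 2 * m) : ℚ) * balB k m := by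
  obtain ⟨d, rfl⟩ := Nat.exists_eq_add_of_le h
  unfold balB
  rw [show k + 2 * m + d - k = 2 * m + d by omega]
  rw [Nat.cast_choose ℚ (show k ≤ k + 2 * m + d by omega),
    Nat.cast_choose ℚ (show 2 * m ≤ 2 * m + d by omega),
    Nat.cast_choose ℚ (show m ≤ 2 * m by omega),
    Nat.cast_choose ℚ (show m ≤ k + 1 + m by omega),
    Nat.cast_choose ℚ (show k + 2 * m ≤ k + 2 * m + d by omega)]
  rw [show k + 2 * m + d - k = 2 * m + d by omega, show 2 * m + d - 2 * m = d by omega,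
    show 2 * m - m = m by omega, show k + 1 + m - m = k + 1 by omega,
    show k + 2 * m + d - (k + 2 * m) = d by omega, show k + 1 + m = k + m + 1 by ring,
    Nat.factorial_succ k]
  have := Nat.factorial_ne_zero m
  have := Nat.factorial_ne_zero k
  have := Nat.factorial_ne_zero d
  have := Nat.factorial_ne_zero (k + m + 1)
  have := Nat.factorial_ne_zero (2 * m)
  have := Nat.factorial_ne_zero (2 * m + d)
  have := Nat.factorial_ne_zero (k + 2 * m)
  push_cast
  field_simp

lemma F_motP (n k : ℕ) (h : k ≤ n) : (n.choose k : ℚ) * F (n - k) (k + 1) = motP n k := by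
  rw [motP_eq ((n - k) / 2 + 1) n k (by omega)]
  unfold F motT
  rw [Finset.mul_sum]
  refine Finset.sum_congr rfl fun m hm => ?_
  rw [Finset.mem_range] at hm
  exact mot_term n k m (by omega)

lemma motzkin_motP (n : ℕ) : motzkin n = motP n 0 := by
  unfold motzkin motP motT
  refine Finset.sum_congr rfl fun m hm => ?_
  unfold balB
  rw [Nat.cast_choose ℚ (show m ≤ 2 * m by omega), show 2 * m - m = m by omega]
  simp only [zero_add, Nat.factorial_succ]
  have := Nat.factorial_ne_zero m
  push_cast
  field_simp
  ring

/-- The terminating hypergeometric identity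
`∑_{k=0}^{min(i,j)} C(i,k)·C(j,k)·F(i-k,k+1)·F(j-k,k+1) = M_{i+j}`. -/
theorem hypergeometric_motzkin (i j : ℕ) :
    ∑ k ∈ Finset.range (min i j + 1),
        (i.choose k : ℚ) * (j.choose k : ℚ) * F (i - k) (k + 1) * F (j - k) (k + 1) =
      motzkin (i + j) := by
  rw [motzkin_motP, ← mot_conv (i + j) i j le_rfl]
  rw [show i + j + 1 = (min i j + 1) + max i j by have := min_add_max i j; omega,
    Finset.sum_range_add _ (min i j + 1) (max i j)]
  rw [Finset.sum_eq_zero (s := Finset.range (max i j)), add_zero]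
  · refine Finset.sum_congr rfl fun k hk => ?_
    rw [Finset.mem_range] at hk
    rw [← F_motP i k (by omega), ← F_motP j k (by omega)]
    ring
  · intro k _
    rcases le_total i j with h | h
    · rw [motP_big i _ (by omega), zero_mul]
    · rw [motP_big j _ (by omega), mul_zero]
end

section
/- Let n be a positive integer and let H(2n) = (h(i,j))_{1 ≤ i ≤ 2n, j ≥ 1}. Then Σ_λ det H(2n)_{I_{2n}(λ)} = ∏_{k=0}^{n−1} (4k+1), where the sum runs over all partitions λ of length at most 2n such that every part of λ is even and every part of the conjugate partition λ' is even, I_{2n}(λ) = {λ_{2n}+1, λ_{2n−1}+2, …, λ_1+2n}, and H(2n)_{I_{2n}(λ)} is the 2n×2n submatrix of H(2n) formed by the columns indexed by I_{2n}(λ). -/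
/-- The entries (with 1-based indices `i, j ≥ 1`) of the matrix `H`:
`h(i,2k-1) = C(i-1,k-1)·F(i-k,k)` and `h(i,2k) = (i-1)·C(i-2,k-1)·F(i-k-1,k)`.
(When the binomial prefactor vanishes the entry is `0`, so the truncated
natural subtraction in the first argument of `F` is harmless.) -/
def hEnt (i j : ℕ) : ℚ :=
  if j % 2 = 1 then
    ((i - 1).choose ((j + 1) / 2 - 1) : ℚ) * F (i - (j + 1) / 2) ((j + 1) / 2)
  else
    ((i : ℚ) - 1) * ((i - 2).choose (j / 2 - 1) : ℚ) * F (i - j / 2 - 1) (j / 2)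

open Finset Nat in
def tTerm (i j m : ℕ) : ℚ :=
  if j + 2 * m ≤ i then (i ! : ℚ) / ((i - j - 2 * m)! * m ! * (m + j)!) else 0

def Tc (i j : ℕ) : ℚ := ∑ m ∈ Finset.range (i + 1), tTerm i j m

open Nat in
def qTerm (i l m : ℕ) : ℚ :=
  if l + 2 * m ≤ i then (i ! : ℚ) * (l + 1) / ((i - l - 2 * m)! * m ! * (m + l + 1)!) else 0

open Nat in
lemma choose_F (a l : ℕ) : ((l + a).choose l : ℚ) * F a (l + 1) =
    ∑ m ∈ Finset.range (l + a + 1), qTerm (l + a) l m := by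
  unfold F
  rw [Finset.mul_sum]
  have hsub : Finset.range (a / 2 + 1) ⊆ Finset.range (l + a + 1) := by
    intro x; simp only [Finset.mem_range]; omega
  rw [← Finset.sum_subset hsub]
  · refine Finset.sum_congr rfl fun m hm => ?_
    simp only [Finset.mem_range] at hm
    obtain ⟨b, rfl⟩ : ∃ b, a = 2 * m + b := ⟨a - 2 * m, by omega⟩
    unfold qTerm
    rw [if_pos (by omega)]
    rw [show l + (2 * m + b) - l - 2 * m = b by omega]
    rw [Nat.cast_add_choose, Nat.cast_add_choose]
    rw [show 2 * m = m + m by ring, Nat.cast_add_choose]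
    rw [show l + 1 + m = m + (l + 1) by ring, Nat.cast_add_choose]
    rw [show m + l + 1 = m + (l + 1) by ring, Nat.factorial_succ l]
    have h1 := fun k : ℕ => (Nat.cast_ne_zero (R := ℚ)).mpr (Nat.factorial_ne_zero k)
    have h2 := h1 l
    have h3 := h1 m
    have h4 := h1 b
    have h5 := h1 (m + m)
    have h6 := h1 (m + m + b)
    have h7 := h1 (m + (l + 1))
    have h8 : (l : ℚ) + 1 ≠ 0 := by positivity
    push_cast
    field_simp
  · intro m _ hm
    simp only [Finset.mem_range] at hm
    unfold qTerm
    rw [if_neg (by omega)]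

lemma q_eq (i l m : ℕ) : qTerm i l (m + 1) = tTerm i l (m + 1) - tTerm i (l + 2) m := by
  unfold qTerm tTerm
  by_cases h : l + 2 * (m + 1) ≤ i
  · rw [if_pos h, if_pos h, if_pos (by omega)]
    rw [show i - (l + 2) - 2 * m = i - l - 2 * (m + 1) by omega]
    rw [show m + 1 + l + 1 = (m + l + 1) + 1 by ring, show m + 1 + l = m + l + 1 by ring,
      show m + (l + 2) = (m + l + 1) + 1 by ring, Nat.factorial_succ (m + l + 1),
      Nat.factorial_succ m]
    have h1 := fun k : ℕ => (Nat.cast_ne_zero (R := ℚ)).mpr (Nat.factorial_ne_zero k)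
    have h2 := h1 m
    have h3 := h1 (m + l + 1)
    have h4 := h1 (i - l - 2 * (m + 1))
    push_cast
    field_simp
    ring
  · rw [if_neg h, if_neg h, if_neg (by omega)]; simp

lemma q_zero (i l : ℕ) : qTerm i l 0 = tTerm i l 0 := by
  unfold qTerm tTerm
  split_ifs
  · rw [show 0 + l + 1 = l + 1 by ring, show 0 + l = l by ring, Nat.factorial_succ l]
    have h1 := fun k : ℕ => (Nat.cast_ne_zero (R := ℚ)).mpr (Nat.factorial_ne_zero k)
    have h2 := h1 l
    have h4 := h1 (i - l - 2 * 0)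
    push_cast
    field_simp
  · rfl

lemma sum_q (i l : ℕ) : ∑ m ∈ Finset.range (i + 1), qTerm i l m = Tc i l - Tc i (l + 2) := by
  have e1 : ∑ m ∈ Finset.range (i + 1), qTerm i l m = ∑ m ∈ Finset.range (i + 2), qTerm i l m := by
    rw [Finset.sum_range_succ _ (i + 1)]
    simp only [qTerm]
    rw [if_neg (show ¬ (l + 2 * (i + 1) ≤ i) by omega)]; simp
  have e2 : Tc i l = ∑ m ∈ Finset.range (i + 2), tTerm i l m := by
    rw [Finset.sum_range_succ _ (i + 1)]
    unfold Tc
    simp only [tTerm]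
    rw [if_neg (show ¬ (l + 2 * (i + 1) ≤ i) by omega)]; simp
  rw [e1, e2, Finset.sum_range_succ', Finset.sum_range_succ' _ (i + 1), q_zero]
  unfold Tc
  rw [Finset.sum_congr rfl fun m _ => q_eq i l m, Finset.sum_sub_distrib]
  ring

lemma q_even (i l m : ℕ) : ((i : ℚ) + 1) * qTerm i l m = (l + 1) * tTerm (i + 1) (l + 1) m := by
  unfold qTerm tTerm
  by_cases h : l + 2 * m ≤ i
  · rw [if_pos h, if_pos (by omega)]
    rw [show i + 1 - (l + 1) - 2 * m = i - l - 2 * m by omega, Nat.factorial_succ i,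
      show m + (l + 1) = m + l + 1 by ring]
    push_cast
    ring
  · rw [if_neg h, if_neg (by omega)]; simp

lemma Tc_zero {i j : ℕ} (h : i < j) : Tc i j = 0 := by
  unfold Tc
  refine Finset.sum_eq_zero fun m _ => ?_
  unfold tTerm
  rw [if_neg (by omega)]

lemma Tc_diag (i : ℕ) : Tc i i = 1 := by
  unfold Tc
  rw [Finset.sum_range_succ', Finset.sum_eq_zero]
  · unfold tTerm
    rw [if_pos (by omega)]
    have h1 := (Nat.cast_ne_zero (R := ℚ)).mpr (Nat.factorial_ne_zero i)
    simp [h1]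
  · intro m _
    unfold tTerm
    rw [if_neg (by omega)]

lemma hodd (i l : ℕ) : hEnt (i + 1) (2 * l + 1) = Tc i l - Tc i (l + 2) := by
  unfold hEnt
  rw [if_pos (by omega), show (2 * l + 1 + 1) / 2 = l + 1 by omega]
  simp only [Nat.add_sub_cancel, Nat.add_sub_add_right]
  by_cases h : l ≤ i
  · obtain ⟨a, rfl⟩ := Nat.exists_eq_add_of_le h
    rw [show l + a - l = a by omega, choose_F, sum_q]
  · rw [Tc_zero (by omega), Tc_zero (by omega), Nat.choose_eq_zero_of_lt (by omega)]; simp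

lemma heven (i l : ℕ) : hEnt (i + 1) (2 * l + 2) = (l + 1) * Tc i (l + 1) := by
  unfold hEnt
  rw [if_neg (by omega), show (2 * l + 2) / 2 = l + 1 by omega]
  by_cases h : l + 1 ≤ i
  · obtain ⟨a, rfl⟩ := Nat.exists_eq_add_of_le h
    rw [show l + 1 + a + 1 - (l + 1) - 1 = a by omega, show l + 1 + a + 1 - 2 = l + a by omega,
      Nat.add_sub_cancel, mul_assoc, choose_F]
    unfold Tc
    rw [show l + 1 + a = l + a + 1 by ring, Finset.sum_range_succ _ (l + a + 1)]
    have : tTerm (l + a + 1) (l + 1) (l + a + 1) = 0 := by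
      unfold tTerm; rw [if_neg (by omega)]
    rw [this, add_zero, Finset.mul_sum, Finset.mul_sum]
    refine Finset.sum_congr rfl fun m _ => ?_
    rw [← q_even]; push_cast; ring
  · rw [Tc_zero (by omega)]
    rcases Nat.eq_zero_or_pos i with rfl | hi
    · simp
    · rw [Nat.choose_eq_zero_of_lt (by omega)]; simp

def Gd {n : ℕ} {K : Type} (M : Matrix (Fin n × Fin 2) (K × Fin 2) ℚ) (a : Fin n → K) : ℚ :=
  (Matrix.of fun r c : Fin n × Fin 2 => M r (a c.1, c.2)).det

lemma Gd_perm {n : ℕ} {K : Type} (M : Matrix (Fin n × Fin 2) (K × Fin 2) ℚ) (a : Fin n → K)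
    (π : Equiv.Perm (Fin n)) : Gd M (a ∘ π) = Gd M a := by
  unfold Gd
  have h := Matrix.det_permute' (Equiv.prodCongrLeft (fun _ : Fin 2 => π))
    (Matrix.of fun r c : Fin n × Fin 2 => M r (a c.1, c.2))
  rw [Equiv.Perm.sign_prodCongrLeft] at h
  simp only [Finset.prod_const, Finset.card_univ, Fintype.card_fin, Int.units_sq, Units.val_one,
    Int.cast_one, one_mul] at h
  rw [← h]
  rfl

lemma Gd_not_inj {n : ℕ} {K : Type} (M : Matrix (Fin n × Fin 2) (K × Fin 2) ℚ) (a : Fin n → K)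
    (h : ¬ Function.Injective a) : Gd M a = 0 := by
  unfold Function.Injective at h
  push Not at h
  obtain ⟨i, j, h1, h2⟩ := h
  refine Matrix.det_zero_of_column_eq (i := (i, 0)) (j := (j, 0)) (by simpa using h2) ?_
  intro k
  simp [h1]

lemma sum_all_eq {n N : ℕ} (M : Matrix (Fin n × Fin 2) (Fin N × Fin 2) ℚ) :
    ∑ a : Fin n → Fin N, Gd M a =
      (n.factorial : ℚ) * ∑ a : {a : Fin n → Fin N // StrictMono a}, Gd M a.1 := by
  classical
  have h1 : ∑ a : Fin n → Fin N, Gd M a =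
      ∑ a ∈ Finset.univ.filter (fun a : Fin n → Fin N => Function.Injective a), Gd M a := by
    rw [Finset.sum_filter]
    refine Finset.sum_congr rfl fun a _ => ?_
    split_ifs with h
    · rfl
    · exact Gd_not_inj M a h
  have h2 : ∑ x : {a : Fin n → Fin N // StrictMono a} × Equiv.Perm (Fin n), Gd M x.1.1 =
      ∑ a ∈ Finset.univ.filter (fun a : Fin n → Fin N => Function.Injective a), Gd M a := by
    refine Finset.sum_bij (fun x _ => x.1.1 ∘ x.2) ?_ ?_ ?_ ?_
    · rintro ⟨⟨a, ha⟩, π⟩ _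
      simp only [Finset.mem_filter, Finset.mem_univ, true_and]
      exact ha.injective.comp π.injective
    · rintro ⟨⟨a, ha⟩, π⟩ _ ⟨⟨b, hb⟩, ρ⟩ _ h
      simp only at h
      have hr : Set.range a = Set.range b := by
        rw [← π.surjective.range_comp a, ← ρ.surjective.range_comp b, h]
      have hab : a = b := (StrictMono.range_inj ha hb).mp hr
      subst hab
      have : π = ρ := by
        ext i
        exact congrArg Fin.val (ha.injective (congrFun h i))
      subst this
      rfl
    · intro a ha
      simp only [Finset.mem_filter, Finset.mem_univ, true_and] at ha
      refine ⟨(⟨a ∘ Tuple.sort a, (Tuple.monotone_sort a).strictMono_of_injective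
        (ha.comp (Tuple.sort a).injective)⟩, (Tuple.sort a)⁻¹), Finset.mem_univ _, ?_⟩
      ext i
      simp
    · rintro ⟨⟨a, ha⟩, π⟩ _
      exact (Gd_perm M a π).symm
  rw [h1, ← h2, Fintype.sum_prod_type]
  simp [Finset.mul_sum, Fintype.card_perm]

def Phi {n : ℕ} (B : Fin n → (Fin n × Fin 2) → (Fin n × Fin 2) → ℚ) : ℚ :=
  ∑ σ : Equiv.Perm (Fin n × Fin 2), ((Equiv.Perm.sign σ : ℤ) : ℚ) *
    ∏ k, B k (σ (k, 0)) (σ (k, 1))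

lemma sum_all_Phi {n N : ℕ} (M : Matrix (Fin n × Fin 2) (Fin N × Fin 2) ℚ) :
    ∑ a : Fin n → Fin N, Gd M a = Phi fun _ r s => ∑ l, M r (l, 0) * M s (l, 1) := by
  unfold Gd Phi
  simp only [Matrix.det_apply']
  rw [Finset.sum_comm]
  refine Finset.sum_congr rfl fun σ _ => ?_
  rw [← Finset.mul_sum]
  congr 1
  rw [Finset.prod_univ_sum, Fintype.piFinset_univ]
  refine Finset.sum_congr rfl fun a _ => ?_
  rw [Fintype.prod_prod_type]
  simp

lemma Phi_symm {n : ℕ} (B : Fin n → (Fin n × Fin 2) → (Fin n × Fin 2) → ℚ) (k : Fin n)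
    (h : ∀ r s, B k r s = B k s r) : Phi B = 0 := by
  have : Phi B = - Phi B := by
    conv_lhs => unfold Phi
    rw [← Equiv.sum_comp (Equiv.mulRight (Equiv.swap (k, (0 : Fin 2)) (k, 1)))]
    unfold Phi
    rw [← Finset.sum_neg_distrib]
    refine Finset.sum_congr rfl fun σ _ => ?_
    have hs : Equiv.Perm.sign (σ * Equiv.swap (k, (0 : Fin 2)) (k, 1)) = - Equiv.Perm.sign σ := by
      rw [Equiv.Perm.sign_mul, Equiv.Perm.sign_swap (by simp)]; simp
    simp only [Equiv.coe_mulRight, hs]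
    have hp : ∏ j, B j ((σ * Equiv.swap (k, (0 : Fin 2)) (k, 1)) (j, 0))
        ((σ * Equiv.swap (k, (0 : Fin 2)) (k, 1)) (j, 1)) = ∏ j, B j (σ (j, 0)) (σ (j, 1)) := by
      refine Finset.prod_congr rfl fun j _ => ?_
      simp only [Equiv.Perm.mul_apply]
      by_cases hj : j = k
      · subst hj
        rw [Equiv.swap_apply_left, Equiv.swap_apply_right, h]
      · rw [Equiv.swap_apply_of_ne_of_ne, Equiv.swap_apply_of_ne_of_ne] <;> simp [hj]
    rw [hp]
    push_cast
    ring
  linarith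

lemma Phi_congr {n : ℕ} (B C : (Fin n × Fin 2) → (Fin n × Fin 2) → ℚ)
    (h : ∀ r s, B r s - C r s = B s r - C s r) :
    Phi (fun _ : Fin n => B) = Phi (fun _ => C) := by
  classical
  have key : ∀ t : Finset (Fin n), Phi (fun k => if k ∈ t then B else C) = Phi (fun _ => C) := by
    intro t
    induction t using Finset.induction_on with
    | empty => simp
    | insert k t hk ih =>
      rw [← ih, ← sub_eq_zero]
      rw [← Phi_symm (fun j => if j = k then (fun r s => B r s - C r s)
        else if j ∈ t then B else C) k (by simpa using h)]
      unfold Phi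
      rw [← Finset.sum_sub_distrib]
      refine Finset.sum_congr rfl fun σ _ => ?_
      rw [← mul_sub]
      congr 1
      rw [← Finset.mul_prod_erase _ _ (Finset.mem_univ k),
        ← Finset.mul_prod_erase _ _ (Finset.mem_univ k),
        ← Finset.mul_prod_erase _ _ (Finset.mem_univ k)]
      have e1 : ∏ x ∈ Finset.univ.erase k, (if x ∈ insert k t then B else C) (σ (x, 0)) (σ (x, 1))
          = ∏ x ∈ Finset.univ.erase k, (if x ∈ t then B else C) (σ (x, 0)) (σ (x, 1)) := by
        refine Finset.prod_congr rfl fun x hx => ?_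
        simp [Finset.ne_of_mem_erase hx]
      have e2 : ∏ x ∈ Finset.univ.erase k, (if x = k then (fun r s => B r s - C r s)
          else if x ∈ t then B else C) (σ (x, 0)) (σ (x, 1))
          = ∏ x ∈ Finset.univ.erase k, (if x ∈ t then B else C) (σ (x, 0)) (σ (x, 1)) := by
        refine Finset.prod_congr rfl fun x hx => ?_
        simp [Finset.ne_of_mem_erase hx]
      rw [e1, e2]
      simp [hk]
      ring
  have := key Finset.univ
  simpa using this

lemma sum_strict_congr {n N : ℕ} (M M' : Matrix (Fin n × Fin 2) (Fin N × Fin 2) ℚ)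
    (h : ∀ r s, (∑ l, M r (l, 0) * M s (l, 1)) - (∑ l, M' r (l, 0) * M' s (l, 1)) =
      (∑ l, M s (l, 0) * M r (l, 1)) - (∑ l, M' s (l, 0) * M' r (l, 1))) :
    ∑ a : {a : Fin n → Fin N // StrictMono a}, Gd M a.1 =
    ∑ a : {a : Fin n → Fin N // StrictMono a}, Gd M' a.1 := by
  have h1 := Phi_congr (fun r s => ∑ l, M r (l, 0) * M s (l, 1))
    (fun r s => ∑ l, M' r (l, 0) * M' s (l, 1)) h
  rw [← sum_all_Phi, ← sum_all_Phi, sum_all_eq, sum_all_eq] at h1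
  exact mul_left_cancel₀ (by exact_mod_cast n.factorial_ne_zero) h1

def rv {n : ℕ} (r : Fin n × Fin 2) : ℕ := 2 * r.1.val + r.2.val

lemma rv_lt {n : ℕ} (r : Fin n × Fin 2) : rv r < 2 * n := by
  have := r.1.isLt; have := r.2.isLt; unfold rv; omega

lemma rv_inj {n : ℕ} {r s : Fin n × Fin 2} (h : rv r = rv s) : r = s := by
  have := r.2.isLt; have := s.2.isLt
  unfold rv at h
  ext <;> omega

def e2 (n : ℕ) : Fin n × Fin 2 ≃ Fin (2 * n) where
  toFun r := ⟨rv r, rv_lt r⟩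
  invFun j := (⟨j.val / 2, by have := j.isLt; omega⟩, ⟨j.val % 2, by omega⟩)
  left_inv r := by
    apply rv_inj; simp only [rv]; omega
  right_inv j := by
    ext; simp only [rv]; omega

lemma e2_val {n : ℕ} (r : Fin n × Fin 2) : ((e2 n r : Fin (2 * n)) : ℕ) = rv r := rfl

lemma sum_rv {n : ℕ} (g : ℕ → ℚ) : ∑ r : Fin n × Fin 2, g (rv r) = ∑ j ∈ Finset.range (2 * n), g j := by
  rw [← Fin.sum_univ_eq_sum_range, ← Equiv.sum_comp (e2 n)]
  rfl

def HM (n : ℕ) : Matrix (Fin n × Fin 2) (Fin (2 * n) × Fin 2) ℚ :=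
  fun r c => hEnt (rv r + 1) (2 * c.1.val + c.2.val + 1)

def H1 (n : ℕ) : Matrix (Fin n × Fin 2) (Fin (2 * n) × Fin 2) ℚ :=
  fun r c => if c.2 = 0 then (if rv r = c.1.val then 1 else 0) - (if rv r = c.1.val + 2 then 1 else 0)
    else (if rv r = c.1.val + 1 then (c.1.val : ℚ) + 1 else 0)

def H2 (n : ℕ) : Matrix (Fin n × Fin 2) (Fin (2 * n) × Fin 2) ℚ :=
  fun r c => if c.2 = 0 then (if rv r = c.1.val then 1 else 0)
    else (if rv r = c.1.val + 1 then 2 * (c.1.val : ℚ) + 1 else 0)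

lemma det_P (n : ℕ) : (Matrix.of fun r s : Fin n × Fin 2 => Tc (rv r) (rv s)).det = 1 := by
  have h : (Matrix.of fun r s : Fin n × Fin 2 => Tc (rv r) (rv s)) =
    (Matrix.of fun i j : Fin (2 * n) => Tc i.val j.val).submatrix (e2 n) (e2 n) := rfl
  rw [h, Matrix.det_submatrix_equiv_self, Matrix.det_of_isLowerTriangular]
  · simp [Tc_diag]
  · intro i j hij
    have : i < j := hij
    exact Tc_zero this

lemma Gd_HM (n : ℕ) (a : Fin n → Fin (2 * n)) : Gd (HM n) a = Gd (H1 n) a := by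
  unfold Gd
  symm
  rw [← one_mul (Matrix.det _), ← det_P n, ← Matrix.det_mul]
  congr 1
  ext r ⟨k, c⟩
  rw [Matrix.mul_apply]
  simp only [Matrix.of_apply, HM, H1]
  have hr := rv_lt r
  obtain rfl | rfl : c = 0 ∨ c = 1 := by omega
  · simp only [Fin.val_zero, add_zero, if_true]
    rw [sum_rv (fun j => Tc (rv r) j * ((if j = (a k).val then 1 else 0) -
      (if j = (a k).val + 2 then 1 else 0))), hodd]
    simp only [mul_sub, Finset.sum_sub_distrib, mul_ite, mul_one, mul_zero, Finset.sum_ite_eq',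
      Finset.mem_range]
    rw [if_pos (a k).isLt]
    split_ifs with h2
    · rfl
    · rw [Tc_zero (i := rv r) (j := (a k).val + 2) (by omega)]
  · simp only [Fin.val_one, one_ne_zero, if_false]
    rw [sum_rv (fun j => Tc (rv r) j * (if j = (a k).val + 1 then ((a k).val : ℚ) + 1 else 0)),
      heven]
    simp only [mul_ite, mul_zero, Finset.sum_ite_eq', Finset.mem_range]
    split_ifs with h2
    · ring
    · rw [Tc_zero (by omega)]; simp

lemma sum_l {n S : ℕ} (hS : S < 2 * n) (f g : ℕ → ℚ) :
    ∑ l : Fin (2 * n), f l.val * (if S = l.val + 1 then g l.val else 0) =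
      if S = 0 then 0 else f (S - 1) * g (S - 1) := by
  rw [Fin.sum_univ_eq_sum_range (fun l => f l * (if S = l + 1 then g l else 0)) (2 * n)]
  rcases S with _ | S
  · simp
  · simp only [Nat.add_right_cancel_iff, mul_ite, mul_zero, Finset.sum_ite_eq, Finset.mem_range]
    rw [if_pos (by omega)]; simp

lemma sum_H1_H2 (n : ℕ) :
    ∑ a : {a : Fin n → Fin (2 * n) // StrictMono a}, Gd (H1 n) a.1 =
    ∑ a : {a : Fin n → Fin (2 * n) // StrictMono a}, Gd (H2 n) a.1 := by
  apply sum_strict_congr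
  intro r s
  have e1 : ∀ r s : Fin n × Fin 2, ∑ l, H1 n r (l, 0) * H1 n s (l, 1) =
      if rv s = 0 then 0 else ((if rv r = rv s - 1 then 1 else 0) -
        (if rv r = rv s - 1 + 2 then 1 else 0)) * (((rv s - 1 : ℕ) : ℚ) + 1) := by
    intro r s
    rw [← sum_l (rv_lt s) (fun l => (if rv r = l then 1 else 0) - (if rv r = l + 2 then 1 else 0))
      (fun l => (l : ℚ) + 1)]
    simp [H1]
  have e2 : ∀ r s : Fin n × Fin 2, ∑ l, H2 n r (l, 0) * H2 n s (l, 1) =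
      if rv s = 0 then 0 else (if rv r = rv s - 1 then 1 else 0)
         * (2 * ((rv s - 1 : ℕ) : ℚ) + 1) := by
    intro r s
    rw [← sum_l (rv_lt s) (fun l => (if rv r = l then 1 else 0))
      (fun l => 2 * (l : ℚ) + 1)]
    simp [H2]
  rw [e1, e1, e2, e2]
  generalize rv r = R
  generalize rv s = S
  rcases R with _ | R <;> rcases S with _ | S
  · simp
  · simp
    rcases S with _ | S <;> simp
  · simp
    rcases R with _ | R <;> simp
  · simp only [Nat.add_sub_cancel, Nat.add_eq_zero_iff, one_ne_zero, and_false, if_false]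
    by_cases h1 : R + 1 = S
    · subst h1
      rw [if_pos rfl, if_neg (by omega), if_neg (by omega), if_pos (by omega)]
      push_cast; ring
    · by_cases h2 : S + 1 = R
      · subst h2
        rw [if_neg (by omega), if_pos (by omega), if_pos rfl, if_neg (by omega)]
        push_cast; ring
      · rw [if_neg (by omega), if_neg (by omega), if_neg (by omega), if_neg (by omega)]
        simp

lemma step_bound {n d : ℕ} (a : Fin n → ℕ)
    (h : ∀ k k' : Fin n, k.val + 1 = k'.val → a k + d ≤ a k') (k k' : Fin n) (hk : k ≤ k') :
    a k + d * (k'.val - k.val) ≤ a k' := by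
  obtain ⟨m, hm⟩ := Nat.exists_eq_add_of_le (show k.val ≤ k'.val from hk)
  induction m generalizing k' with
  | zero => have : k = k' := by ext; omega
            subst this; simp
  | succ m ih =>
    have hlt : k.val + m < n := by have := k'.isLt; omega
    have h1 := ih ⟨k.val + m, hlt⟩ (by simp [Fin.le_def]) rfl
    have h2 := h ⟨k.val + m, hlt⟩ k' (by simp; omega)
    simp only [Nat.add_sub_cancel_left] at h1
    rw [hm, Nat.add_sub_cancel_left, mul_add]
    omega

def a0 (n : ℕ) : Fin n → Fin (2 * n) := fun k => ⟨2 * k.val, by have := k.isLt; omega⟩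

lemma H2_unique (n : ℕ) (a : Fin n → Fin (2 * n)) (ha : StrictMono a) (h : Gd (H2 n) a ≠ 0) :
    a = a0 n := by
  unfold Gd at h
  rw [Matrix.det_apply'] at h
  obtain ⟨σ, _, hσ⟩ := Finset.exists_ne_zero_of_sum_ne_zero h
  have hp := (Finset.prod_ne_zero_iff.mp (right_ne_zero_of_mul hσ))
  have s0 : ∀ k, rv (σ (k, 0)) = a k := by
    intro k
    have := hp (k, 0) (Finset.mem_univ _)
    by_contra hc
    simp [H2, hc] at this
  have s1 : ∀ k, rv (σ (k, 1)) = a k + 1 := by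
    intro k
    have := hp (k, 1) (Finset.mem_univ _)
    by_contra hc
    simp [H2, hc] at this
  have hstep : ∀ k k' : Fin n, k.val + 1 = k'.val → (a k).val + 2 ≤ (a k').val := by
    intro k k' hk
    have h1 : (a k).val < (a k').val := ha (by rw [Fin.lt_def]; omega)
    have h2 : (a k).val + 1 ≠ (a k').val := by
      intro hc
      rw [← s1, ← s0] at hc
      have := σ.injective (rv_inj hc)
      simp at this
    omega
  have hb := step_bound (fun k => (a k).val) hstep
  ext k
  have hk := k.isLt
  have h1 := hb ⟨0, by omega⟩ k (by simp [Fin.le_def])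
  have h2 := hb k ⟨n - 1, by omega⟩ (by rw [Fin.le_def]; simp; omega)
  have h3 := s1 ⟨n - 1, by omega⟩
  have h4 := rv_lt (σ (⟨n - 1, by omega⟩, 1))
  simp only [a0] at *
  omega

lemma sum_H2 (n : ℕ) : ∑ a : {a : Fin n → Fin (2 * n) // StrictMono a}, Gd (H2 n) a.1 =
    ∏ k ∈ Finset.range n, (4 * (k : ℚ) + 1) := by
  have hm : StrictMono (a0 n) := by
    intro k k' h
    have : k.val < k'.val := h
    simp only [a0, Fin.lt_def]; omega
  rw [Finset.sum_eq_single ⟨a0 n, hm⟩]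
  · unfold Gd
    have : (Matrix.of fun r c : Fin n × Fin 2 => H2 n r ((a0 n) c.1, c.2)) =
        Matrix.diagonal (fun c : Fin n × Fin 2 => if c.2 = 0 then 1 else 4 * (c.1.val : ℚ) + 1) := by
      ext r ⟨k, c⟩
      rw [Matrix.diagonal_apply]
      obtain rfl | rfl : c = 0 ∨ c = 1 := by omega
      · by_cases hr : rv r = 2 * k.val
        · have : r = (k, 0) := rv_inj hr
          subst this
          simp [H2, a0, rv]
        · have hr' : r ≠ (k, 0) := by rintro rfl; exact hr rfl
          simp [H2, a0, hr, hr']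
      · by_cases hr : rv r = 2 * k.val + 1
        · have : r = (k, 1) := rv_inj hr
          subst this
          simp [H2, a0, rv]; ring
        · have hr' : r ≠ (k, 1) := by rintro rfl; exact hr rfl
          simp [H2, a0, hr, hr']
    simp only [this]
    rw [Matrix.det_diagonal, Fintype.prod_prod_type,
      ← Fin.prod_univ_eq_prod_range (fun k => 4 * (k : ℚ) + 1)]
    simp
  · rintro ⟨a, ha⟩ _ hne
    by_contra hc
    exact hne (Subtype.ext (H2_unique n a ha hc))
  · intro h; exact absurd (Finset.mem_univ _) h

def GoodPart (n : ℕ) (f : Fin (2 * n) → ℕ) : Prop := Antitone f ∧ (∀ r, Even (f r)) ∧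
        ∀ i : ℕ, 1 ≤ i →
          Even ((Finset.univ.filter fun j : Fin (2 * n) => i ≤ f j).card)

def psi (n : ℕ) (a : Fin n → Fin (2 * n)) : Fin (2 * n) → ℕ := fun j =>
  2 * ((a ((e2 n).symm j.rev).1).val - ((e2 n).symm j.rev).1.val)

lemma sm_bound {n N : ℕ} {a : Fin n → Fin N} (ha : StrictMono a) (k k' : Fin n) (h : k ≤ k') :
    (a k).val + (k'.val - k.val) ≤ (a k').val := by
  have := step_bound (d := 1) (fun k => (a k).val)
    (fun k k' hk => (show (a k).val < (a k').val from ha (by rw [Fin.lt_def]; omega))) k k' h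
  simpa using this

lemma sm_ge {n N : ℕ} {a : Fin n → Fin N} (ha : StrictMono a) (k : Fin n) : k.val ≤ (a k).val := by
  have hk := k.isLt
  have := sm_bound ha ⟨0, by omega⟩ k (by simp [Fin.le_def])
  simp at this
  omega

lemma psi_mem {n : ℕ} {a : Fin n → Fin (2 * n)} (ha : StrictMono a) : GoodPart n (psi n a) := by
  refine ⟨?_, ?_, ?_⟩
  · intro j j' h
    unfold psi
    have h1 : ((e2 n).symm j'.rev).1 ≤ ((e2 n).symm j.rev).1 := by
      have : j.val ≤ j'.val := h
      rw [Fin.le_def]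
      simp only [e2, Equiv.coe_fn_symm_mk, Fin.val_rev]
      omega
    have h2 := sm_bound ha _ _ h1
    have h3 : ((e2 n).symm j'.rev).1.val ≤ ((e2 n).symm j.rev).1.val := h1
    omega
  · intro r
    exact even_two_mul _
  · intro i _
    rw [Finset.card_filter, ← Equiv.sum_comp (e2 n), ← Equiv.sum_comp ((e2 n).trans (Fin.revPerm.trans (e2 n).symm))]
    rw [Fintype.sum_prod_type]
    simp [psi]
    refine Finset.even_sum _ fun x _ => ?_
    split_ifs <;> simp

lemma entry_zero {r c m : ℕ} (hc : c < 2) (h : r < m) : hEnt (r + 1) (2 * m + c + 1) = 0 := by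
  obtain rfl | rfl : c = 0 ∨ c = 1 := by omega
  · rw [add_zero, hodd, Tc_zero h, Tc_zero (by omega)]; simp
  · rw [heven, Tc_zero (by omega)]; simp

lemma pair_eq {n : ℕ} {p : Fin (2 * n) → ℕ} (hp : GoodPart n p) (k : Fin n) :
    p (e2 n (k, 1)).rev = p (e2 n (k, 0)).rev := by
  obtain ⟨h1, h2, h3⟩ := hp
  have hle : p (e2 n (k, 0)).rev ≤ p (e2 n (k, 1)).rev := h1 (by
    rw [Fin.rev_le_rev, Fin.le_def, e2_val, e2_val]; simp [rv])
  by_contra hne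
  have hlt : p (e2 n (k, 0)).rev < p (e2 n (k, 1)).rev := by omega
  have h4 := h3 (p (e2 n (k, 1)).rev) (by omega)
  have h5 : (Finset.univ.filter fun j : Fin (2 * n) => p (e2 n (k, 1)).rev ≤ p j) =
      Finset.Iic (e2 n (k, 1)).rev := by
    ext j
    simp only [Finset.mem_filter, Finset.mem_univ, true_and, Finset.mem_Iic]
    constructor
    · intro hj
      by_contra hc
      have : p j ≤ p (e2 n (k, 0)).rev := h1 (by
        rw [Fin.le_def, Fin.val_rev, e2_val] at *
        simp only [rv, Fin.val_zero, Fin.val_one] at *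
        have := k.isLt
        omega)
      omega
    · intro hj; exact h1 hj
  rw [h5, Fin.card_Iic, Fin.val_rev, e2_val, Nat.even_iff] at h4
  simp only [rv, Fin.val_one] at h4
  have := k.isLt
  omega

def detP (n : ℕ) (p : Fin (2 * n) → ℕ) : ℚ :=
  (Matrix.of fun r s : Fin (2 * n) => hEnt (r.val + 1) (p s.rev + s.val + 1)).det

lemma detP_psi {n : ℕ} {a : Fin n → Fin (2 * n)} (ha : StrictMono a) :
    detP n (psi n a) = Gd (HM n) a := by
  unfold detP Gd
  rw [← Matrix.det_submatrix_equiv_self (e2 n)]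
  congr 1
  ext r ⟨k, c⟩
  simp only [Matrix.submatrix_apply, Matrix.of_apply, HM, psi, Fin.rev_rev,
    Equiv.symm_apply_apply, e2_val]
  congr 1
  have := sm_ge ha k
  simp only [rv]
  omega

lemma psi_surj {n : ℕ} {p : Fin (2 * n) → ℕ} (hp : GoodPart n p) (h : detP n p ≠ 0) :
    ∃ a : Fin n → Fin (2 * n), StrictMono a ∧ psi n a = p := by
  have hb : ∀ k : Fin n, p (e2 n (k, 0)).rev / 2 + k.val < 2 * n := by
    intro k
    by_contra hc
    apply h
    refine Matrix.det_eq_zero_of_column_eq_zero (e2 n (k, 0)) fun i => ?_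
    rw [Matrix.of_apply, e2_val]
    have he := Nat.even_iff.mp (hp.2.1 (e2 n (k, 0)).rev)
    have : p (e2 n (k, 0)).rev + rv (k, (0 : Fin 2)) + 1 =
      2 * (p (e2 n (k, 0)).rev / 2 + k.val) + 0 + 1 := by
      simp only [rv, Fin.val_zero]; omega
    rw [this]
    exact entry_zero (c := 0) (by omega) (by have := i.isLt; omega)
  refine ⟨fun k => ⟨_, hb k⟩, ?_, ?_⟩
  · intro k k' hk
    rw [Fin.lt_def]
    have h1 : k.val < k'.val := hk
    have : p (e2 n (k, 0)).rev ≤ p (e2 n (k', 0)).rev := hp.1 (by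
      rw [Fin.rev_le_rev, Fin.le_def, e2_val, e2_val]; simp [rv]; omega)
    simp only
    omega
  · funext j
    obtain ⟨⟨k, c⟩, rfl⟩ : ∃ r, j = (e2 n r).rev := ⟨(e2 n).symm j.rev, by simp⟩
    simp only [psi, Fin.rev_rev, Equiv.symm_apply_apply, Nat.add_sub_cancel]
    have he := Nat.even_iff.mp (hp.2.1 (e2 n (k, 0)).rev)
    obtain rfl | rfl : c = 0 ∨ c = 1 := by omega
    · omega
    · rw [pair_eq hp]; omega

lemma psi_inj {n : ℕ} {a b : Fin n → Fin (2 * n)} (ha : StrictMono a) (hb : StrictMono b)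
    (h : psi n a = psi n b) : a = b := by
  ext k
  have h1 := congrFun h (e2 n (k, 0)).rev
  simp only [psi, Fin.rev_rev, Equiv.symm_apply_apply] at h1
  have := sm_ge ha k
  have := sm_ge hb k
  omega

/-- The minor summation: `∑_λ det H(2n)_{I_{2n}(λ)} = ∏_{k=0}^{n-1} (4k+1)`, the
sum running over all partitions `λ` of length at most `2n` (encoded as antitone
functions `Fin (2n) → ℕ` listing the first `2n` parts) such that all parts of
`λ` and all parts of the conjugate partition `λ'` are even.  Here
`I_{2n}(λ) = {λ_{2n}+1, λ_{2n-1}+2, …, λ_1+2n}`, so the `s`-th column (0-based)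
of the submatrix is column `λ_{2n-s} + s + 1` of `H`; only finitely many
summands are nonzero, and the sum is a `finsum`. -/
theorem sum_minors_eq (n : ℕ) (hn : 1 ≤ n) :
    ∑ᶠ p : {f : Fin (2 * n) → ℕ // Antitone f ∧ (∀ r, Even (f r)) ∧
        ∀ i : ℕ, 1 ≤ i →
          Even ((Finset.univ.filter fun j : Fin (2 * n) => i ≤ f j).card)},
      (Matrix.of fun r s : Fin (2 * n) =>
        hEnt (r.val + 1) (p.1 s.rev + s.val + 1)).det =
    ∏ k ∈ Finset.range n, (4 * (k : ℚ) + 1) := by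
  classical
  rw [← sum_H2 n, ← sum_H1_H2 n]
  let g : {a : Fin n → Fin (2 * n) // StrictMono a} → {f : Fin (2 * n) → ℕ // GoodPart n f} :=
    fun a => ⟨psi n a.1, psi_mem a.2⟩
  change ∑ᶠ p : {f : Fin (2 * n) → ℕ // GoodPart n f}, detP n p.1 = _
  have hg : Function.Injective g := fun a b h =>
    Subtype.ext (psi_inj a.2 b.2 (congrArg Subtype.val h))
  rw [finsum_eq_sum_of_support_subset (s := Finset.univ.image g), Finset.sum_image hg.injOn]
  · refine Finset.sum_congr rfl fun a _ => ?_
    rw [← Gd_HM]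
    exact detP_psi a.2
  · rintro ⟨p, hp⟩ h
    obtain ⟨a, ha, rfl⟩ := psi_surj hp h
    simp only [Finset.coe_image, Finset.coe_univ, Set.image_univ]
    exact ⟨⟨a, ha⟩, rfl⟩
end

section
/- For all integers 1 ≤ i < j, the following identity of rational numbers holds: Σ_{k ≥ 1} (h(i,2k−1)·h(j,2k) − h(i,2k)·h(j,2k−1)) = (j−i)·M_{i+j−3}, where the sum has only finitely many nonzero terms. -/
/-- ballot numbers -/
def bal (l m : ℕ) : ℚ := ((l : ℚ) + 1) * (l + 2 * m).factorial / (m.factorial * (l + 1 + m).factorial)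

/-- Motzkin triangle -/
def motTri (n l : ℕ) : ℚ := ∑ m ∈ Finset.range (n + 1), (n.choose (l + 2 * m) : ℚ) * bal l m

theorem bal_zero (l : ℕ) : bal l 0 = 1 := by
  unfold bal
  have h : ((l.factorial : ℕ) : ℚ) ≠ 0 := by exact_mod_cast l.factorial_ne_zero
  simp only [Nat.mul_zero, Nat.add_zero, Nat.factorial_zero, Nat.factorial_succ]
  push_cast
  field_simp

theorem bal_zero_succ (m : ℕ) : bal 0 (m + 1) = bal 1 m := by
  unfold bal
  have h : ((m.factorial : ℕ) : ℚ) ≠ 0 := by exact_mod_cast m.factorial_ne_zero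
  rw [show 0 + 2 * (m + 1) = (2 * m + 1) + 1 by ring, show 0 + 1 + (m + 1) = m + 1 + 1 by ring,
    show 1 + 2 * m = 2 * m + 1 by ring, show 1 + 1 + m = m + 1 + 1 by ring,
    Nat.factorial_succ (2 * m + 1), Nat.factorial_succ (m + 1), Nat.factorial_succ m]
  push_cast
  field_simp
  ring

theorem bal_succ (l m : ℕ) : bal (l + 1) (m + 1) = bal l (m + 1) + bal (l + 2) m := by
  unfold bal
  have h : ((m.factorial : ℕ) : ℚ) ≠ 0 := by exact_mod_cast m.factorial_ne_zero
  have h2 : (((l + m + 2).factorial : ℕ) : ℚ) ≠ 0 := by exact_mod_cast (l + m + 2).factorial_ne_zero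
  rw [show l + 1 + 2 * (m + 1) = (l + 2 * m + 2) + 1 by ring,
    show l + 1 + 1 + (m + 1) = l + m + 2 + 1 by ring,
    show l + 2 * (m + 1) = l + 2 * m + 2 by ring,
    show l + 1 + (m + 1) = l + m + 2 by ring,
    show l + 2 + 2 * m = l + 2 * m + 2 by ring,
    show l + 2 + 1 + m = l + m + 2 + 1 by ring,
    Nat.factorial_succ (l + 2 * m + 2), Nat.factorial_succ (l + m + 2), Nat.factorial_succ m]
  push_cast
  field_simp
  ring

theorem mt_ext (n l N : ℕ) (h : n + 1 ≤ N) :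
    motTri n l = ∑ m ∈ Finset.range N, (n.choose (l + 2 * m) : ℚ) * bal l m := by
  unfold motTri
  apply Finset.sum_subset
  · intro x hx; simp at *; omega
  · intro x _ hx
    rw [Nat.choose_eq_zero_of_lt (by simp at hx; omega)]; simp

theorem mt_gt (n l : ℕ) (h : n < l) : motTri n l = 0 := by
  unfold motTri
  apply Finset.sum_eq_zero
  intro x _
  rw [Nat.choose_eq_zero_of_lt (by omega)]; simp

theorem mt_zero_zero : motTri 0 0 = 1 := by simp [motTri, bal_zero]

theorem mt_succ_zero (n : ℕ) : motTri (n + 1) 0 = motTri n 0 + motTri n 1 := by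
  rw [mt_ext (n + 1) 0 (n + 2) le_rfl, mt_ext n 0 (n + 2) (by omega), mt_ext n 1 (n + 1) (by omega),
    Finset.sum_range_succ' _ (n + 1), Finset.sum_range_succ' _ (n + 1), add_right_comm,
    ← Finset.sum_add_distrib]
  congr 1
  · apply Finset.sum_congr rfl
    intro m _
    rw [← bal_zero_succ, show 0 + 2 * (m + 1) = (1 + 2 * m) + 1 by ring, Nat.choose_succ_succ]
    push_cast; ring
  · simp

theorem mt_succ_succ (n l : ℕ) : motTri (n + 1) (l + 1) = motTri n l + motTri n (l + 1) + motTri n (l + 2) := by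
  rw [mt_ext (n + 1) (l + 1) (n + 2) le_rfl, mt_ext n l (n + 2) (by omega),
    mt_ext n (l + 1) (n + 2) (by omega), mt_ext n (l + 2) (n + 1) (by omega),
    Finset.sum_range_succ' _ (n + 1), Finset.sum_range_succ' _ (n + 1),
    Finset.sum_range_succ' _ (n + 1)]
  have : ∑ m ∈ Finset.range (n + 1), ((n + 1).choose (l + 1 + 2 * (m + 1)) : ℚ) * bal (l + 1) (m + 1)
     = ∑ m ∈ Finset.range (n + 1), (n.choose (l + 2 * (m + 1)) : ℚ) * bal l (m + 1)
     + ∑ m ∈ Finset.range (n + 1), (n.choose (l + 1 + 2 * (m + 1)) : ℚ) * bal (l + 1) (m + 1)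
     + ∑ m ∈ Finset.range (n + 1), (n.choose (l + 2 + 2 * m) : ℚ) * bal (l + 2) m := by
    rw [← Finset.sum_add_distrib, ← Finset.sum_add_distrib]
    apply Finset.sum_congr rfl
    intro m _
    rw [show l + 1 + 2 * (m + 1) = (l + 2 + 2 * m) + 1 by ring, Nat.choose_succ_succ,
      show l + 2 * (m + 1) = l + 2 + 2 * m by ring, bal_succ]
    push_cast; ring
  rw [this]
  simp only [bal_zero, Nat.mul_zero, Nat.add_zero, Nat.choose_succ_succ]
  push_cast; ring

theorem mt_shift (n m N : ℕ) :
    ∑ l ∈ Finset.range (N + 1), (motTri (n + 1) l * motTri m l - motTri n l * motTri (m + 1) l)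
      = motTri n (N + 1) * motTri m N - motTri n N * motTri m (N + 1) := by
  induction N with
  | zero => simp [mt_succ_zero]; ring
  | succ N ih => rw [Finset.sum_range_succ, ih, mt_succ_succ, mt_succ_succ]; ring

theorem mt_conv (n : ℕ) : ∀ (m N : ℕ), n ≤ N →
    ∑ l ∈ Finset.range (N + 1), motTri n l * motTri m l = motTri (n + m) 0 := by
  induction n with
  | zero =>
    intro m N _
    rw [Finset.sum_range_succ', Finset.sum_eq_zero]
    · simp [mt_zero_zero]
    · intro l _; rw [mt_gt 0 (l + 1) (by omega)]; simp
  | succ n ih =>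
    intro m N h
    have h1 := mt_shift n m N
    rw [mt_gt n (N + 1) (by omega), mt_gt n N (by omega), Finset.sum_sub_distrib,
      ih (m + 1) N (by omega)] at h1
    rw [show n + 1 + m = n + (m + 1) by ring]
    linarith

theorem F_ext (a c N : ℕ) (h : a / 2 + 1 ≤ N) : F a c = ∑ m ∈ Finset.range N,
    ((a.choose (2 * m) : ℚ) * ((2 * m).choose m)) / ((c + m).choose m : ℚ) := by
  unfold F
  apply Finset.sum_subset
  · intro x hx; simp at *; omega
  · intro x _ hx
    rw [Nat.choose_eq_zero_of_lt (by simp at hx; omega)]; simp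

theorem mt_eq_F (n l : ℕ) : (n.choose l : ℚ) * F (n - l) (l + 1) = motTri n l := by
  rcases lt_or_ge n l with h | h
  · rw [mt_gt n l h, Nat.choose_eq_zero_of_lt h]; simp
  rw [F_ext _ _ (n + 1) (by omega), motTri, Finset.mul_sum]
  apply Finset.sum_congr rfl
  intro m _
  rcases lt_or_ge n (l + 2 * m) with h2 | h2
  · rw [Nat.choose_eq_zero_of_lt h2, Nat.choose_eq_zero_of_lt (show n - l < 2 * m by omega)]; simp
  obtain ⟨d, rfl⟩ := Nat.exists_eq_add_of_le h2
  have hf : ∀ k : ℕ, ((k.factorial : ℕ) : ℚ) ≠ 0 := fun k => by exact_mod_cast k.factorial_ne_zero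
  rw [Nat.cast_choose ℚ h, Nat.cast_choose ℚ (show 2 * m ≤ l + 2 * m + d - l by omega),
    Nat.cast_choose ℚ (show m ≤ 2 * m by omega), Nat.cast_choose ℚ (show m ≤ l + 1 + m by omega),
    Nat.cast_choose ℚ h2, bal,
    show l + 2 * m + d - l - 2 * m = d by omega, show l + 2 * m + d - (l + 2 * m) = d by omega,
    show 2 * m - m = m by omega, show l + 1 + m - m = l + 1 by omega, Nat.factorial_succ l]
  have := hf l; have := hf m; have := hf (l + 1 + m); have := hf d; have := hf (2 * m)
  have := hf (l + 2 * m); have := hf (l + 2 * m + d - l); have := hf (l + 2 * m + d)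
  push_cast
  field_simp

theorem motzkin_eq (n : ℕ) : motzkin n = motTri n 0 := by
  unfold motzkin motTri
  apply Finset.sum_congr rfl
  intro m _
  have hf : ((m.factorial : ℕ) : ℚ) ≠ 0 := by exact_mod_cast m.factorial_ne_zero
  rw [Nat.cast_choose ℚ (show m ≤ 2 * m by omega), bal, show 2 * m - m = m by omega,
    show 0 + 1 + m = m + 1 by ring, Nat.factorial_succ, Nat.zero_add]
  push_cast
  field_simp
  ring

theorem hEnt_odd (n l : ℕ) : hEnt (n + 1) (2 * (l + 1) - 1) = motTri n l := by
  unfold hEnt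
  rw [if_pos (by omega), show (2 * (l + 1) - 1 + 1) / 2 = l + 1 by omega, ← mt_eq_F]
  simp

theorem hEnt_even (n l : ℕ) : hEnt (n + 1) (2 * (l + 1)) = n * motTri (n - 1) l := by
  unfold hEnt
  rw [if_neg (by omega), show (2 * (l + 1)) / 2 = l + 1 by omega, ← mt_eq_F,
    show n + 1 - 2 = n - 1 by omega, show n + 1 - (l + 1) - 1 = n - 1 - l by omega]
  simp [mul_assoc]

theorem sum_h_eq_motzkin (i j : ℕ) (hi : 1 ≤ i) (hij : i < j) :
    ∑ᶠ k ∈ Set.Ici (1 : ℕ),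
        (hEnt i (2 * k - 1) * hEnt j (2 * k) - hEnt i (2 * k) * hEnt j (2 * k - 1)) =
      ((j : ℚ) - (i : ℚ)) * motzkin (i + j - 3) := by
  obtain ⟨n, rfl⟩ : ∃ n, i = n + 1 := ⟨i - 1, by omega⟩
  obtain ⟨p, rfl⟩ : ∃ p, j = p + 1 + 1 := ⟨j - 2, by omega⟩
  have key : ∀ l, hEnt (n + 1) (2 * (l + 1) - 1) * hEnt (p + 1 + 1) (2 * (l + 1))
      - hEnt (n + 1) (2 * (l + 1)) * hEnt (p + 1 + 1) (2 * (l + 1) - 1)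
      = ((p : ℚ) + 1) * (motTri n l * motTri p l) - n * (motTri (n - 1) l * motTri (p + 1) l) := by
    intro l
    rw [hEnt_odd, hEnt_odd, hEnt_even, hEnt_even]
    simp only [Nat.add_sub_cancel]
    push_cast; ring
  rw [finsum_mem_eq_sum_of_inter_support_eq (t := Finset.Ico 1 (n + 2))]
  · rw [Finset.sum_Ico_eq_sum_range, show n + 2 - 1 = n + 1 by omega]
    simp only [add_comm 1, key]
    rw [Finset.sum_sub_distrib, ← Finset.mul_sum, ← Finset.mul_sum, mt_conv n p n le_rfl,
      mt_conv (n - 1) (p + 1) n (by omega), motzkin_eq,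
      show n + 1 + (p + 1 + 1) - 3 = n + p by omega]
    rcases Nat.eq_zero_or_pos n with rfl | hn
    · simp
    · rw [show n - 1 + (p + 1) = n + p by omega]
      push_cast; ring
  · ext k
    simp only [Set.mem_inter_iff, Set.mem_Ici, Function.mem_support, Finset.coe_Ico, Set.mem_Ico]
    constructor
    · rintro ⟨h1, h2⟩
      refine ⟨⟨h1, ?_⟩, h2⟩
      by_contra h3
      apply h2
      obtain ⟨l, rfl⟩ : ∃ l, k = l + 1 := ⟨k - 1, by omega⟩
      rw [key, mt_gt n l (by omega), mt_gt (n - 1) l (by omega)]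
      simp
    · rintro ⟨⟨h1, _⟩, h2⟩
      exact ⟨h1, h2⟩
end

section
/- Let A = (a_{i,j})_{i,j ≥ 1} be the skew-symmetric array with a_{2k−1,2k} = 1 and a_{2k,2k−1} = −1 for every k ≥ 1 and all other entries 0. Let n ≥ 1 and let I = {i_1 < i_2 < … < i_{2n}} be a 2n-element set of positive integers, and let A^I_I denote the 2n×2n skew-symmetric matrix (a_{i_r, i_s})_{1 ≤ r,s ≤ 2n}. Then Pf(A^I_I) = 1 if I = I_{2n}(λ) for some partition λ of length at most 2n such that every part of λ and every part of the conjugate λ' is even, and Pf(A^I_I) = 0 otherwise; here I_{2n}(λ) = {λ_{2n}+1, λ_{2n−1}+2, …, λ_1+2n}. -/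
/-- The entries (with 1-based indices `i, j ≥ 1`) of the infinite skew-symmetric
array with `a_{2k-1,2k} = 1`, `a_{2k,2k-1} = -1` and all other entries `0`. -/
def aEnt (i j : ℕ) : ℚ :=
  if i % 2 = 1 ∧ j = i + 1 then 1
  else if j % 2 = 1 ∧ i = j + 1 then -1
  else 0

lemma pf_sigma_eq_one {n : ℕ} (e : Fin (2 * n) → ℕ) (hmono : StrictMono e)
    (σ : Equiv.Perm (Fin (2 * n)))
    (h1 : ∀ i : Fin n, e (σ ⟨2 * i.val + 1, by have := i.isLt; omega⟩)
      = e (σ ⟨2 * i.val, by have := i.isLt; omega⟩) + 1)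
    (h2 : ∀ i j : Fin n, i < j → σ ⟨2 * i.val, by have := i.isLt; omega⟩
          < σ ⟨2 * j.val, by have := j.isLt; omega⟩) : σ = 1 := by
  have hs : StrictMono σ := by
    have key : ∀ a b : Fin (2 * n), b.val = a.val + 1 → σ a < σ b := by
      intro a b hab
      rcases Nat.even_or_odd' a.val with ⟨k, hk | hk⟩
      · have hkn : k < n := by omega
        have := h1 ⟨k, hkn⟩
        have ha : a = ⟨2 * k, by omega⟩ := Fin.ext hk
        have hb : b = ⟨2 * k + 1, by omega⟩ := Fin.ext (by simp; omega)
        apply hmono.lt_iff_lt.1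
        rw [← ha, ← hb] at this
        omega
      · have hkn : k + 1 < n := by omega
        have h3 := h1 ⟨k, by omega⟩
        have h4 := h2 ⟨k, by omega⟩ ⟨k + 1, hkn⟩ (by simp)
        have ha : a = ⟨2 * k + 1, by omega⟩ := Fin.ext hk
        have hb : b = ⟨2 * (k + 1), by omega⟩ := Fin.ext (by simp; omega)
        have h5 : σ a ≠ σ b := fun h => by
          have := σ.injective h
          rw [this] at hab
          omega
        have h6 : e (σ a) ≠ e (σ b) := fun h => h5 (hmono.injective h)
        have h7 := hmono h4
        apply hmono.lt_iff_lt.1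
        rw [← ha] at h3
        rw [← hb] at h7
        omega
    have : ∀ d : ℕ, ∀ a b : Fin (2 * n), b.val = a.val + 1 + d → σ a < σ b := by
      intro d
      induction d with
      | zero => intro a b h; exact key a b (by omega)
      | succ d ih =>
        intro a b h
        exact (ih a ⟨a.val + 1 + d, by omega⟩ rfl).trans (key _ _ (by simp; omega))
    intro a b hab
    exact this (b.val - a.val - 1) a b (by have : a.val < b.val := hab; omega)
  have h := Subsingleton.elim (hs.orderIsoOfSurjective σ σ.surjective) (OrderIso.refl _)
  ext x
  have := congrArg (fun f => (f x).val) h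
  simpa using this

lemma aEnt_of_lt {i j : ℕ} (h : i < j) (h0 : aEnt i j ≠ 0) : i % 2 = 1 ∧ j = i + 1 := by
  unfold aEnt at h0
  by_contra hc
  rw [if_neg hc, if_neg (by omega)] at h0
  exact h0 rfl

lemma pf_eq_s16 {n : ℕ} (e : Fin (2 * n) → ℕ) (hmono : StrictMono e) :
    pfaffian (N := n) (Matrix.of fun r s : Fin (2 * n) => aEnt (e r) (e s)) =
    ∏ i : Fin n, aEnt (e ⟨2 * i.val, by have := i.isLt; omega⟩)
      (e ⟨2 * i.val + 1, by have := i.isLt; omega⟩) := by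
  unfold pfaffian
  rw [Finset.sum_eq_single 1]
  · simp
  · intro σ hσ hne
    rw [Finset.mem_filter] at hσ
    obtain ⟨-, ha, hb⟩ := hσ
    by_contra h0
    apply hne
    have h0' := right_ne_zero_of_smul h0
    rw [Finset.prod_ne_zero_iff] at h0'
    exact pf_sigma_eq_one e hmono σ
      (fun i => (aEnt_of_lt (hmono (ha i)) (h0' i (Finset.mem_univ _))).2) hb
  · intro h
    exfalso
    apply h
    simp only [Finset.mem_filter, Finset.mem_univ, true_and, Equiv.Perm.coe_one, id, Fin.lt_def]
    refine ⟨fun i => by omega, fun i j h => by omega⟩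

lemma pf_cond_of_p {n : ℕ} (e : Fin (2 * n) → ℕ)
    (p : Fin (2 * n) → ℕ) (hp : Antitone p) (hev : ∀ r, Even (p r))
    (hc : ∀ i : ℕ, 1 ≤ i →
          Even ((Finset.univ.filter fun j : Fin (2 * n) => i ≤ p j).card))
    (he : ∀ s : Fin (2 * n), e s = p s.rev + s.val + 1) (i : Fin n) :
    e ⟨2 * i.val, by have := i.isLt; omega⟩ % 2 = 1 ∧
    e ⟨2 * i.val + 1, by have := i.isLt; omega⟩ =
      e ⟨2 * i.val, by have := i.isLt; omega⟩ + 1 := by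
  have hi := i.isLt
  have hr0 : (⟨2 * i.val, by omega⟩ : Fin (2 * n)).rev
      = ⟨2 * (n - 1 - i.val) + 1, by omega⟩ := Fin.ext (by simp [Fin.val_rev]; omega)
  have hr1 : (⟨2 * i.val + 1, by omega⟩ : Fin (2 * n)).rev
      = ⟨2 * (n - 1 - i.val), by omega⟩ := Fin.ext (by simp [Fin.val_rev]; omega)
  rw [he, he, hr0, hr1]
  obtain ⟨k, hk⟩ : ∃ k, k = n - 1 - i.val := ⟨_, rfl⟩
  have hkn : k < n := by omega
  simp only [← hk]
  have hE := hev ⟨2 * k + 1, by omega⟩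
  rw [Nat.even_iff] at hE
  have hle : p ⟨2 * k + 1, by omega⟩ ≤ p ⟨2 * k, by omega⟩ := hp (by simp [Fin.le_def])
  have heq : p ⟨2 * k + 1, by omega⟩ = p ⟨2 * k, by omega⟩ := by
    by_contra hne
    have := hc (p ⟨2 * k, by omega⟩) (by omega)
    have hset : (Finset.univ.filter fun j : Fin (2 * n) => p ⟨2 * k, by omega⟩ ≤ p j)
        = Finset.Iic ⟨2 * k, by omega⟩ := by
      ext j
      simp only [Finset.mem_filter, Finset.mem_univ, true_and, Finset.mem_Iic]
      constructor
      · intro h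
        by_contra hj
        have : p j ≤ p ⟨2 * k + 1, by omega⟩ := hp (by
          rw [Fin.le_def] at hj ⊢; simp at hj ⊢; omega)
        omega
      · intro h; exact hp h
    rw [hset, Fin.card_Iic, Nat.even_iff] at this
    simp at this
  omega

lemma pf_even_card {n : ℕ} (p : Fin (2 * n) → ℕ)
    (h : ∀ k (hk : k < n), p ⟨2 * k, by omega⟩ = p ⟨2 * k + 1, by omega⟩) (i : ℕ) :
    Even ((Finset.univ.filter fun j : Fin (2 * n) => i ≤ p j).card) := by
  have hcard : (Finset.univ.filter fun j : Fin (2 * n) => i ≤ p j).card =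
      ∑ k : Fin n, 2 * (if i ≤ p ⟨2 * k.val, by have := k.isLt; omega⟩ then 1 else 0) := by
    rw [Finset.card_filter,
      ← ((finProdFinEquiv (m := n) (n := 2)).trans (finCongr (Nat.mul_comm n 2))).sum_comp,
      Fintype.sum_prod_type]
    refine Finset.sum_congr rfl fun k _ => ?_
    have hk := h k.val k.isLt
    have e0 : ((finProdFinEquiv (m := n) (n := 2)).trans (finCongr (Nat.mul_comm n 2))) (k, 0)
        = ⟨2 * k.val, by have := k.isLt; omega⟩ := Fin.ext (by simp [finProdFinEquiv])
    have e1 : ((finProdFinEquiv (m := n) (n := 2)).trans (finCongr (Nat.mul_comm n 2))) (k, 1)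
        = ⟨2 * k.val + 1, by have := k.isLt; omega⟩ :=
      Fin.ext (by simp [finProdFinEquiv]; omega)
    rw [Fin.sum_univ_two, e0, e1]
    simp only [hk]
    ring
  rw [hcard, ← Finset.mul_sum]
  exact even_two_mul _

lemma pf_p_of_cond {n : ℕ} (e : Fin (2 * n) → ℕ) (hmono : StrictMono e) (hpos : ∀ r, 1 ≤ e r)
    (hC : ∀ i : Fin n, e ⟨2 * i.val, by have := i.isLt; omega⟩ % 2 = 1 ∧
      e ⟨2 * i.val + 1, by have := i.isLt; omega⟩ =
      e ⟨2 * i.val, by have := i.isLt; omega⟩ + 1) :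
    ∃ p : Fin (2 * n) → ℕ, Antitone p ∧ (∀ r, Even (p r)) ∧
        (∀ i : ℕ, 1 ≤ i →
          Even ((Finset.univ.filter fun j : Fin (2 * n) => i ≤ p j).card)) ∧
        (∀ s : Fin (2 * n), e s = p s.rev + s.val + 1) := by
  have hq : ∀ d : ℕ, ∀ a b : Fin (2 * n), b.val = a.val + d → e a + d ≤ e b := by
    intro d
    induction d with
    | zero => intro a b h; rw [show a = b from Fin.ext (by omega)]; omega
    | succ d ih =>
      intro a b h
      have h1 := ih a ⟨a.val + d, by omega⟩ rfl
      have h2 : e ⟨a.val + d, by omega⟩ < e b := hmono (by rw [Fin.lt_def]; simp; omega)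
      omega
  have hge : ∀ s : Fin (2 * n), s.val + 1 ≤ e s := by
    intro s
    have h1 := hq s.val ⟨0, by have := s.isLt; omega⟩ s (by simp)
    have h2 := hpos ⟨0, by have := s.isLt; omega⟩
    omega
  refine ⟨fun j => e j.rev - j.rev.val - 1, ?_, ?_, ?_, ?_⟩
  · intro a b hab
    have hab' : a.val ≤ b.val := hab
    have := hq (b.val - a.val) b.rev a.rev (by simp only [Fin.val_rev]; omega)
    simp only [Fin.val_rev]
    omega
  · intro r
    show Even (e r.rev - r.rev.val - 1)
    generalize r.rev = s
    have hs := hge s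
    rw [Nat.even_iff]
    rcases Nat.even_or_odd' s.val with ⟨k, hk | hk⟩
    · have := hC ⟨k, by omega⟩
      rw [show s = ⟨2 * k, by omega⟩ from Fin.ext hk] at hs ⊢
      simp only at *
      omega
    · have := hC ⟨k, by omega⟩
      rw [show s = ⟨2 * k + 1, by omega⟩ from Fin.ext hk] at hs ⊢
      simp only at *
      omega
  · intro i _
    apply pf_even_card
    intro k hk
    have hr0 : (⟨2 * k, by omega⟩ : Fin (2 * n)).rev
      = ⟨2 * (n - 1 - k) + 1, by omega⟩ := Fin.ext (by simp [Fin.val_rev]; omega)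
    have hr1 : (⟨2 * k + 1, by omega⟩ : Fin (2 * n)).rev
      = ⟨2 * (n - 1 - k), by omega⟩ := Fin.ext (by simp [Fin.val_rev]; omega)
    have := hC ⟨n - 1 - k, by omega⟩
    simp only [hr0, hr1] at *
    omega
  · intro s
    have := hge s
    simp only [Fin.rev_rev]
    omega

/-- For a `2n`-element set `I = {i_1 < … < i_{2n}}` of positive integers (encoded
by the strictly monotone enumeration `e : Fin (2n) → ℕ`), the Pfaffian of
`A^I_I = (a_{i_r, i_s})` equals `1` if `I = I_{2n}(λ)` for some partition `λ` of
length at most `2n` (encoded as an antitone function `Fin (2n) → ℕ`) all of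
whose parts and all of whose conjugate parts are even, i.e., if
`e s = λ_{2n-s} + s + 1` (0-based `s`) for such a `λ`; and it equals `0`
otherwise. -/
theorem pfaffian_sub_aEnt (n : ℕ) (hn : 1 ≤ n) (e : Fin (2 * n) → ℕ)
    (hmono : StrictMono e) (hpos : ∀ r, 1 ≤ e r) :
    ((∃ p : Fin (2 * n) → ℕ, Antitone p ∧ (∀ r, Even (p r)) ∧
        (∀ i : ℕ, 1 ≤ i →
          Even ((Finset.univ.filter fun j : Fin (2 * n) => i ≤ p j).card)) ∧
        (∀ s : Fin (2 * n), e s = p s.rev + s.val + 1)) →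
      pfaffian (N := n) (Matrix.of fun r s : Fin (2 * n) => aEnt (e r) (e s)) = 1) ∧
    ((¬ ∃ p : Fin (2 * n) → ℕ, Antitone p ∧ (∀ r, Even (p r)) ∧
        (∀ i : ℕ, 1 ≤ i →
          Even ((Finset.univ.filter fun j : Fin (2 * n) => i ≤ p j).card)) ∧
        (∀ s : Fin (2 * n), e s = p s.rev + s.val + 1)) →
      pfaffian (N := n) (Matrix.of fun r s : Fin (2 * n) => aEnt (e r) (e s)) = 0) := by
  rw [pf_eq_s16 e hmono]
  constructor
  · rintro ⟨p, hp, hev, hc, he⟩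
    refine Finset.prod_eq_one fun i _ => ?_
    unfold aEnt
    rw [if_pos (pf_cond_of_p e p hp hev hc he i)]
  · intro h
    by_contra h0
    apply h
    rw [← ne_eq, Finset.prod_ne_zero_iff] at h0
    exact pf_p_of_cond e hmono hpos fun i =>
      aEnt_of_lt (hmono (by simp [Fin.lt_def])) (h0 i (Finset.mem_univ _))
end

section
/- For all integers i ≥ 1 and k ≥ 1, h(i,2k) = k·c_{i+k−1}, where c_{i+k−1} is the coefficient of x^{i+k−1} in the polynomial (1+x+x²)^{i−1}. That is, (i−1)·C(i−2,k−1)·F(i−k−1,k) = k·[x^{i+k−1}](1+x+x²)^{i−1}. -/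
lemma term_aux (k m r : ℕ) :
    ((k + (2 * m + r)).choose k : ℚ) *
      ((((2 * m + r).choose (2 * m) : ℚ) * ((2 * m).choose m)) / ((k + m).choose m : ℚ)) =
    ((k + (2 * m + r)).choose (k + m) : ℚ) * ((m + r).choose r : ℚ) := by
  have e1 := Nat.cast_add_choose ℚ (a := k) (b := 2 * m + r)
  have e2 := Nat.cast_add_choose ℚ (a := 2 * m) (b := r)
  have e3 := Nat.cast_add_choose ℚ (a := m) (b := m)
  have e4 := Nat.cast_add_choose ℚ (a := m) (b := k)
  have e5 := Nat.cast_add_choose ℚ (a := k + m) (b := m + r)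
  have e6 := Nat.cast_add_choose ℚ (a := r) (b := m)
  rw [← two_mul] at e3
  rw [show k + m + (m + r) = k + (2 * m + r) by ring] at e5
  rw [add_comm m k] at e4
  rw [add_comm r m] at e6
  rw [e1, e2, e3, e4, e5, e6]
  have f (n : ℕ) : (n.factorial : ℚ) ≠ 0 := by exact_mod_cast n.factorial_ne_zero
  have := f k
  have := f m
  have := f r
  have := f (2 * m)
  have := f (2 * m + r)
  have := f (k + m)
  have := f (m + r)
  field_simp

lemma coeff_aux (k d : ℕ) :
    ((1 + Polynomial.X + Polynomial.X ^ 2 : Polynomial ℚ) ^ (k + d)).coeff (2 * k + d) =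
      ((k + d).choose k : ℚ) * F d k := by
  have h : (1 + Polynomial.X + Polynomial.X ^ 2 : Polynomial ℚ) ^ (k + d) =
      ∑ j ∈ Finset.range (k + (d + 1)), Polynomial.C ((k + d).choose j : ℚ) *
        ((1 + Polynomial.X) ^ (k + d - j) * Polynomial.X ^ (2 * j)) := by
    rw [add_comm (1 + Polynomial.X : Polynomial ℚ), add_pow, ← add_assoc]
    refine Finset.sum_congr rfl fun j _ => ?_
    rw [← pow_mul]
    simp only [map_natCast]
    ring
  rw [h, Polynomial.finsetSum_coeff]
  simp only [Polynomial.coeff_C_mul, Polynomial.coeff_mul_X_pow', Polynomial.coeff_one_add_X_pow]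
  rw [Finset.sum_range_add, Finset.sum_eq_zero, zero_add, F, Finset.mul_sum]
  · symm
    have hs : Finset.range (d / 2 + 1) ⊆ Finset.range (d + 1) := by
      intro x; simp only [Finset.mem_range]; omega
    rw [← Finset.sum_subset hs]
    · refine Finset.sum_congr rfl fun m hm => ?_
      rw [Finset.mem_range] at hm
      obtain ⟨r, rfl⟩ : ∃ r, d = 2 * m + r := ⟨d - 2 * m, by omega⟩
      rw [term_aux, if_pos (by omega)]
      congr 3 <;> omega
    · intro m _ hm
      rw [Finset.mem_range] at hm
      rw [if_neg (by omega), mul_zero]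
  · intro j hj
    rw [Finset.mem_range] at hj
    rw [if_pos (by omega), Nat.choose_eq_zero_of_lt (show k + d - j < 2 * k + d - 2 * j by omega)]
    simp

theorem h_even_eq_coeff (i k : ℕ) (hi : 1 ≤ i) (hk : 1 ≤ k) :
    hEnt i (2 * k) =
      (k : ℚ) *
        ((1 + Polynomial.X + Polynomial.X ^ 2 : Polynomial ℚ) ^ (i - 1)).coeff (i + k - 1) := by
  obtain ⟨n, rfl⟩ : ∃ n, i = n + 1 := ⟨i - 1, by omega⟩
  obtain ⟨l, rfl⟩ : ∃ l, k = l + 1 := ⟨k - 1, by omega⟩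
  rw [hEnt, if_neg (by omega), show 2 * (l + 1) / 2 = l + 1 by omega]
  by_cases h : l + 1 ≤ n
  · obtain ⟨d, rfl⟩ := Nat.exists_eq_add_of_le h
    have hc := coeff_aux (l + 1) d
    rw [show l + 1 + d + 1 - 1 = l + 1 + d by omega,
      show l + 1 + d + 1 + (l + 1) - 1 = 2 * (l + 1) + d by omega, hc,
      show l + 1 + d + 1 - 2 = l + d by omega, show l + 1 + d + 1 - (l + 1) - 1 = d by omega,
      show l + 1 - 1 = l by omega, ← mul_assoc]
    congr 1
    have := Nat.add_one_mul_choose_eq (l + d) l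
    rw [show l + d + 1 = l + 1 + d by omega] at this
    have h2 : ((l + 1 + d : ℕ) : ℚ) * ((l + d).choose l : ℚ)
      = ((l + 1 + d).choose (l + 1) : ℚ) * ((l + 1 : ℕ) : ℚ) := by exact_mod_cast this
    push_cast at h2 ⊢
    linarith
  · have hz : ((1 + Polynomial.X + Polynomial.X ^ 2 : Polynomial ℚ) ^ (n + 1 - 1)).coeff
        (n + 1 + (l + 1) - 1) = 0 := by
      apply Polynomial.coeff_eq_zero_of_natDegree_lt
      have h1 : (1 + Polynomial.X + Polynomial.X ^ 2 : Polynomial ℚ).natDegree ≤ 2 := by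
        compute_degree
      have := Polynomial.natDegree_pow_le_of_le (n + 1 - 1) h1
      omega
    rw [hz]
    rcases Nat.eq_zero_or_pos n with rfl | hn
    · simp
    · rw [Nat.choose_eq_zero_of_lt (by omega)]
      simp
end

section
/- For every positive integer n, the Pfaffian of the 2n×2n skew-symmetric matrix whose (i,j) entry is (j−i)·(M_{i+j−3} + M_{i+j−2}) for 1 ≤ i,j ≤ 2n (with the convention that the (1,1) entry, whose factor j−i vanishes, is 0) equals ∏_{i=0}^{n−1} (4i+2). -/
open Polynomial in
noncomputable def scL : ℚ[X] →ₗ[ℚ] ℚ :=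
  (Polynomial.basisMonomials ℚ).constr ℚ
    (fun m => if Even m then (1 / (((m / 2 : ℕ) : ℚ) + 1)) * (m.choose (m / 2)) else 0)

namespace PfAux
open Polynomial

theorem scL_pow (m : ℕ) : scL (X ^ m) =
    if Even m then (1 / (((m / 2 : ℕ) : ℚ) + 1)) * (m.choose (m / 2)) else 0 := by
  have := (Polynomial.basisMonomials ℚ).constr_basis ℚ
    (fun m : ℕ => if Even m then (1 / (((m / 2 : ℕ) : ℚ) + 1)) * ((m.choose (m / 2) : ℕ) : ℚ) else 0) m
  rw [Polynomial.coe_basisMonomials] at this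
  rw [X_pow_eq_monomial]
  exact this

theorem sum_two_mul (f : ℕ → ℚ) (n : ℕ) :
    ∑ m ∈ Finset.range (2 * n), f m = ∑ k ∈ Finset.range n, (f (2 * k) + f (2 * k + 1)) := by
  induction n with
  | zero => simp
  | succ n ih =>
    rw [show 2 * (n + 1) = 2 * n + 1 + 1 by ring, Finset.sum_range_succ, Finset.sum_range_succ, ih,
      Finset.sum_range_succ, add_assoc]

theorem scL_motzkin (n : ℕ) : scL ((X + 1) ^ n) = motzkin n := by
  rw [add_pow, map_sum]
  have h1 : ∀ m ∈ Finset.range (n + 1), scL (X ^ m * 1 ^ (n - m) * (n.choose m : ℚ[X])) =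
      (n.choose m : ℚ) * scL (X ^ m) := by
    intro m _
    rw [one_pow, mul_one, mul_comm, ← smul_eq_mul (a := (n.choose m : ℚ)), ← map_smul,
      smul_eq_C_mul]
    simp
  rw [Finset.sum_congr rfl h1]
  have h2 : ∑ m ∈ Finset.range (n + 1), (n.choose m : ℚ) * scL (X ^ m) =
      ∑ m ∈ Finset.range (2 * (n + 1)), (n.choose m : ℚ) * scL (X ^ m) := by
    apply Finset.sum_subset
    · intro x; simp only [Finset.mem_range]; omega
    · intro x _ hx
      simp only [Finset.mem_range] at hx
      rw [Nat.choose_eq_zero_of_lt (by omega)]; simp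
  rw [h2, sum_two_mul, motzkin]
  apply Finset.sum_congr rfl
  intro k _
  have e1 : Even (2 * k) := even_two_mul k
  have e2 : ¬ Even (2 * k + 1) := by simp
  rw [scL_pow, scL_pow, if_pos e1, if_neg e2]
  have : 2 * k / 2 = k := by omega
  rw [this]; ring

theorem scL_pearson_pow (m : ℕ) :
    scL ((4 - X ^ 2) * derivative (X ^ m) - 3 * X * X ^ m) = 0 := by
  rcases Nat.even_or_odd' m with ⟨k, rfl | rfl⟩
  · rcases k with _ | k
    · have : ((4 - X ^ 2) * derivative (X ^ (2 * 0)) - 3 * X * X ^ (2 * 0) : ℚ[X]) = (-3 : ℚ) • X ^ 1 := by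
        rw [smul_eq_C_mul]; simp; simp only [C_ofNat]
      rw [this, map_smul, scL_pow]; simp
    · have : ((4 - X ^ 2) * derivative (X ^ (2 * (k + 1))) - 3 * X * X ^ (2 * (k + 1)) : ℚ[X])
         = (4 * (2 * (k + 1) : ℚ)) • X ^ (2 * k + 1) - ((2 * (k + 1) : ℚ) + 3) • X ^ (2 * (k + 1) + 1) := by
        simp only [smul_eq_C_mul, derivative_X_pow]
        simp
        rw [show 2 * (k + 1) - 1 = 2 * k + 1 by omega]
        simp only [C_ofNat]; ring
      rw [this, map_sub, map_smul, map_smul, scL_pow, scL_pow, if_neg (by simp), if_neg (by simp)]; simp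
  · have : ((4 - X ^ 2) * derivative (X ^ (2 * k + 1)) - 3 * X * X ^ (2 * k + 1) : ℚ[X])
         = (4 * (2 * k + 1 : ℚ)) • X ^ (2 * k) - ((2 * k + 1 : ℚ) + 3) • X ^ (2 * (k + 1)) := by
        simp only [smul_eq_C_mul, derivative_X_pow]
        simp
        simp only [C_ofNat]; ring
    rw [this, map_sub, map_smul, map_smul, scL_pow, scL_pow, if_pos (by simp), if_pos (by simp)]
    have a1 : 2 * k / 2 = k := by omega
    have a2 : 2 * (k + 1) / 2 = k + 1 := by omega
    rw [a1, a2]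
    have := Nat.succ_mul_centralBinom_succ k
    rw [Nat.centralBinom, Nat.centralBinom] at this
    have h : ((k : ℚ) + 1) * ((2 * (k + 1)).choose (k + 1) : ℕ) = 2 * (2 * k + 1) * ((2 * k).choose k : ℕ) := by
      exact_mod_cast this
    have hk : (k : ℚ) + 1 ≠ 0 := by positivity
    have hk2 : (k : ℚ) + 1 + 1 ≠ 0 := by positivity
    have h' : (((2 * (k + 1)).choose (k + 1) : ℕ) : ℚ) = 2 * (2 * k + 1) * ((2 * k).choose k : ℕ) / (k + 1) := by
      rw [eq_div_iff hk, mul_comm, h]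
    rw [h', smul_eq_mul, smul_eq_mul]
    push_cast
    field_simp
    ring

theorem scL_pearson (f : ℚ[X]) :
    scL ((4 - X ^ 2) * derivative f - 3 * X * f) = 0 := by
  induction f using Polynomial.induction_on' with
  | add p q hp hq =>
    rw [derivative_add, show (4 - X ^ 2) * (derivative p + derivative q) - 3 * X * (p + q) =
      ((4 - X ^ 2) * derivative p - 3 * X * p) + ((4 - X ^ 2) * derivative q - 3 * X * q) by ring,
      map_add, hp, hq, add_zero]
  | monomial n a =>
    rw [← smul_X_eq_monomial, derivative_smul, mul_smul_comm, mul_smul_comm, ← smul_sub, map_smul,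
      scL_pearson_pow, smul_zero]

open Chebyshev

theorem S_rec (n : ℤ) : S ℚ (n + 1) = X * S ℚ n - S ℚ (n - 1) := S_add_one ℚ n

theorem S_deriv (n : ℕ) : (4 - X ^ 2) * derivative (S ℚ n) =
    ((n : ℚ[X]) + 2) * S ℚ (n - 1) - (n : ℚ[X]) * S ℚ (n + 1) := by
  induction n using Nat.twoStepInduction with
  | zero => simp
  | one => simp [S_two]; ring
  | more n h1 h2 =>
    push_cast at *
    have r0 := S_rec (n : ℤ)
    have r1 := S_rec ((n : ℤ) + 1)
    have r2 := S_rec ((n : ℤ) + 2)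
    rw [show (n : ℤ) + 2 = n + 1 + 1 by ring] at *
    rw [show (n : ℤ) + 1 + 1 - 1 = n + 1 by ring] at *
    rw [show (n : ℤ) + 1 - 1 = n by ring] at *
    rw [r2]
    rw [r1, derivative_sub, derivative_mul, derivative_X]
    have e : S ℚ ((n:ℤ) - 1) = X * S ℚ n - S ℚ (n + 1) := by rw [r0]; ring
    rw [e] at h1
    rw [r1] at h2
    linear_combination X * h2 - h1

theorem scL_S_zero : scL (S ℚ 0) = 1 := by
  have := scL_pow 0
  simpa using this

theorem scL_S_succ (n : ℕ) : scL (S ℚ (n + 1)) = 0 := by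
  have key : ∀ n : ℕ, ((n : ℚ) - 1) * scL (S ℚ (n - 1)) - ((n : ℚ) + 3) * scL (S ℚ (n + 1)) = 0 := by
    intro n
    have h := scL_pearson (S ℚ n)
    rw [S_deriv] at h
    have : ((n : ℚ[X]) + 2) * S ℚ (n - 1) - (n : ℚ[X]) * S ℚ (n + 1) - 3 * X * S ℚ n =
      ((n : ℚ) - 1) • S ℚ (n - 1) - ((n : ℚ) + 3) • S ℚ (n + 1) := by
      have := S_rec n
      rw [smul_eq_C_mul, smul_eq_C_mul]
      simp only [C_add, C_sub, C_ofNat, map_natCast, map_one]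
      linear_combination 3 * this
    rw [this, map_sub, map_smul, map_smul] at h
    exact h
  induction n using Nat.twoStepInduction with
  | zero => have := key 0; simpa using this
  | one => have := key 1; norm_num at this; simpa using this
  | more n h1 h2 =>
    have := key (n + 2)
    push_cast at *
    rw [show (n : ℤ) + 2 - 1 = n + 1 by ring, h1] at this
    have h3 : ((n : ℚ) + 2 + 3) ≠ 0 := by positivity
    simpa [h3] using this

noncomputable def V (n : ℤ) : ℚ[X] := S ℚ n - S ℚ (n - 1)

theorem V_rec (n : ℤ) : V (n + 1) = X * V n - V (n - 1) := by
  unfold V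
  have a := S_rec n
  have b := S_rec (n - 1)
  rw [show n + 1 - 1 = n by ring]
  rw [show n - 1 + 1 = n by ring] at b
  linear_combination a - b

theorem V_neg_one : V (-1) = 1 := by
  simp [V]

theorem V_zero : V 0 = 1 := by simp [V]

theorem V_prod (j : ℤ) (k : ℕ) : (2 + X) * (V j * V k) =
    S ℚ (j + k + 1) - S ℚ (j + k - 1) + S ℚ (k - j) - S ℚ (k - j - 2) := by
  have base : (2 + X) * V j = S ℚ (j + 1) - S ℚ (j - 1) + S ℚ (- j) - S ℚ (- j - 2) := by
    rw [S_neg_sub_two, S_neg]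
    have a := S_rec j
    have b := S_rec (j - 1)
    rw [show j - 1 + 1 = j by ring, show j - 1 - 1 = j - 2 by ring] at b
    rw [V]
    linear_combination -a + b
  induction k using Nat.twoStepInduction with
  | zero => simp [V_zero, base]
  | one =>
    have h := V_rec 0
    rw [V_zero, show (0 : ℤ) - 1 = -1 by ring, V_neg_one, zero_add] at h
    rw [Nat.cast_one, h]
    have b1 := S_rec (j + 1)
    have b2 := S_rec (j - 1)
    have b3 := S_rec (-j)
    have b4 := S_rec (-j-2)
    rw [show j + 1 - 1 = j by ring] at b1
    rw [show j - 1 + 1 = j by ring, show j - 1 - 1 = j - 2 by ring] at b2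
    rw [show -j - 2 + 1 = -j - 1 by ring, show -j-2-1 = -j - 3 by ring] at b4
    rw [show j + 1 - 1 = j by ring, show 1 - j = -j + 1 by ring, show -j + 1 - 2 = -j - 1 by ring]
    have c1 : S ℚ (-j-1) = - S ℚ (j - 1) := by rw [← S_neg_sub_two]; congr 1 <;> ring
    have c2 : S ℚ (-j-3) = - S ℚ (j + 1) := by rw [← S_neg_sub_two]; congr 1 <;> ring
    have c3 : S ℚ (-j) = - S ℚ (j - 2) := by rw [← S_neg_sub_two]; congr 1 <;> ring
    have c4 : S ℚ (-j-2) = - S ℚ j := by rw [← S_neg_sub_two]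
    simp only [c1, c2, c3, c4] at *
    linear_combination (X - 1) * base - b1 + b2 - b3 + b4
  | more k h1 h2 =>
    push_cast at *
    have hV := V_rec (k + 1)
    have b1 := S_rec (j + k + 2)
    have b2 := S_rec (j + k)
    have b3 := S_rec (k + 1 - j)
    have b4 := S_rec (k - j - 1)
    ring_nf at *
    linear_combination (2 + X) * V j * hV + X * h2 - h1 - b1 + b2 - b3 + b4

theorem V_deriv (j : ℕ) : (2 + X) * derivative (V j) =
    (j : ℚ[X]) * S ℚ j + ((j : ℚ[X]) + 1) * S ℚ (j - 1) := by
  induction j using Nat.twoStepInduction with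
  | zero => simp [V_zero]
  | one => simp [V]; ring
  | more j h1 h2 =>
    have hV := V_rec (j + 1)
    have hp := V_prod (j + 1) 0
    push_cast at *
    rw [show (j : ℤ) + 2 = j + 1 + 1 by ring, hV]
    rw [derivative_sub, derivative_mul, derivative_X]
    have c1 : S ℚ (0 - (j + 1)) = - S ℚ (j - 1) := by rw [← S_neg_sub_two]; congr 1 <;> ring
    have c2 : S ℚ (0 - (j + 1) - 2) = - S ℚ (j + 1) := by rw [← S_neg_sub_two]; congr 1 <;> ring
    rw [c1, c2, V_zero] at hp
    have b1 := S_rec (j + 1)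
    have b2 := S_rec j
    ring_nf at *
    linear_combination hp + X * h2 - h1 - (j + 1) * b1 - (j + 2) * b2

theorem V_wronsk (j k : ℕ) : (2 + X) * (V j * derivative (V k) - derivative (V j) * V k) =
    ((k : ℚ[X]) - (j : ℚ[X])) * S ℚ (j + k) + ((j : ℚ[X]) + (k : ℚ[X]) + 1) * S ℚ (k - j - 1) := by
  induction k using Nat.twoStepInduction with
  | zero =>
    have h := V_deriv j
    have c1 : S ℚ (0 - j - 1) = - S ℚ (j - 1) := by rw [← S_neg_sub_two]; congr 1 <;> ring
    push_cast
    rw [V_zero, c1]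
    simp
    linear_combination -h
  | one =>
    have h := V_deriv j
    have hp := V_prod j 0
    have h1 := V_rec 0
    rw [V_zero, show (0 : ℤ) - 1 = -1 by ring, V_neg_one, zero_add] at h1
    push_cast at *
    rw [h1]
    have c1 : S ℚ (1 - j - 1) = - S ℚ (j - 2) := by rw [← S_neg_sub_two]; congr 1 <;> ring
    have c2 : S ℚ (0 - j - 2) = - S ℚ j := by rw [← S_neg_sub_two]; congr 1 <;> ring
    have c3 : S ℚ (0 - j) = - S ℚ (j - 2) := by rw [← S_neg_sub_two]; congr 1 <;> ring
    rw [c1]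
    rw [c2, c3, V_zero] at hp
    have b1 := S_rec j
    have b2 := S_rec (j - 1)
    simp
    ring_nf at *
    linear_combination hp - (X - 1) * h + j * b1 + (j + 1) * b2
  | more k h1 h2 =>
    have hp := V_prod j (k + 1)
    have hV := V_rec (k + 1)
    push_cast at *
    rw [show (k : ℤ) + 2 = k + 1 + 1 by ring, hV]
    rw [derivative_sub, derivative_mul, derivative_X]
    have b1 := S_rec (j + k + 1)
    have b2 := S_rec (k - j)
    ring_nf at *
    linear_combination hp + X * h2 - h1 - ((k : ℚ[X]) - (j : ℚ[X]) + 1) * b1 - ((j : ℚ[X]) + (k : ℚ[X]) + 2) * b2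

end PfAux

namespace PfAux
open Equiv Finset

def ev {N : ℕ} (i : Fin N) : Fin (2 * N) := ⟨2 * i.val, by have := i.isLt; omega⟩
def od {N : ℕ} (i : Fin N) : Fin (2 * N) := ⟨2 * i.val + 1, by have := i.isLt; omega⟩

def phi (N : ℕ) : Fin N × Fin 2 ≃ Fin (2 * N) :=
  finProdFinEquiv.trans (finCongr (Nat.mul_comm N 2))

theorem phi_zero {N : ℕ} (i : Fin N) : phi N (i, 0) = ev i := by
  ext; simp [phi, ev]
theorem phi_one {N : ℕ} (i : Fin N) : phi N (i, 1) = od i := by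
  ext; simp [phi, od]; omega

/-- canonical permutations -/
def Canon {N : ℕ} (σ : Perm (Fin (2 * N))) : Prop :=
  (∀ i : Fin N, σ (ev i) < σ (od i)) ∧ (∀ i j : Fin N, i < j → σ (ev i) < σ (ev j))

def bp {N : ℕ} (h : Perm (Fin N) × (Fin N → Perm (Fin 2))) : Perm (Fin (2 * N)) :=
  (phi N).permCongr ((prodCongrRight h.2).trans (prodCongrLeft (fun _ => h.1)))

theorem bp_apply {N : ℕ} (h : Perm (Fin N) × (Fin N → Perm (Fin 2))) (i : Fin N) (b : Fin 2) :
    bp h (phi N (i, b)) = phi N (h.1 i, h.2 i b) := by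
  simp [bp, permCongr_apply]

theorem sign_bp {N : ℕ} (h : Perm (Fin N) × (Fin N → Perm (Fin 2))) :
    Perm.sign (bp h) = ∏ i, Perm.sign (h.2 i) := by
  rw [bp, Perm.sign_permCongr, Perm.sign_trans, Perm.sign_prodCongrLeft, Perm.sign_prodCongrRight]
  simp

def term {N : ℕ} (A : Matrix (Fin (2 * N)) (Fin (2 * N)) ℚ) (σ : Perm (Fin (2 * N))) : ℚ :=
  ((Perm.sign σ : ℤ) : ℚ) * ∏ i : Fin N, A (σ (ev i)) (σ (od i))

theorem perm2 (e : Perm (Fin 2)) : e = 1 ∨ e = swap 0 1 := by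
  revert e; decide

theorem term_bp {N : ℕ} (A : Matrix (Fin (2 * N)) (Fin (2 * N)) ℚ) (hA : ∀ i j, A i j = - A j i)
    (σ : Perm (Fin (2 * N))) (h : Perm (Fin N) × (Fin N → Perm (Fin 2))) :
    term A (σ * bp h) = term A σ := by
  unfold term
  have h1 : ∀ i : Fin N, A ((σ * bp h) (ev i)) ((σ * bp h) (od i)) =
      ((Perm.sign (h.2 i) : ℤ) : ℚ) * A (σ (ev (h.1 i))) (σ (od (h.1 i))) := by
    intro i
    rw [Perm.mul_apply, Perm.mul_apply, ← phi_zero, ← phi_one, bp_apply, bp_apply, ← phi_zero,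
      ← phi_one]
    rcases perm2 (h.2 i) with e | e
    · simp [e]
    · rw [e]; simp; exact hA _ _
  rw [Finset.prod_congr rfl (fun i _ => h1 i), Finset.prod_mul_distrib, Perm.sign_mul, sign_bp,
    Equiv.prod_comp h.1 (fun i => A (σ (ev i)) (σ (od i)))]
  push_cast
  have : (∏ i, ((Perm.sign (h.2 i) : ℤ) : ℚ)) * (∏ i, ((Perm.sign (h.2 i) : ℤ) : ℚ)) = 1 := by
    rw [← Finset.prod_mul_distrib]
    apply Finset.prod_eq_one
    intro i _
    rcases Int.units_eq_one_or (Perm.sign (h.2 i)) with e | e <;> simp [e]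
  linear_combination ((Perm.sign σ : ℤ) : ℚ) * (∏ i, A (σ (ev i)) (σ (od i))) * this

theorem canon_inj {N : ℕ} {σ σ' : Perm (Fin (2 * N))} (hσ : Canon σ) (hσ' : Canon σ')
    {h h' : Perm (Fin N) × (Fin N → Perm (Fin 2))} (e : σ * bp h = σ' * bp h') :
    σ = σ' ∧ h = h' := by
  have e1 : ∀ i b, σ (phi N (h.1 i, h.2 i b)) = σ' (phi N (h'.1 i, h'.2 i b)) := by
    intro i b
    have := congrArg (fun τ : Perm (Fin (2 * N)) => τ (phi N (i, b))) e
    simpa [Perm.mul_apply, bp_apply] using this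
  have e2 : h.2 = h'.2 := by
    funext i
    have a0 := e1 i 0
    have a1 := e1 i 1
    have c := hσ.1 (h.1 i)
    have c' := hσ'.1 (h'.1 i)
    rcases perm2 (h.2 i) with u | u <;> rcases perm2 (h'.2 i) with v | v
    · rw [u, v]
    · rw [u, v] at a0 a1
      simp [phi_zero, phi_one] at a0 a1
      rw [a0, a1] at c
      exact absurd c (not_lt.2 c'.le)
    · rw [u, v] at a0 a1
      simp [phi_zero, phi_one] at a0 a1
      rw [a0, a1] at c
      exact absurd c (not_lt.2 c'.le)
    · rw [u, v]
  have e3 : ∀ i b, σ (phi N (h.1 i, b)) = σ' (phi N (h'.1 i, b)) := by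
    intro i b
    have := e1 i ((h.2 i).symm b)
    rw [← e2] at this
    simpa using this
  have m : StrictMono (fun i : Fin N => σ (ev i)) := fun i j hij => hσ.2 i j hij
  have m' : StrictMono (fun i : Fin N => σ' (ev i)) := fun i j hij => hσ'.2 i j hij
  have e4 : (fun i : Fin N => σ (ev i)) = (fun i : Fin N => σ' (ev i)) := by
    rw [← StrictMono.range_inj m m']
    rw [← h.1.surjective.range_comp (fun i : Fin N => σ (ev i)),
      ← h'.1.surjective.range_comp (fun i : Fin N => σ' (ev i))]
    congr 1
    funext i
    have := e3 i 0
    simpa [phi_zero] using this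
  have e5 : h.1 = h'.1 := by
    ext1 i
    have := e3 i 0
    rw [phi_zero, phi_zero] at this
    apply m'.injective
    exact (congrFun e4 (h.1 i)).symm.trans this
  refine ⟨?_, Prod.ext e5 e2⟩
  ext1 x
  obtain ⟨⟨i, b⟩, rfl⟩ := (phi N).surjective x
  have := e3 (h.1.symm i) b
  rw [← e5] at this
  simpa using this

theorem canon_surj {N : ℕ} (τ : Perm (Fin (2 * N))) :
    ∃ σ h, Canon σ ∧ σ * bp h = τ := by
  classical
  let ε : Fin N → Perm (Fin 2) := fun i => if τ (ev i) < τ (od i) then 1 else swap 0 1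
  have hε : ∀ i, τ (phi N (i, ε i 0)) < τ (phi N (i, ε i 1)) := by
    intro i
    by_cases c : τ (ev i) < τ (od i)
    · simp [ε, c, phi_zero, phi_one]
    · have ne : τ (ev i) ≠ τ (od i) := by
        intro h
        have := τ.injective h
        simp [ev, od, Fin.ext_iff] at this
      have : τ (od i) < τ (ev i) := lt_of_le_of_ne (not_lt.1 c) ne.symm
      simp [ε, c, phi_zero, phi_one, this]
  let m : Fin N → Fin (2 * N) := fun i => τ (phi N (i, ε i 0))
  have mi : Function.Injective m := by
    intro i j h
    have := (phi N).injective (τ.injective h)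
    exact congrArg Prod.fst this
  have sm : StrictMono (m ∘ Tuple.sort m) :=
    (Tuple.monotone_sort m).strictMono_of_injective (mi.comp (Tuple.sort m).injective)
  let π := Tuple.sort m
  let g : Perm (Fin N) × (Fin N → Perm (Fin 2)) := (π, fun i => ε (π i))
  let h : Perm (Fin N) × (Fin N → Perm (Fin 2)) := (π.symm, fun i => (ε i).symm)
  have hev : ∀ i b, (τ * bp g) (phi N (i, b)) = τ (phi N (π i, ε (π i) b)) := by
    intro i b; rw [Perm.mul_apply, bp_apply]
  refine ⟨τ * bp g, h, ⟨?_, ?_⟩, ?_⟩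
  · intro i
    rw [← phi_zero, ← phi_one, hev, hev]
    exact hε _
  · intro i j hij
    rw [← phi_zero, ← phi_zero, hev, hev]
    exact sm hij
  · ext1 x
    obtain ⟨⟨i, b⟩, rfl⟩ := (phi N).surjective x
    rw [Perm.mul_apply, bp_apply, hev]
    simp [h]

theorem pf_eq {N : ℕ} (A : Matrix (Fin (2 * N)) (Fin (2 * N)) ℚ) :
    pfaffian A = ∑ σ ∈ @Finset.filter _ (fun σ : Perm (Fin (2 * N)) => Canon σ)
      (Classical.decPred _) Finset.univ, term A σ := by
  unfold pfaffian
  apply Finset.sum_congr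
  · ext σ; simp only [Finset.mem_filter]; rfl
  · intro σ _; rw [term, zsmul_eq_mul]; rfl

theorem full_eq {N : ℕ} (A : Matrix (Fin (2 * N)) (Fin (2 * N)) ℚ) (hA : ∀ i j, A i j = - A j i) :
    ∑ σ, term A σ = (Fintype.card (Perm (Fin N) × (Fin N → Perm (Fin 2))) : ℚ) * pfaffian A := by
  classical
  rw [pf_eq, ← nsmul_eq_mul, ← Finset.card_univ, ← Finset.sum_const, Finset.sum_comm' (t' := 
    @Finset.filter _ (fun σ : Perm (Fin (2 * N)) => Canon σ)
      (Classical.decPred _) Finset.univ) (s' := fun _ => Finset.univ) (by simp), 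
    ← Finset.sum_product']
  symm
  apply Finset.sum_bij (fun p _ => p.1 * bp p.2)
  · simp
  · rintro ⟨σ, h⟩ a ⟨σ', h'⟩ b e
    simp at a b
    obtain ⟨r, s⟩ := canon_inj a b e
    exact Prod.ext r s
  · intro τ _
    obtain ⟨σ, h, c, e⟩ := canon_surj τ
    exact ⟨(σ, h), by simp [c], e⟩
  · intro p _
    rw [term_bp A hA]

theorem prod_split {N : ℕ} (f : Fin (2 * N) → ℚ) : ∏ k, f k = ∏ i : Fin N, (f (ev i) * f (od i)) := by
  rw [← (phi N).prod_comp, Fintype.prod_prod_type]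
  simp [phi_zero, phi_one]

theorem full_conj {N : ℕ} (B A : Matrix (Fin (2 * N)) (Fin (2 * N)) ℚ) :
    ∑ σ, term (B * A * B.transpose) σ = B.det * ∑ σ, term A σ := by
  classical
  have entry : ∀ i j, (B * A * B.transpose) i j = ∑ p : Fin (2 * N) × Fin (2 * N), B i p.1 * B j p.2 * A p.1 p.2 := by
    intro i j
    rw [Fintype.sum_prod_type_right]
    simp only [Matrix.mul_apply, Matrix.transpose_apply, Finset.sum_mul]
    refine Finset.sum_congr rfl fun x _ => Finset.sum_congr rfl fun y _ => by ring
  let q : (Fin (2 * N) → Fin (2 * N)) ≃ (Fin N → Fin (2 * N) × Fin (2 * N)) :=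
    { toFun := fun f i => (f (ev i), f (od i))
      invFun := fun g k => if ((phi N).symm k).2 = 0 then (g ((phi N).symm k).1).1
        else (g ((phi N).symm k).1).2
      left_inv := by
        intro f; funext k
        obtain ⟨⟨i, b⟩, rfl⟩ := (phi N).surjective k
        fin_cases b <;> simp [← phi_zero, ← phi_one]
      right_inv := by
        intro g; funext i
        simp [← phi_zero, ← phi_one] }
  have t1 : ∀ σ, term (B * A * B.transpose) σ = ∑ f : Fin (2 * N) → Fin (2 * N),
      ((Perm.sign σ : ℤ) : ℚ) * (∏ k, B (σ k) (f k)) * ∏ i : Fin N, A (f (ev i)) (f (od i)) := by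
    intro σ
    unfold term
    simp only [entry]
    rw [Finset.prod_univ_sum, Fintype.piFinset_univ, ← q.sum_comp, Finset.mul_sum]
    refine Finset.sum_congr rfl fun f _ => ?_
    rw [prod_split, mul_assoc, ← Finset.prod_mul_distrib]
    rfl
  have t2 : ∀ f : Fin (2 * N) → Fin (2 * N), ∑ σ : Perm (Fin (2 * N)), ((Perm.sign σ : ℤ) : ℚ) * (∏ k, B (σ k) (f k))
      = (B.submatrix id f).det := by
    intro f; rw [Matrix.det_apply']; rfl
  simp only [t1]
  rw [Finset.sum_comm]
  simp only [← Finset.sum_mul, t2]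
  rw [Finset.mul_sum]
  symm
  have : ∀ σ : Perm (Fin (2 * N)), B.det * term A σ = (B.submatrix id σ).det * ∏ i : Fin N, A (σ (ev i)) (σ (od i)) := by
    intro σ; rw [Matrix.det_permute', term]; ring
  simp only [this]
  refine Finset.sum_of_injOn (fun σ : Perm (Fin (2 * N)) => (σ : Fin (2 * N) → Fin (2 * N))) ?_ ?_ ?_ ?_
  · intro a _ b _ h; exact DFunLike.coe_injective h
  · simp
  · intro f _ hf
    have : ¬ Function.Injective f := by
      intro hi
      apply hf
      exact ⟨Equiv.ofBijective f (Finite.injective_iff_bijective.1 hi), by simp, rfl⟩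
    rw [Function.Injective] at this
    push Not at this
    obtain ⟨i, j, hij, hne⟩ := this
    rw [Matrix.det_zero_of_column_eq hne (by intro k; simp [hij]), zero_mul]
  · intro σ _; rfl

theorem pf_conj {N : ℕ} (B A : Matrix (Fin (2 * N)) (Fin (2 * N)) ℚ) (hA : ∀ i j, A i j = - A j i)
    (hB : B.det = 1) : pfaffian (B * A * B.transpose) = pfaffian A := by
  have h := full_conj B A
  have hA' : A.transpose = -A := by ext i j; rw [Matrix.transpose_apply, Matrix.neg_apply]; exact hA j i
  have hs : ∀ i j, (B * A * B.transpose) i j = - (B * A * B.transpose) j i := by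
    have : (B * A * B.transpose).transpose = - (B * A * B.transpose) := by
      rw [Matrix.transpose_mul, Matrix.transpose_mul, Matrix.transpose_transpose, hA']
      simp [Matrix.mul_assoc]
    intro i j
    rw [← Matrix.neg_apply, ← this]; rfl
  rw [full_eq _ hs, full_eq _ hA, hB, one_mul] at h
  exact mul_left_cancel₀ (by exact_mod_cast Fintype.card_ne_zero) h

theorem pf_tri {N : ℕ} (T : Matrix (Fin (2 * N)) (Fin (2 * N)) ℚ)
    (hT : ∀ i j : Fin (2 * N), i < j → i.val + 1 ≠ j.val → T i j = 0) :
    pfaffian T = ∏ i : Fin N, T (ev i) (od i) := by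
  rw [pf_eq, Finset.sum_eq_single 1]
  · simp [term]
  · intro σ hσ hne
    simp only [Finset.mem_filter, Finset.mem_univ, true_and] at hσ
    have hex : ∃ i : Fin N, (σ (ev i)).val + 1 ≠ (σ (od i)).val := by
      by_contra hall
      push Not at hall
      apply hne
      have sm : StrictMono σ := by
        intro x y hxy
        obtain ⟨⟨i, b⟩, rfl⟩ := (phi N).surjective x
        obtain ⟨⟨j, c⟩, rfl⟩ := (phi N).surjective y
        have hij : i < j → (σ (od i)).val < (σ (ev j)).val := by
          intro hij
          have h1 := hσ.2 i j hij
          have h2 : σ (od i) ≠ σ (ev j) := by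
            intro h
            have := σ.injective h
            simp [ev, od, Fin.ext_iff] at this
            omega
          have h3 := hall i
          rw [Fin.lt_def] at h1
          rw [Ne, Fin.ext_iff] at h2
          omega
        have hi := hall i
        have hj := hall j
        rw [Fin.lt_def] at hij hxy ⊢
        rcases lt_trichotomy i j with l | l | l
        · have := hij l
          fin_cases b <;> fin_cases c <;> simp [phi_zero, phi_one] at * <;> omega
        · subst l
          fin_cases b <;> fin_cases c <;> simp [phi_zero, phi_one, ev, od] at * <;> omega
        · exfalso
          rw [Fin.lt_def] at l
          fin_cases b <;> fin_cases c <;> simp [phi_zero, phi_one, ev, od] at hxy <;> omega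
      exact (Equiv.Perm.monotone_iff σ).1 sm.monotone
    obtain ⟨i, hi⟩ := hex
    rw [term, Finset.prod_eq_zero (Finset.mem_univ i) (hT _ _ (hσ.1 i) hi), mul_zero]
  · intro h
    exfalso; apply h
    simp only [Finset.mem_filter, Finset.mem_univ, true_and]
    refine ⟨fun i => ?_, fun i j hij => ?_⟩
    · simp [ev, od, Fin.lt_def]
    · simp only [ev, Fin.lt_def, Perm.one_apply] at *; omega

end PfAux

namespace PfAux
open Polynomial

noncomputable def W : ℚ[X] →ₗ[ℚ] ℚ[X] →ₗ[ℚ] ℚ :=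
  LinearMap.mk₂ ℚ (fun f g => scL ((2 + X) * (f * derivative g - derivative f * g)))
    (by intro a b c; rw [← map_add]; congr 1; rw [derivative_add]; ring)
    (by intro r a b
        rw [← map_smul]; congr 1; rw [derivative_smul]; simp only [smul_eq_C_mul]; ring)
    (by intro a b c; rw [← map_add]; congr 1; rw [derivative_add]; ring)
    (by intro r a b
        rw [← map_smul]; congr 1; rw [derivative_smul]; simp only [smul_eq_C_mul]; ring)

theorem W_apply (f g : ℚ[X]) :
    W f g = scL ((2 + X) * (f * derivative g - derivative f * g)) := rfl

theorem W_pow (i j : ℕ) : W ((X + 1) ^ i) ((X + 1) ^ j) =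
    ((j : ℚ) - (i : ℚ)) * (motzkin (i + j - 1) + motzkin (i + j)) := by
  have hd : ∀ n : ℕ, (X + 1) * derivative ((X + 1 : ℚ[X]) ^ n) = (n : ℚ[X]) * (X + 1) ^ n := by
    intro n
    rcases n with _ | n
    · simp
    · rw [derivative_pow]; simp; ring
  rw [← scL_motzkin, ← scL_motzkin, ← map_add, ← smul_eq_mul, ← map_smul, W_apply]
  congr 1
  rw [smul_eq_C_mul]
  simp only [map_sub, map_natCast]
  rcases Nat.eq_zero_or_pos (i + j) with h | h
  · have hi : i = 0 := by omega
    have hj : j = 0 := by omega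
    subst hi hj; simp
  · have hX : (X + 1 : ℚ[X]) ≠ 0 := by
      have := X_add_C_ne_zero (1 : ℚ); simpa using this
    apply mul_left_cancel₀ hX
    obtain ⟨m, hm⟩ : ∃ m, i + j = m + 1 := ⟨i + j - 1, by omega⟩
    rw [hm, Nat.add_sub_cancel]
    have e : (X + 1 : ℚ[X]) ^ i * (X + 1) ^ j = (X + 1) ^ m * (X + 1) := by
      rw [← pow_add, hm, pow_succ]
    rw [pow_succ]
    linear_combination (2 + X) * (X + 1) ^ i * hd j - (2 + X) * (X + 1) ^ j * hd i
      + (2 + X) * ((j : ℚ[X]) - (i : ℚ[X])) * e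

theorem W_V_far (j k : ℕ) (h : j < k) (h1 : j + 1 ≠ k) : W (V j) (V k) = 0 := by
  obtain ⟨d, rfl⟩ : ∃ d, k = j + d + 2 := ⟨k - j - 2, by omega⟩
  rw [W_apply, V_wronsk]
  have a := scL_S_succ (j + j + d + 1)
  have b := scL_S_succ d
  have : (((j + d + 2 : ℕ) : ℚ[X]) - (j : ℚ[X])) * Chebyshev.S ℚ ((j : ℤ) + (j + d + 2 : ℕ)) +
      ((j : ℚ[X]) + ((j + d + 2 : ℕ) : ℚ[X]) + 1) * Chebyshev.S ℚ (((j + d + 2 : ℕ) : ℤ) - j - 1) =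
      ((d + 2 : ℚ)) • Chebyshev.S ℚ ((j + j + d + 1 : ℕ) + 1) +
      ((j + (j + d + 2) + 1 : ℚ)) • Chebyshev.S ℚ ((d : ℤ) + 1) := by
    rw [smul_eq_C_mul, smul_eq_C_mul]
    simp only [C_add, C_ofNat, map_natCast, map_one]
    push_cast
    ring_nf
  rw [this, map_add, map_smul, map_smul, a, b]; simp

theorem W_V_near (j : ℕ) : W (V j) (V (j + 1 : ℕ)) = 2 * (j : ℚ) + 2 := by
  rw [W_apply, V_wronsk]
  have a := scL_S_succ (j + j)
  have : (((j + 1 : ℕ) : ℚ[X]) - (j : ℚ[X])) * Chebyshev.S ℚ ((j : ℤ) + (j + 1 : ℕ)) +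
      ((j : ℚ[X]) + ((j + 1 : ℕ) : ℚ[X]) + 1) * Chebyshev.S ℚ (((j + 1 : ℕ) : ℤ) - j - 1) =
      Chebyshev.S ℚ ((j + j : ℕ) + 1) +
      ((2 * j + 2 : ℚ)) • Chebyshev.S ℚ 0 := by
    rw [smul_eq_C_mul]
    simp only [C_add, C_mul, C_ofNat, map_natCast]
    push_cast
    ring_nf
  rw [this, map_add, map_smul, a, scL_S_zero]; simp

noncomputable def P (k : ℕ) : ℚ[X] := (V k).comp (X - 1)

theorem P_coeff (k : ℕ) : (P k).coeff k = 1 ∧ ∀ i, k < i → (P k).coeff i = 0 := by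
  have h0 : P 0 = 1 := by simp [P, V_zero]
  have h1 : P 1 = X - C 2 := by
    simp [P, V]; rw [show (C 2 : ℚ[X]) = 2 from C_ofNat 2]; ring
  have hr : ∀ k, P (k + 2) = X * P (k + 1) - P (k + 1) - P k := by
    intro k
    have := V_rec (k + 1)
    simp only [P]
    push_cast
    rw [show (k : ℤ) + 2 = k + 1 + 1 by ring, this]
    simp; ring
  induction k using Nat.twoStepInduction with
  | zero =>
    refine ⟨by simp [h0], fun i hi => ?_⟩
    rw [h0, coeff_one, if_neg (by omega)]
  | one =>
    refine ⟨by simp [h1, coeff_C], fun i hi => ?_⟩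
    rw [h1, coeff_sub, coeff_X, coeff_C, if_neg (by omega), if_neg (by omega), sub_zero]
  | more k a b =>
    have hc : ∀ i, (P (k + 2)).coeff (i + 1) = (P (k + 1)).coeff i - (P (k + 1)).coeff (i + 1) - (P k).coeff (i + 1) := by
      intro i; rw [hr, coeff_sub, coeff_sub, coeff_X_mul]
    refine ⟨?_, fun i hi => ?_⟩
    · rw [hc (k + 1), b.1, b.2 _ (by omega), a.2 _ (by omega)]; simp
    · obtain ⟨i, rfl⟩ : ∃ m, i = m + 1 := ⟨i - 1, by omega⟩
      rw [hc, b.2 _ (by omega), b.2 _ (by omega), a.2 _ (by omega)]; simp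

theorem V_expand (n : ℕ) (k : Fin n) :
    V (k.val : ℕ) = ∑ i : Fin n, (P k.val).coeff i.val • (X + 1 : ℚ[X]) ^ i.val := by
  have hd : (P k.val).natDegree < n := by
    refine lt_of_le_of_lt ?_ k.isLt
    rw [natDegree_le_iff_coeff_eq_zero]
    intro i hi; exact (P_coeff k.val).2 i hi
  have h := as_sum_range' (P k.val) n hd
  have hV : V (k.val : ℕ) = (P k.val).comp (X + 1) := by
    rw [P, comp_assoc]; simp
  rw [hV]
  conv_lhs => rw [h]
  rw [Finset.sum_range, Polynomial.sum_comp]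
  refine Finset.sum_congr rfl fun i _ => ?_
  rw [monomial_comp, smul_eq_C_mul]

end PfAux

/-- For every positive integer `n`, the Pfaffian of the `2n × 2n` skew-symmetric
matrix with entries `(j-i)·(M_{i+j-3} + M_{i+j-2})` (1-based; here 0-based, so the
entry at `(i,j)` is `(j-i)·(M_{i+j-1} + M_{i+j})`, the `(0,0)` entry being `0`)
equals `∏_{i=0}^{n-1} (4i+2)`. -/
theorem pfaffian_motzkin_sum (n : ℕ) (hn : 1 ≤ n) :
    pfaffian (N := n) (Matrix.of fun i j : Fin (2 * n) =>
        ((j.val : ℚ) - (i.val : ℚ)) *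
          (motzkin (i.val + j.val - 1) + motzkin (i.val + j.val))) =
      ∏ i ∈ Finset.range n, (4 * (i : ℚ) + 2) := by
  have hskew : ∀ i j : Fin (2 * n), (Matrix.of fun i j : Fin (2 * n) =>
        ((j.val : ℚ) - (i.val : ℚ)) *
          (motzkin (i.val + j.val - 1) + motzkin (i.val + j.val))) i j = - (Matrix.of fun i j : Fin (2 * n) =>
        ((j.val : ℚ) - (i.val : ℚ)) *
          (motzkin (i.val + j.val - 1) + motzkin (i.val + j.val))) j i := by
    intro i j
    simp only [Matrix.of_apply]
    rw [add_comm j.val i.val]; ring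
  let B : Matrix (Fin (2 * n)) (Fin (2 * n)) ℚ := Matrix.of fun k i => (PfAux.P k.val).coeff i.val
  have hB : B.det = 1 := by
    rw [Matrix.det_of_isLowerTriangular]
    · exact Finset.prod_eq_one fun i _ => (PfAux.P_coeff i.val).1
    · intro i j hij
      exact (PfAux.P_coeff i.val).2 j.val hij
  rw [← PfAux.pf_conj B _ hskew hB]
  have hT : ∀ k l : Fin (2 * n), (B * (Matrix.of fun i j : Fin (2 * n) =>
        ((j.val : ℚ) - (i.val : ℚ)) *
          (motzkin (i.val + j.val - 1) + motzkin (i.val + j.val))) * B.transpose) k l =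
      PfAux.W (PfAux.V (k.val : ℕ)) (PfAux.V (l.val : ℕ)) := by
    intro k l
    rw [PfAux.V_expand (2 * n) k, PfAux.V_expand (2 * n) l]
    simp only [map_sum, LinearMap.sum_apply, map_smul, LinearMap.smul_apply, PfAux.W_pow,
      Matrix.mul_apply, Matrix.transpose_apply, Matrix.of_apply, Finset.sum_mul, Finset.mul_sum, smul_eq_mul, B]
    first
    | (refine Finset.sum_congr rfl fun x _ => Finset.sum_congr rfl fun y _ => ?_
       ring)
    | (rw [Finset.sum_comm]
       refine Finset.sum_congr rfl fun x _ => Finset.sum_congr rfl fun y _ => ?_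
       ring)
  rw [PfAux.pf_tri, Finset.prod_range]
  · refine Finset.prod_congr rfl fun i _ => ?_
    rw [hT]
    have := PfAux.W_V_near (2 * i.val)
    simp only [PfAux.ev, PfAux.od]
    rw [this]; push_cast; ring
  · intro i j hij hne
    rw [hT]
    exact PfAux.W_V_far _ _ hij hne
end
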